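/- Let Ω₁, Ω₂ ⊂ ℂⁿ (n ≥ 2) be bounded domains and let f : Ω₁ → Ω₂ be a rough isometric embedding with respect to the Kobayashi distances. Suppose there are open sets U₁, U₂ ⊆ ℂⁿ with Uᵢ ∩ ∂Ωᵢ ≠ ∅ (i = 1,2) such that Ω₁ ∩ U₁ is a log-type convex domain all of whose boundary points are Dini-smooth, and Ω₂ ∩ U₂ is a log-type ℂ-convex domain all of whose boundary points are Dini-smooth. If ξ ∈ ∂Ω₁ ∩ U₁, ζ ∈ ∂Ω₂ ∩ U₂ and ζ belongs to the cluster set C(f,ξ), then f extends continuously to ξ, i.e. f(z) → ζ as z → ξ in Ω₁. -/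

import Mathlib

open Metric Set MeasureTheory Filter Topology

noncomputable section

variable {E : Type*} [NormedAddCommGroup E] [NormedSpace ℂ E]

/-- Distance from `x` to the boundary of `D`. -/
def bdist (D : Set E) (x : E) : ℝ := Metric.infDist x (frontier D)

/-- Distance from `x` to the boundary of `D` along the complex line `x + ℂ v`. -/
def bdistDir (D : Set E) (x v : E) : ℝ :=
  Metric.infDist x (frontier D ∩ {w | ∃ c : ℂ, w = x + c • v})

/-- The infinitesimal Kobayashi (pseudo-)metric of `D ⊆ E`. -/
def kobMetric (D : Set E) (x v : E) : ℝ :=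
  sInf { r : ℝ | ∃ (f : ℂ → E) (ξ : ℂ),
    DifferentiableOn ℂ f (ball (0:ℂ) 1) ∧ MapsTo f (ball (0:ℂ) 1) D ∧
    f 0 = x ∧ ξ • derivWithin f (ball (0:ℂ) 1) 0 = v ∧ r = ‖ξ‖ }

/-- `σ` is absolutely continuous on `[a,b]`, with a.e. derivative `g`. -/
def IsACWithDeriv (σ g : ℝ → E) (a b : ℝ) : Prop :=
  IntervalIntegrable g volume a b ∧
  ∀ t ∈ Icc a b, σ t = σ a + ∫ s in a..t, g s

/-- The Kobayashi pseudo-distance of `D`, defined via lengths of absolutely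
continuous curves (Venturini's description). -/
def kobDist (D : Set E) (x y : E) : ℝ :=
  sInf { r : ℝ | ∃ (a b : ℝ) (σ g : ℝ → E), a ≤ b ∧
    IsACWithDeriv σ g a b ∧ MapsTo σ (Icc a b) D ∧ σ a = x ∧ σ b = y ∧
    r = ∫ t in a..b, kobMetric D (σ t) (g t) }

/-- Log-type convex domain, with explicit constants `C, ν > 0`. -/
def LogTypeConvexWith (D : Set E) (C ν : ℝ) : Prop :=
  IsOpen D ∧ D.Nonempty ∧ Bornology.IsBounded D ∧ Convex ℝ D ∧ 0 < C ∧ 0 < ν ∧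
  ∀ z ∈ D, ∀ v : E, v ≠ 0 →
    bdistDir D z v ≤ C / |Real.log (bdist D z)| ^ (1 + ν)

/-- Log-type convex domain. -/
def LogTypeConvex (D : Set E) : Prop := ∃ C ν : ℝ, LogTypeConvexWith D C ν

/-- A `ℂ`-convex set: every nonempty intersection with a complex affine line is
connected and simply connected. -/
def CConvex (D : Set E) : Prop :=
  ∀ z v : E, v ≠ 0 → (D ∩ {w | ∃ c : ℂ, w = z + c • v}).Nonempty →
    IsConnected (D ∩ {w | ∃ c : ℂ, w = z + c • v}) ∧
    SimplyConnectedSpace ↥(D ∩ {w | ∃ c : ℂ, w = z + c • v})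

/-- Log-type `ℂ`-convex domain. -/
def LogTypeCConvex (D : Set E) : Prop :=
  IsOpen D ∧ D.Nonempty ∧ Bornology.IsBounded D ∧ CConvex D ∧
  ∃ C ν : ℝ, 0 < C ∧ 0 < ν ∧
    ∀ z ∈ D, ∀ v : E, v ≠ 0 →
      bdistDir D z v ≤ C / |Real.log (bdist D z)| ^ (1 + ν)

/-- `σ : [a,b] → D` (with a.e. derivative `g`) is a `(λ,κ)`-almost geodesic for the
Kobayashi distance of `D`. -/
def AlmostGeodesicOn (D : Set E) (lam kap : ℝ) (σ g : ℝ → E) (a b : ℝ) : Prop :=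
  MapsTo σ (Icc a b) D ∧ IsACWithDeriv σ g a b ∧
  (∀ s ∈ Icc a b, ∀ t ∈ Icc a b,
    (1 / lam) * |t - s| - kap ≤ kobDist D (σ s) (σ t) ∧
    kobDist D (σ s) (σ t) ≤ lam * |t - s| + kap) ∧
  (∀ᵐ t ∂volume, t ∈ Icc a b → kobMetric D (σ t) (g t) ≤ lam)

/-- `σ : [a,b] → D` is a `C`-rough geodesic for the Kobayashi distance of `D`. -/
def RoughGeodesicOn (D : Set E) (C : ℝ) (σ : ℝ → E) (a b : ℝ) : Prop :=
  MapsTo σ (Icc a b) D ∧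
  ∀ s ∈ Icc a b, ∀ t ∈ Icc a b,
    |t - s| - C ≤ kobDist D (σ s) (σ t) ∧ kobDist D (σ s) (σ t) ≤ |t - s| + C

/-- `ρ` is a `C¹` local defining function for `D` near `ξ` on the open set `W`. -/
def IsLocalDefiningFn (D : Set E) (ξ : E) (W : Set E) (ρ : E → ℝ) : Prop :=
  IsOpen W ∧ ξ ∈ W ∧ ContDiffOn ℝ 1 ρ W ∧ (∀ x ∈ W, fderiv ℝ ρ x ≠ 0) ∧
  D ∩ W = {x ∈ W | ρ x < 0} ∧ frontier D ∩ W = {x ∈ W | ρ x = 0}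

/-- `ξ` is a Dini-smooth boundary point of `D`: the boundary is `C¹` near `ξ` and the
unit normal admits a modulus of continuity `ω` satisfying the Dini condition. -/
def DiniSmoothBoundaryPoint (D : Set E) (ξ : E) : Prop :=
  ∃ (W : Set E) (ρ : E → ℝ) (ω : ℝ → ℝ),
    IsLocalDefiningFn D ξ W ρ ∧
    (∀ t ∈ Icc (0:ℝ) 1, 0 ≤ ω t) ∧ MonotoneOn ω (Icc (0:ℝ) 1) ∧
    IntegrableOn (fun t => ω t / t) (Ioc (0:ℝ) 1) ∧
    ∀ x ∈ frontier D ∩ W, ∀ y ∈ frontier D ∩ W, ‖x - y‖ ≤ 1 →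
      ‖(‖fderiv ℝ ρ x‖)⁻¹ • fderiv ℝ ρ x - (‖fderiv ℝ ρ y‖)⁻¹ • fderiv ℝ ρ y‖ ≤ ω ‖x - y‖

/-- `D` has `C^{1,ε}` boundary: near every boundary point there is a `C¹` defining
function whose differential is `ε`-Hölder. -/
def HolderC1Boundary (D : Set E) (ε : ℝ) : Prop :=
  ∀ ξ ∈ frontier D, ∃ (W : Set E) (ρ : E → ℝ) (M : ℝ), 0 < M ∧
    IsLocalDefiningFn D ξ W ρ ∧
    ∀ x ∈ W, ∀ y ∈ W, ‖fderiv ℝ ρ x - fderiv ℝ ρ y‖ ≤ M * ‖x - y‖ ^ ε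

/-- The complex affine tangent hyperplane of `∂D` at `x`, computed from a local
defining function `ρ`. -/
def complexTangentHyperplane (ρ : E → ℝ) (x : E) : Set E :=
  {w : E | fderiv ℝ ρ x (w - x) = 0 ∧ fderiv ℝ ρ x ((Complex.I : ℂ) • (w - x)) = 0}

/-- The Gromov product of `x` and `y` with respect to the base point `o`, for the
Kobayashi distance of `D`. -/
def gromovProd (D : Set E) (o x y : E) : ℝ :=
  (kobDist D x o + kobDist D o y - kobDist D x y) / 2

end

section KobMetricBasics

variable {E : Type*} [NormedAddCommGroup E] [NormedSpace ℂ E]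

theorem kob_nonneg (D : Set E) (x v : E) : 0 ≤ kobMetric D x v := by
  apply Real.sInf_nonneg
  rintro r ⟨f, ξ, -, -, -, -, rfl⟩
  exact norm_nonneg _

theorem kob_bddBelow (D : Set E) (x v : E) : BddBelow { r : ℝ | ∃ (f : ℂ → E) (ξ : ℂ),
    DifferentiableOn ℂ f (ball (0:ℂ) 1) ∧ MapsTo f (ball (0:ℂ) 1) D ∧
    f 0 = x ∧ ξ • derivWithin f (ball (0:ℂ) 1) 0 = v ∧ r = ‖ξ‖ } := by
  refine ⟨0, ?_⟩
  rintro r ⟨f, ξ, -, -, -, -, rfl⟩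
  exact norm_nonneg _

theorem kob_le_of_disc {D : Set E} {x v : E} {f : ℂ → E} {ξ : ℂ} {f' : E}
    (hf : DifferentiableOn ℂ f (ball (0:ℂ) 1)) (hm : MapsTo f (ball (0:ℂ) 1) D)
    (h0 : f 0 = x) (hd : HasDerivAt f f' 0) (hv : ξ • f' = v) : kobMetric D x v ≤ ‖ξ‖ := by
  apply csInf_le (kob_bddBelow D x v)
  refine ⟨f, ξ, hf, hm, h0, ?_, rfl⟩
  rw [derivWithin_of_isOpen isOpen_ball (by simp), hd.deriv, hv]

theorem kob_disc_of_ball {D : Set E} {x v : E} {r : ℝ} (hr : 0 < r) (hb : ball x r ⊆ D) :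
    ∃ (f : ℂ → E) (ξ : ℂ),
    DifferentiableOn ℂ f (ball (0:ℂ) 1) ∧ MapsTo f (ball (0:ℂ) 1) D ∧
    f 0 = x ∧ ξ • derivWithin f (ball (0:ℂ) 1) 0 = v ∧ ‖v‖ / r = ‖ξ‖ := by
  by_cases hv : v = 0
  · refine ⟨fun _ => x, 0, by fun_prop, fun z _ => hb (by simpa using hr), rfl, by simp [hv],
      by simp [hv]⟩
  · have hv' : 0 < ‖v‖ := norm_pos_iff.mpr hv
    have hd : ∀ z : ℂ, HasDerivAt (fun z : ℂ => x + (z * ((r / ‖v‖ : ℝ) : ℂ)) • v)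
        (((r / ‖v‖ : ℝ) : ℂ) • v) z := by
      intro z
      have := (((hasDerivAt_id z).mul_const ((r / ‖v‖ : ℝ) : ℂ)).smul_const v).const_add x
      simpa using this
    refine ⟨fun z => x + (z * ((r / ‖v‖ : ℝ) : ℂ)) • v, ((‖v‖ / r : ℝ) : ℂ), ?_, ?_, by simp, ?_, ?_⟩
    · exact fun z _ => (hd z).differentiableAt.differentiableWithinAt
    · intro z hz
      apply hb
      rw [mem_ball_zero_iff] at hz
      rw [mem_ball_iff_norm, add_sub_cancel_left, norm_smul, norm_mul, Complex.norm_real,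
        Real.norm_of_nonneg (by positivity), mul_assoc, div_mul_cancel₀ _ hv'.ne']
      nlinarith
    · rw [derivWithin_of_isOpen isOpen_ball (by simp), (hd 0).deriv, smul_smul, ← Complex.ofReal_mul]
      rw [div_mul_div_cancel₀ hr.ne', div_self hv'.ne']; simp
    · rw [Complex.norm_real, Real.norm_of_nonneg (by positivity)]

theorem kob_le_div {D : Set E} {x v : E} {r : ℝ} (hr : 0 < r) (hb : ball x r ⊆ D) :
    kobMetric D x v ≤ ‖v‖ / r := by
  obtain ⟨f, ξ, h1, h2, h3, h4, h5⟩ := kob_disc_of_ball (v := v) hr hb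
  exact csInf_le (kob_bddBelow D x v) ⟨f, ξ, h1, h2, h3, h4, h5⟩

theorem kob_exists_disc {D : Set E} (hD : IsOpen D) {x v : E} (hx : x ∈ D) {r : ℝ}
    (hr : kobMetric D x v < r) : ∃ (f : ℂ → E) (ξ : ℂ) (f' : E),
    DifferentiableOn ℂ f (ball (0:ℂ) 1) ∧ MapsTo f (ball (0:ℂ) 1) D ∧
    f 0 = x ∧ HasDerivAt f f' 0 ∧ ξ • f' = v ∧ ‖ξ‖ < r := by
  obtain ⟨ε, hε, hb⟩ := Metric.isOpen_iff.mp hD x hx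
  obtain ⟨f, ξ, h1, h2, h3, h4, h5⟩ := kob_disc_of_ball (v := v) hε hb
  obtain ⟨r', ⟨f, ξ, h1, h2, h3, h4, rfl⟩, hlt⟩ := exists_lt_of_csInf_lt
    (s := { r : ℝ | ∃ (f : ℂ → E) (ξ : ℂ),
    DifferentiableOn ℂ f (ball (0:ℂ) 1) ∧ MapsTo f (ball (0:ℂ) 1) D ∧
    f 0 = x ∧ ξ • derivWithin f (ball (0:ℂ) 1) 0 = v ∧ r = ‖ξ‖ }) ⟨_, f, ξ, h1, h2, h3, h4, h5⟩ hr
  refine ⟨f, ξ, deriv f 0, h1, h2, h3, ?_, ?_, hlt⟩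
  · exact (h1.differentiableAt (isOpen_ball.mem_nhds (by simp))).hasDerivAt
  · rwa [derivWithin_of_isOpen isOpen_ball (by simp)] at h4

theorem le_kob {D : Set E} (hD : IsOpen D) {x v : E} (hx : x ∈ D) {c : ℝ}
    (h : ∀ (f : ℂ → E) (ξ : ℂ) (f' : E),
    DifferentiableOn ℂ f (ball (0:ℂ) 1) → MapsTo f (ball (0:ℂ) 1) D →
    f 0 = x → HasDerivAt f f' 0 → ξ • f' = v → c ≤ ‖ξ‖) : c ≤ kobMetric D x v := by
  by_contra! hlt
  obtain ⟨f, ξ, f', h1, h2, h3, h4, h5, h6⟩ := kob_exists_disc hD hx hlt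
  exact absurd (h f ξ f' h1 h2 h3 h4 h5) (not_le.mpr h6)

theorem kob_mono {D D' : Set E} (hD : IsOpen D) (hs : D ⊆ D') {x v : E} (hx : x ∈ D) :
    kobMetric D' x v ≤ kobMetric D x v :=
  le_kob hD hx fun _ _ _ h1 h2 h3 h4 h5 => kob_le_of_disc h1 (h2.mono_right hs) h3 h4 h5

theorem kob_neg {D : Set E} (hD : IsOpen D) {x v : E} (hx : x ∈ D) :
    kobMetric D x (-v) = kobMetric D x v := by
  have key : ∀ v, kobMetric D x (-v) ≤ kobMetric D x v := fun v =>
    le_kob hD hx fun f ξ f' h1 h2 h3 h4 h5 => by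
      have := kob_le_of_disc (v := -v) (ξ := -ξ) h1 h2 h3 h4 (by rw [neg_smul, h5])
      rwa [norm_neg] at this
  apply le_antisymm (key v)
  simpa using key (-v)

/-- restricting a disc to a smaller radius. -/
theorem kob_le_of_small_disc {D : Set E} {x v : E} {f : ℂ → E} {ξ : ℂ} {f' : E} {τ : ℝ}
    (hτ : 0 < τ) (hτ1 : τ ≤ 1)
    (hf : DifferentiableOn ℂ f (ball (0:ℂ) 1)) (hm : MapsTo f (ball (0:ℂ) τ) D)
    (h0 : f 0 = x) (hd : HasDerivAt f f' 0) (hv : ξ • f' = v) : kobMetric D x v ≤ ‖ξ‖ / τ := by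
  have hmaps : MapsTo (fun z : ℂ => (τ : ℂ) * z) (ball 0 1) (ball 0 τ) := by
    intro z hz
    rw [mem_ball_zero_iff] at hz ⊢
    rw [norm_mul, Complex.norm_real, Real.norm_of_nonneg hτ.le]
    nlinarith
  have hτ' : (τ : ℂ) ≠ 0 := by exact_mod_cast hτ.ne'
  have h1 : HasDerivAt (fun z : ℂ => f ((τ : ℂ) * z)) ((τ : ℂ) • f') 0 := by
    have hd' : HasDerivAt f f' ((τ : ℂ) * 0) := by simpa using hd
    have := hd'.scomp (0 : ℂ) ((hasDerivAt_id (0:ℂ)).const_mul (τ : ℂ))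
    simpa [Function.comp_def] using this
  have := kob_le_of_disc (D := D) (x := x) (v := v) (f := fun z : ℂ => f ((τ : ℂ) * z))
    (ξ := ξ / τ) (f' := (τ : ℂ) • f') ?_ (fun z hz => hm (hmaps hz)) (by simpa using h0) h1
    (by rw [smul_smul, div_mul_cancel₀ _ hτ', hv])
  · simpa [abs_of_pos hτ] using this
  · exact hf.comp (by fun_prop) (fun z hz => ball_subset_ball hτ1 (hmaps hz))

/-- upper semicontinuity of the Kobayashi metric -/
theorem kob_usc {D : Set E} (hD : IsOpen D) {x v : E} (hx : x ∈ D) {r : ℝ}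
    (hr : kobMetric D x v < r) : ∀ᶠ p : E × E in 𝓝 (x, v), kobMetric D p.1 p.2 < r := by
  have hpos : 0 < r := (kob_nonneg D x v).trans_lt hr
  -- get a disc with nonzero ξ
  obtain ⟨f, ξ, f', h1, h2, h3, h4, h5, h6, hξ⟩ : ∃ (f : ℂ → E) (ξ : ℂ) (f' : E),
      DifferentiableOn ℂ f (ball (0:ℂ) 1) ∧ MapsTo f (ball (0:ℂ) 1) D ∧
      f 0 = x ∧ HasDerivAt f f' 0 ∧ ξ • f' = v ∧ ‖ξ‖ < r ∧ ξ ≠ 0 := by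
    obtain ⟨f, ξ, f', h1, h2, h3, h4, h5, h6⟩ := kob_exists_disc hD hx hr
    by_cases hξ : ξ = 0
    · refine ⟨fun _ => x, ((r/2 : ℝ) : ℂ), 0, by fun_prop, fun z _ => hx, rfl,
        hasDerivAt_const _ _, by rw [← h5, hξ]; simp, ?_, ?_⟩
      · rw [Complex.norm_real, Real.norm_of_nonneg (by positivity)]; linarith
      · exact_mod_cast (by positivity : r / 2 ≠ 0)
    · exact ⟨f, ξ, f', h1, h2, h3, h4, h5, h6, hξ⟩
  -- choose τ < 1 with ‖ξ‖/τ < r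
  obtain ⟨τ, hτ0, hτ1⟩ := exists_between ((div_lt_one hpos).mpr h6)
  have hτpos : 0 < τ := (div_nonneg (norm_nonneg _) hpos.le).trans_lt hτ0
  have hτr : ‖ξ‖ / τ < r := by rw [div_lt_iff₀ hτpos]; rwa [div_lt_iff₀ hpos, mul_comm] at hτ0
  have hsub : closedBall (0:ℂ) τ ⊆ ball 0 1 := closedBall_subset_ball hτ1
  have hK : IsCompact (f '' closedBall (0:ℂ) τ) :=
    (isCompact_closedBall 0 τ).image_of_continuousOn (h1.continuousOn.mono hsub)
  obtain ⟨δ, hδ, hthick⟩ := hK.exists_thickening_subset_open hD (by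
    rintro _ ⟨z, hz, rfl⟩; exact h2 (hsub hz))
  have hc1 : Tendsto (fun p : E × E => ‖p.1 - x‖ + ‖ξ⁻¹ • (p.2 - v)‖) (𝓝 (x, v)) (𝓝 0) := by
    have : Continuous (fun p : E × E => ‖p.1 - x‖ + ‖ξ⁻¹ • (p.2 - v)‖) := by fun_prop
    simpa using this.tendsto (x, v)
  filter_upwards [hc1.eventually (gt_mem_nhds hδ)] with p hp
  refine lt_of_le_of_lt ?_ hτr
  refine kob_le_of_small_disc (D := D) (x := p.1) (v := p.2)
    (f := fun z => f z + ((p.1 - x) + z • (ξ⁻¹ • (p.2 - v)))) (f' := f' + ξ⁻¹ • (p.2 - v)) hτpos hτ1.le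
    (h1.add (by fun_prop)) ?_ (by simp [h3]) ?_ ?_
  · intro z hz
    apply hthick
    rw [mem_thickening_iff]
    refine ⟨f z, mem_image_of_mem _ (ball_subset_closedBall hz), ?_⟩
    rw [dist_eq_norm, add_sub_cancel_left]
    refine lt_of_le_of_lt (norm_add_le _ _) (lt_of_le_of_lt ?_ hp)
    gcongr
    rw [norm_smul]
    rw [mem_ball_zero_iff] at hz
    exact mul_le_of_le_one_left (norm_nonneg _) (hz.le.trans hτ1.le)
  · have := h4.fun_add (((hasDerivAt_id (0:ℂ)).smul_const (ξ⁻¹ • (p.2 - v))).const_add (p.1 - x))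
    simpa using this
  · rw [smul_add, h5, smul_smul, mul_inv_cancel₀ hξ]; simp

end KobMetricBasics

section KobDistBasics

variable {E : Type*} [NormedAddCommGroup E] [NormedSpace ℂ E]

theorem IsACWithDeriv.continuousOn {σ g : ℝ → E} {a b : ℝ} (hab : a ≤ b)
    (h : IsACWithDeriv σ g a b) : ContinuousOn σ (Icc a b) := by
  have h1 : ContinuousOn (fun t => σ a + ∫ s in a..t, g s) (Icc a b) := by
    have := intervalIntegral.continuousOn_primitive_interval' h.1 left_mem_uIcc
    rw [uIcc_of_le hab] at this
    exact continuousOn_const.add this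
  exact h1.congr h.2

theorem IsACWithDeriv.sub_eq {σ g : ℝ → E} {a b s t : ℝ}
    (h : IsACWithDeriv σ g a b) (hs : s ∈ Icc a b) (ht : t ∈ Icc a b) :
    σ t = σ s + ∫ u in s..t, g u := by
  have hab : a ≤ b := hs.1.trans hs.2
  have hi : ∀ u ∈ Icc a b, IntervalIntegrable g volume a u := fun u hu =>
    h.1.mono_set (by rw [uIcc_of_le hab, uIcc_of_le hu.1]; exact Icc_subset_Icc_right hu.2)
  rw [h.2 t ht, h.2 s hs, add_assoc, intervalIntegral.integral_add_adjacent_intervals (hi s hs)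
    ((hi s hs).symm.trans (hi t ht))]

theorem IsACWithDeriv.mono {σ g : ℝ → E} {a b s t : ℝ}
    (h : IsACWithDeriv σ g a b) (hst : s ≤ t) (hs : a ≤ s) (ht : t ≤ b) :
    IsACWithDeriv σ g s t := by
  refine ⟨h.1.mono_set ?_, fun u hu => h.sub_eq ⟨hs, by linarith⟩ ⟨by linarith [hu.1], by linarith [hu.2]⟩⟩
  rw [uIcc_of_le hst, uIcc_of_le (by linarith)]
  exact Icc_subset_Icc hs ht

theorem kob_intervalIntegrable [FiniteDimensional ℂ E] {D : Set E} (hD : IsOpen D)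
    {σ g : ℝ → E} {a b : ℝ} (hab : a ≤ b)
    (h : IsACWithDeriv σ g a b) (hm : MapsTo σ (Icc a b) D) :
    IntervalIntegrable (fun t => kobMetric D (σ t) (g t)) volume a b := by
  classical
  have : ProperSpace E := FiniteDimensional.proper ℂ E
  borelize E
  have hc := h.continuousOn hab
  have hK : IsCompact (σ '' Icc a b) := isCompact_Icc.image_of_continuousOn hc
  obtain ⟨δ, hδ, hthick⟩ := hK.exists_thickening_subset_open hD (by
    rintro _ ⟨z, hz, rfl⟩; exact hm hz)
  have hbound : ∀ t ∈ Icc a b, kobMetric D (σ t) (g t) ≤ ‖g t‖ / δ := by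
    intro t ht
    apply kob_le_div hδ
    refine Subset.trans (fun y hy => ?_) hthick
    rw [mem_thickening_iff]
    exact ⟨σ t, mem_image_of_mem _ ht, hy⟩
  have hg : IntegrableOn g (Ioc a b) := (intervalIntegrable_iff_integrableOn_Ioc_of_le hab).mp h.1
  rw [intervalIntegrable_iff_integrableOn_Ioc_of_le hab]
  -- measurability
  let F : E × E → ℝ := fun p => if p.1 ∈ D then kobMetric D p.1 p.2 else 0
  have hF : Measurable F := by
    apply measurable_of_Iio
    intro r
    have hset : F ⁻¹' Iio r = ({p | p.1 ∈ D ∧ kobMetric D p.1 p.2 < r}) ∪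
        ({p | p.1 ∉ D} ∩ {p | 0 < r}) := by
      ext p
      by_cases hp : p.1 ∈ D <;> simp [F, hp]
    rw [hset]
    refine MeasurableSet.union (IsOpen.measurableSet ?_) (MeasurableSet.inter ?_ (by simp))
    · rw [isOpen_iff_mem_nhds]
      rintro ⟨x, v⟩ ⟨hx, hlt⟩
      have h1 := kob_usc hD hx hlt
      have h2 : ∀ᶠ p : E × E in 𝓝 (x, v), p.1 ∈ D :=
        (continuous_fst.tendsto (x, v)).eventually (hD.mem_nhds hx)
      filter_upwards [h1, h2] with p hp1 hp2 using ⟨hp2, hp1⟩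
    · exact (hD.measurableSet.preimage measurable_fst).compl
  have hσ : AEStronglyMeasurable σ (volume.restrict (Ioc a b)) :=
    (hc.mono Ioc_subset_Icc_self).aestronglyMeasurable measurableSet_Ioc
  have hpair : AEMeasurable (fun t => (σ t, g t)) (volume.restrict (Ioc a b)) :=
    hσ.aemeasurable.prodMk hg.aestronglyMeasurable.aemeasurable
  have hmeas : AEMeasurable (fun t => kobMetric D (σ t) (g t)) (volume.restrict (Ioc a b)) := by
    refine (hF.comp_aemeasurable hpair).congr ?_
    filter_upwards [ae_restrict_mem measurableSet_Ioc] with t ht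
    simp [F, hm (Ioc_subset_Icc_self ht)]
  refine Integrable.mono' (hg.norm.div_const δ) hmeas.aestronglyMeasurable ?_
  filter_upwards [ae_restrict_mem measurableSet_Ioc] with t ht
  rw [Real.norm_of_nonneg (kob_nonneg _ _ _)]
  exact hbound t (Ioc_subset_Icc_self ht)

/-- The set of lengths of curves. -/
def kobLens (D : Set E) (x y : E) : Set ℝ :=
  { r : ℝ | ∃ (a b : ℝ) (σ g : ℝ → E), a ≤ b ∧
    IsACWithDeriv σ g a b ∧ MapsTo σ (Icc a b) D ∧ σ a = x ∧ σ b = y ∧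
    r = ∫ t in a..b, kobMetric D (σ t) (g t) }

theorem kobDist_eq (D : Set E) (x y : E) : kobDist D x y = sInf (kobLens D x y) := rfl

theorem kobLens_nonneg {D : Set E} {x y : E} {r : ℝ} (h : r ∈ kobLens D x y) : 0 ≤ r := by
  obtain ⟨a, b, σ, g, hab, -, -, -, -, rfl⟩ := h
  exact intervalIntegral.integral_nonneg hab fun t _ => kob_nonneg _ _ _

theorem kobDist_nonneg (D : Set E) (x y : E) : 0 ≤ kobDist D x y :=
  Real.sInf_nonneg fun _ h => kobLens_nonneg h

theorem kobDist_le_of_mem {D : Set E} {x y : E} {r : ℝ} (h : r ∈ kobLens D x y) :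
    kobDist D x y ≤ r :=
  csInf_le ⟨0, fun _ h => kobLens_nonneg h⟩ h

theorem kobDist_le_curve {D : Set E} {σ g : ℝ → E} {a b : ℝ} (hab : a ≤ b)
    (h : IsACWithDeriv σ g a b) (hm : MapsTo σ (Icc a b) D) :
    kobDist D (σ a) (σ b) ≤ ∫ t in a..b, kobMetric D (σ t) (g t) :=
  kobDist_le_of_mem ⟨a, b, σ, g, hab, h, hm, rfl, rfl, rfl⟩

theorem kobLens_refl {D : Set E} {x : E} (hx : x ∈ D) : (0:ℝ) ∈ kobLens D x x :=
  ⟨0, 0, fun _ => x, fun _ => 0, le_rfl, ⟨by simp, by simp⟩, fun _ _ => hx, rfl, rfl, by simp⟩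

theorem kobLens_symm {D : Set E} (hD : IsOpen D) {x y : E} {r : ℝ} (h : r ∈ kobLens D x y) :
    r ∈ kobLens D y x := by
  obtain ⟨a, b, σ, g, hab, hac, hm, rfl, rfl, rfl⟩ := h
  refine ⟨a, b, fun t => σ (a + b - t), fun t => - g (a + b - t), hab, ⟨?_, ?_⟩, ?_, ?_, ?_, ?_⟩
  · have := hac.1.symm.comp_sub_left (a + b)
    simp only [add_sub_cancel_right, add_sub_cancel_left] at this
    exact this.neg
  · intro t ht
    have h1 := hac.sub_eq (s := b) (t := a + b - t) ⟨hab, le_rfl⟩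
      ⟨by linarith [ht.2], by linarith [ht.1]⟩
    simp only [add_sub_cancel_left]
    rw [intervalIntegral.integral_neg, intervalIntegral.integral_comp_sub_left (fun s => g s) (a + b), h1,
      intervalIntegral.integral_symm]
    simp
  · intro t ht
    exact hm ⟨by linarith [ht.2], by linarith [ht.1]⟩
  · simp
  · simp
  · have h2 : ∫ t in a..b, kobMetric D (σ (a + b - t)) (-g (a + b - t)) =
        ∫ t in a..b, kobMetric D (σ (a + b - t)) (g (a + b - t)) := by
      apply intervalIntegral.integral_congr
      intro t ht
      rw [uIcc_of_le hab] at ht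
      exact kob_neg hD (hm ⟨by linarith [ht.2], by linarith [ht.1]⟩)
    rw [h2, intervalIntegral.integral_comp_sub_left (fun t => kobMetric D (σ t) (g t)) (a + b)]
    simp

theorem kobDist_symm {D : Set E} (hD : IsOpen D) (x y : E) : kobDist D x y = kobDist D y x := by
  rw [kobDist_eq, kobDist_eq]
  congr 1
  ext r
  exact ⟨kobLens_symm hD, kobLens_symm hD⟩

theorem kobLens_shift {D : Set E} {x y : E} {r : ℝ} (h : r ∈ kobLens D x y) (a' : ℝ) :
    ∃ (b : ℝ) (σ g : ℝ → E), a' ≤ b ∧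
    IsACWithDeriv σ g a' b ∧ MapsTo σ (Icc a' b) D ∧ σ a' = x ∧ σ b = y ∧
    r = ∫ t in a'..b, kobMetric D (σ t) (g t) := by
  obtain ⟨a, b, σ, g, hab, hac, hm, rfl, rfl, rfl⟩ := h
  refine ⟨a' + (b - a), fun t => σ (t - (a' - a)), fun t => g (t - (a' - a)), by linarith,
    ⟨?_, ?_⟩, ?_, ?_, ?_, ?_⟩
  · have := hac.1.comp_sub_right (a' - a)
    convert this using 1 <;> ring
  · intro t ht
    rw [intervalIntegral.integral_comp_sub_right (fun s => g s) (a' - a)]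
    have := hac.2 (t - (a' - a)) ⟨by linarith [ht.1], by linarith [ht.2]⟩
    simpa using this
  · intro t ht
    exact hm ⟨by linarith [ht.1], by linarith [ht.2]⟩
  · simp
  · have e : a' + (b - a) - (a' - a) = b := by ring
    simp only [e]
  · rw [intervalIntegral.integral_comp_sub_right (fun t => kobMetric D (σ t) (g t)) (a' - a)]
    congr 1 <;> ring

theorem kobLens_trans [FiniteDimensional ℂ E] {D : Set E} (hD : IsOpen D) {x y z : E} {r s : ℝ}
    (h : r ∈ kobLens D x y) (h' : s ∈ kobLens D y z) : r + s ∈ kobLens D x z := by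
  obtain ⟨a, b, σ, g, hab, hac, hm, rfl, rfl, rfl⟩ := h
  obtain ⟨c, σ', g', hbc, hac', hm', hσb, rfl, rfl⟩ := kobLens_shift h' b
  have hk := kob_intervalIntegrable hD hab hac hm
  have hk' := kob_intervalIntegrable hD hbc hac' hm'
  set S : ℝ → E := fun t => if t ≤ b then σ t else σ' t with hS
  set G : ℝ → E := fun t => if t ≤ b then g t else g' t with hG
  have S1 : ∀ t ≤ b, S t = σ t := fun t ht => by simp [hS, ht]
  have S2 : ∀ t, b ≤ t → S t = σ' t := fun t ht => by
    rcases ht.eq_or_lt with rfl | ht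
    · simp [hS, hσb]
    · simp [hS, not_le.mpr ht]
  have G1 : ∀ t ≤ b, G t = g t := fun t ht => by simp [hG, ht]
  have G2 : ∀ t, b < t → G t = g' t := fun t ht => by simp [hG, not_le.mpr ht]
  have I1 : IntervalIntegrable G volume a b := hac.1.congr (by
    intro t ht; rw [uIoc_of_le hab] at ht; exact (G1 t ht.2).symm)
  have I2 : IntervalIntegrable G volume b c := hac'.1.congr (by
    intro t ht; rw [uIoc_of_le hbc] at ht; exact (G2 t ht.1).symm)
  have J1 : ∀ t ∈ Icc a b, ∫ u in a..t, G u = ∫ u in a..t, g u := fun t ht => by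
    apply intervalIntegral.integral_congr_ae
    refine Eventually.of_forall fun u hu => ?_
    rw [uIoc_of_le ht.1] at hu
    exact G1 u (hu.2.trans ht.2)
  have J2 : ∀ t ∈ Icc b c, ∫ u in b..t, G u = ∫ u in b..t, g' u := fun t ht => by
    apply intervalIntegral.integral_congr_ae
    refine Eventually.of_forall fun u hu => ?_
    rw [uIoc_of_le ht.1] at hu
    exact G2 u hu.1
  refine ⟨a, c, S, G, hab.trans hbc, ⟨I1.trans I2, ?_⟩, ?_, S1 a hab, S2 c hbc, ?_⟩
  · intro t ht
    rw [S1 a hab]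
    rcases le_total t b with htb | htb
    · rw [S1 t htb, J1 t ⟨ht.1, htb⟩]
      exact hac.2 t ⟨ht.1, htb⟩
    · rw [S2 t htb, ← intervalIntegral.integral_add_adjacent_intervals I1
        (I2.mono_set (by rw [uIcc_of_le htb, uIcc_of_le hbc]; exact Icc_subset_Icc_right ht.2)),
        J1 b ⟨hab, le_rfl⟩, J2 t ⟨htb, ht.2⟩, ← add_assoc, ← hac.2 b ⟨hab, le_rfl⟩, ← hσb]
      exact hac'.2 t ⟨htb, ht.2⟩
  · intro t ht
    rcases le_total t b with htb | htb
    · rw [S1 t htb]; exact hm ⟨ht.1, htb⟩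
    · rw [S2 t htb]; exact hm' ⟨htb, ht.2⟩
  · have e := intervalIntegral.integral_add_adjacent_intervals
      (f := fun t => kobMetric D (S t) (G t)) (μ := volume) (a := a) (b := b) (c := c)
      (hk.congr fun u hu => by
        rw [uIoc_of_le hab] at hu
        simp only [S1 u hu.2, G1 u hu.2])
      (hk'.congr fun u hu => by
        rw [uIoc_of_le hbc] at hu
        simp only [S2 u hu.1.le, G2 u hu.1])
    rw [← e]
    congr 1
    · apply intervalIntegral.integral_congr_ae
      refine Eventually.of_forall fun u hu => ?_
      rw [uIoc_of_le hab] at hu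
      rw [S1 u hu.2, G1 u hu.2]
    · apply intervalIntegral.integral_congr_ae
      refine Eventually.of_forall fun u hu => ?_
      rw [uIoc_of_le hbc] at hu
      rw [S2 u hu.1.le, G2 u hu.1]

/-- straight segments -/
theorem isAC_segment [CompleteSpace E] (x v : E) {a b : ℝ} :
    IsACWithDeriv (fun t : ℝ => x + t • v) (fun _ => v) a b := by
  refine ⟨by simp, fun t _ => ?_⟩
  simp [sub_smul]

theorem kobLens_segment [CompleteSpace E] {D : Set E} {x y : E}
    (hseg : ∀ t ∈ Icc (0:ℝ) 1, x + t • (y - x) ∈ D) : (kobLens D x y).Nonempty :=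
  ⟨_, 0, 1, fun t => x + t • (y - x), fun _ => y - x, zero_le_one, isAC_segment _ _,
    fun t ht => hseg t ht, by simp, by simp, rfl⟩

theorem kobLens_nonempty [FiniteDimensional ℂ E] {D : Set E} (hD : IsOpen D)
    (hc : IsPreconnected D) {x y : E} (hx : x ∈ D) (hy : y ∈ D) : (kobLens D x y).Nonempty := by
  have : CompleteSpace E := FiniteDimensional.complete ℂ E
  refine hc.induction₂' (fun x y => (kobLens D x y).Nonempty) ?_ ?_ hx hy
  · intro x hx
    obtain ⟨ε, hε, hb⟩ := Metric.isOpen_iff.mp hD x hx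
    filter_upwards [mem_nhdsWithin_of_mem_nhds (ball_mem_nhds x hε)] with y hy
    have : (kobLens D x y).Nonempty := kobLens_segment fun t ht => hb (by
      rw [mem_ball_iff_norm] at hy ⊢
      rw [add_sub_cancel_left, norm_smul, Real.norm_of_nonneg ht.1]
      nlinarith [norm_nonneg (y - x), ht.2])
    exact ⟨this, this.imp fun r hr => kobLens_symm hD hr⟩
  · rintro x y z - - - ⟨r, hr⟩ ⟨s, hs⟩
    exact ⟨_, kobLens_trans hD hr hs⟩

theorem kobDist_triangle [FiniteDimensional ℂ E] {D : Set E} (hD : IsOpen D)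
    (hc : IsPreconnected D) {x y z : E} (hx : x ∈ D) (hy : y ∈ D) (hz : z ∈ D) :
    kobDist D x z ≤ kobDist D x y + kobDist D y z := by
  refine le_of_forall_pos_le_add fun ε hε => ?_
  obtain ⟨r, hr, hr'⟩ := exists_lt_of_csInf_lt (kobLens_nonempty hD hc hx hy)
    (lt_add_of_pos_right (sInf (kobLens D x y)) (half_pos hε))
  obtain ⟨s, hs, hs'⟩ := exists_lt_of_csInf_lt (kobLens_nonempty hD hc hy hz)
    (lt_add_of_pos_right (sInf (kobLens D y z)) (half_pos hε))
  have := kobDist_le_of_mem (kobLens_trans hD hr hs)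
  rw [kobDist_eq D x y, kobDist_eq D y z]
  linarith

/-- existence of near-minimizing curves -/
theorem exists_near_min [FiniteDimensional ℂ E] {D : Set E} (hD : IsOpen D)
    (hc : IsPreconnected D) {x y : E} (hx : x ∈ D) (hy : y ∈ D) :
    ∃ (a b : ℝ) (σ g : ℝ → E), a ≤ b ∧
    IsACWithDeriv σ g a b ∧ MapsTo σ (Icc a b) D ∧ σ a = x ∧ σ b = y ∧
    ∫ t in a..b, kobMetric D (σ t) (g t) ≤ kobDist D x y + 1 := by
  obtain ⟨r, ⟨a, b, σ, g, h1, h2, h3, h4, h5, rfl⟩, hr'⟩ :=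
    exists_lt_of_csInf_lt (kobLens_nonempty hD hc hx hy)
    (lt_add_of_pos_right (sInf (kobLens D x y)) one_pos)
  exact ⟨a, b, σ, g, h1, h2, h3, h4, h5, hr'.le⟩

/-- subarcs of near-minimizing curves are near-minimizing -/
theorem near_min_sub [FiniteDimensional ℂ E] {D : Set E} (hD : IsOpen D)
    (hc : IsPreconnected D) {σ g : ℝ → E} {a b : ℝ}
    (h : IsACWithDeriv σ g a b) (hm : MapsTo σ (Icc a b) D)
    (hl : ∫ t in a..b, kobMetric D (σ t) (g t) ≤ kobDist D (σ a) (σ b) + 1)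
    {s t : ℝ} (has : a ≤ s) (hst : s ≤ t) (htb : t ≤ b) :
    ∫ u in s..t, kobMetric D (σ u) (g u) ≤ kobDist D (σ s) (σ t) + 1 := by
  have hab : a ≤ b := by linarith
  have hI := kob_intervalIntegrable hD hab h hm
  have hsub : ∀ {c d : ℝ}, a ≤ c → c ≤ d → d ≤ b →
      IntervalIntegrable (fun t => kobMetric D (σ t) (g t)) volume c d := fun h1 h2 h3 =>
    hI.mono_set (by rw [uIcc_of_le h2, uIcc_of_le hab]; exact Icc_subset_Icc h1 h3)
  have e1 := intervalIntegral.integral_add_adjacent_intervals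
    (hsub le_rfl has (by linarith)) (hsub has hst htb)
  have e2 := intervalIntegral.integral_add_adjacent_intervals
    (hsub le_rfl (has.trans hst) htb) (hsub (has.trans hst) htb le_rfl)
  have k1 := kobDist_le_curve has (h.mono has le_rfl (by linarith))
    (hm.mono_left (Icc_subset_Icc_right (by linarith)))
  have k2 := kobDist_le_curve htb (h.mono htb (by linarith) le_rfl)
    (hm.mono_left (Icc_subset_Icc_left (by linarith)))
  have ma : σ a ∈ D := hm ⟨le_rfl, hab⟩
  have mb : σ b ∈ D := hm ⟨hab, le_rfl⟩
  have ms : σ s ∈ D := hm ⟨has, by linarith⟩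
  have mt : σ t ∈ D := hm ⟨by linarith, htb⟩
  have t1 := kobDist_triangle hD hc ma ms mb
  have t2 := kobDist_triangle hD hc ms mt mb
  linarith

end KobDistBasics

section DiscEstimates

variable {E : Type*} [NormedAddCommGroup E] [NormedSpace ℂ E]

theorem isAC_of_hasDerivAt [CompleteSpace E] {σ g : ℝ → E} {a b : ℝ}
    (h : ∀ t ∈ Icc a b, HasDerivAt σ (g t) t) (hg : IntervalIntegrable g volume a b) :
    IsACWithDeriv σ g a b := by
  refine ⟨hg, fun t ht => ?_⟩
  have hab : a ≤ b := ht.1.trans ht.2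
  rw [intervalIntegral.integral_eq_sub_of_hasDerivAt (f := σ)]
  · simp
  · intro x hx
    rw [uIcc_of_le ht.1] at hx
    exact h x ⟨hx.1, hx.2.trans ht.2⟩
  · exact hg.mono_set (by rw [uIcc_of_le hab, uIcc_of_le ht.1]; exact Icc_subset_Icc_right ht.2)

theorem kob_disc_point {D : Set E} {f : ℂ → E} (hf : DifferentiableOn ℂ f (ball (0:ℂ) 1))
    (hm : MapsTo f (ball (0:ℂ) 1) D) {w : ℂ} (hw : ‖w‖ < 1) (u : ℂ) :
    kobMetric D (f w) (u • deriv f w) ≤ ‖u‖ / (1 - ‖w‖) := by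
  have hτ : 0 < 1 - ‖w‖ := by linarith
  have hmaps : MapsTo (fun z : ℂ => w + ((1 - ‖w‖ : ℝ) : ℂ) * z) (ball 0 1) (ball 0 1) := by
    intro z hz
    rw [mem_ball_zero_iff] at hz ⊢
    refine (norm_add_le _ _).trans_lt ?_
    rw [norm_mul, Complex.norm_real, Real.norm_of_nonneg hτ.le]
    nlinarith
  have hτ' : ((1 - ‖w‖ : ℝ) : ℂ) ≠ 0 := by exact_mod_cast hτ.ne'
  have hd : HasDerivAt f (deriv f w) (w + ((1 - ‖w‖ : ℝ) : ℂ) * 0) := by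
    rw [mul_zero, add_zero]
    exact (hf.differentiableAt (isOpen_ball.mem_nhds (by simpa using hw))).hasDerivAt
  have h1 : HasDerivAt (fun z : ℂ => f (w + ((1 - ‖w‖ : ℝ) : ℂ) * z))
      (((1 - ‖w‖ : ℝ) : ℂ) • deriv f w) 0 := by
    have := hd.scomp (0 : ℂ) (((hasDerivAt_id (0:ℂ)).const_mul ((1 - ‖w‖ : ℝ) : ℂ)).const_add w)
    simpa [Function.comp_def] using this
  have := kob_le_of_disc (D := D) (x := f w) (v := u • deriv f w)
    (f := fun z : ℂ => f (w + ((1 - ‖w‖ : ℝ) : ℂ) * z))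
    (ξ := u / ((1 - ‖w‖ : ℝ) : ℂ)) (f' := ((1 - ‖w‖ : ℝ) : ℂ) • deriv f w)
    (hf.comp (by fun_prop) hmaps) (fun z hz => hm (hmaps hz)) (by simp) h1
    (by rw [smul_smul, div_mul_cancel₀ _ hτ'])
  rwa [norm_div, Complex.norm_real, Real.norm_of_nonneg hτ.le] at this

theorem kobDist_disc [FiniteDimensional ℂ E] {D : Set E} (hD : IsOpen D) {f : ℂ → E}
    (hf : DifferentiableOn ℂ f (ball (0:ℂ) 1))
    (hm : MapsTo f (ball (0:ℂ) 1) D) {w : ℂ} (hw : ‖w‖ < 1) :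
    kobDist D (f 0) (f w) ≤ - Real.log (1 - ‖w‖) := by
  have : CompleteSpace E := FiniteDimensional.complete ℂ E
  have hin : ∀ t ∈ Icc (0:ℝ) 1, ‖(t : ℂ) * w‖ ≤ t * ‖w‖ := fun t ht => by
    rw [norm_mul, Complex.norm_real, Real.norm_of_nonneg ht.1]
  have hin' : ∀ t ∈ Icc (0:ℝ) 1, ‖(t : ℂ) * w‖ < 1 := fun t ht => by
    have := hin t ht
    nlinarith [norm_nonneg w, ht.1, ht.2]
  have hderiv : ∀ t ∈ Icc (0:ℝ) 1, HasDerivAt (fun t : ℝ => f ((t:ℂ) * w)) (w • deriv f ((t:ℂ) * w)) t := by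
    intro t ht
    have h1 : HasDerivAt f (deriv f ((t:ℂ) * w)) ((t:ℂ) * w) :=
      (hf.differentiableAt (isOpen_ball.mem_nhds (by simpa using hin' t ht))).hasDerivAt
    have h2 : HasDerivAt (fun t : ℝ => (t:ℂ) * w) w t := by
      simpa using (Complex.ofRealCLM.hasDerivAt (x := t)).mul_const w
    exact h1.scomp t h2
  have hcont : ContinuousOn (fun t : ℝ => w • deriv f ((t:ℂ) * w)) (Icc 0 1) := by
    have h1 : ContinuousOn (deriv f) (ball (0:ℂ) 1) := (hf.deriv isOpen_ball).continuousOn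
    have h2 : ContinuousOn (fun t : ℝ => (t:ℂ) * w) (Icc 0 1) := by fun_prop
    exact (h1.comp h2 fun t ht => by simpa using hin' t ht).const_smul w
  have hac : IsACWithDeriv (fun t : ℝ => f ((t:ℂ) * w)) (fun t => w • deriv f ((t:ℂ) * w)) 0 1 :=
    isAC_of_hasDerivAt hderiv (hcont.intervalIntegrable_of_Icc zero_le_one)
  have hmm : MapsTo (fun t : ℝ => f ((t:ℂ) * w)) (Icc 0 1) D := fun t ht =>
    hm (by simpa using hin' t ht)
  have h1 := kobDist_le_curve zero_le_one hac hmm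
  simp only [Complex.ofReal_zero, zero_mul, Complex.ofReal_one, one_mul] at h1
  refine h1.trans ?_
  have hpos : ∀ t ∈ Icc (0:ℝ) 1, 0 < 1 - t * ‖w‖ := fun t ht => by
    nlinarith [norm_nonneg w, ht.1, ht.2]
  have hder2 : ∀ t ∈ uIcc (0:ℝ) 1, HasDerivAt (fun t : ℝ => - Real.log (1 - t * ‖w‖))
      (‖w‖ / (1 - t * ‖w‖)) t := by
    intro t ht
    rw [uIcc_of_le zero_le_one] at ht
    have h2 : HasDerivAt (fun t : ℝ => 1 - t * ‖w‖) (-‖w‖) t := by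
      simpa using ((hasDerivAt_id t).mul_const ‖w‖).const_sub 1
    have := (h2.log (hpos t ht).ne').fun_neg
    simpa [neg_div] using this
  have hint : IntervalIntegrable (fun t : ℝ => ‖w‖ / (1 - t * ‖w‖)) volume 0 1 := by
    apply ContinuousOn.intervalIntegrable_of_Icc zero_le_one
    exact continuousOn_const.div (by fun_prop) fun t ht => (hpos t ht).ne'
  have h3 := intervalIntegral.integral_eq_sub_of_hasDerivAt hder2 hint
  calc _ ≤ ∫ t in (0:ℝ)..1, ‖w‖ / (1 - t * ‖w‖) := by
        apply intervalIntegral.integral_mono_on zero_le_one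
          (kob_intervalIntegrable hD zero_le_one hac hmm) hint
        intro t ht
        refine (kob_disc_point hf hm (hin' t ht) w).trans ?_
        have := hin t ht
        have := hpos t ht
        gcongr
    _ = _ := by rw [h3]; simp

theorem kob_localize [FiniteDimensional ℂ E] {Ω U : Set E} (hΩ : IsOpen Ω)
    {x v : E} {d : ℝ} (hd : 0 < d) (hx : x ∈ Ω ∩ U) (h : ∀ y ∈ Ω \ U, d ≤ kobDist Ω x y) :
    kobMetric (Ω ∩ U) x v ≤ kobMetric Ω x v / (1 - Real.exp (-d)) := by
  have hτ : 0 < 1 - Real.exp (-d) := by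
    have : Real.exp (-d) < 1 := Real.exp_lt_one_iff.mpr (by linarith)
    linarith
  rw [le_div_iff₀ hτ]
  refine le_kob hΩ hx.1 fun f ξ f' h1 h2 h3 h4 h5 => ?_
  rw [← le_div_iff₀ hτ]
  refine kob_le_of_small_disc hτ (by linarith [Real.exp_pos (-d)]) h1 ?_ h3 h4 h5
  intro w hw
  rw [mem_ball_zero_iff] at hw
  have hw1 : ‖w‖ < 1 := by linarith [Real.exp_pos (-d)]
  have hΩw : f w ∈ Ω := h2 (by simpa using hw1)
  refine ⟨hΩw, ?_⟩
  by_contra hU'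
  have k1 := h (f w) ⟨hΩw, hU'⟩
  have k2 := kobDist_disc hΩ h1 h2 hw1
  rw [h3] at k2
  have : Real.exp (-d) < 1 - ‖w‖ := by linarith
  have := Real.log_lt_log (Real.exp_pos _) this
  rw [Real.log_exp] at this
  linarith

theorem kob_localize_weak {Ω U : Set E} (hΩ : IsOpen Ω) 
    {x v : E} {M r : ℝ} (hM : ∀ y ∈ Ω, dist y x < M) (hr : 0 < r) (hrM : r ≤ M) (hx : x ∈ Ω)
    (hb : ball x r ⊆ U) :
    kobMetric (Ω ∩ U) x v ≤ kobMetric Ω x v / (r / M) := by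
  have hM0 : 0 < M := hr.trans_le hrM
  have hτ : 0 < r / M := by positivity
  rw [le_div_iff₀ hτ]
  refine le_kob hΩ hx fun f ξ f' h1 h2 h3 h4 h5 => ?_
  rw [← le_div_iff₀ hτ]
  have hτ1 : r / M ≤ 1 := (div_le_one hM0).mpr hrM
  refine kob_le_of_small_disc hτ hτ1 h1 ?_ h3 h4 h5
  intro w hw
  have hw1 : w ∈ ball (0:ℂ) 1 := ball_subset_ball hτ1 hw
  refine ⟨h2 hw1, hb ?_⟩
  have := Complex.dist_le_div_mul_dist_of_mapsTo_ball (f := f) (c := 0) (R₁ := 1) (R₂ := M) h1 (by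
    intro z hz
    rw [h3]
    exact ball_subset_closedBall (hM _ (h2 hz))) hw1
  rw [h3, div_one] at this
  rw [mem_ball] at hw ⊢
  calc _ ≤ _ := this
    _ < M * (r / M) := by gcongr
    _ = r := by field_simp

end DiscEstimates

section ChainRule

theorem ac_comp_lip {f Ψ : ℝ → ℝ} {a b : ℝ} {S : Set ℝ} {K : NNReal}
    (hf : AbsolutelyContinuousOnInterval f a b) (hS : ∀ t ∈ uIcc a b, f t ∈ S)
    (hΨ : LipschitzOnWith K Ψ S) : AbsolutelyContinuousOnInterval (fun t => Ψ (f t)) a b := by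
  rw [absolutelyContinuousOnInterval_iff] at hf ⊢
  intro ε hε
  obtain ⟨δ, hδ, h⟩ := hf (ε / (K + 1)) (by positivity)
  refine ⟨δ, hδ, fun I hI hlt => ?_⟩
  have h1 := h I hI hlt
  calc _ ≤ ∑ i ∈ Finset.range I.1, K * dist (f (I.2 i).1) (f (I.2 i).2) := by
        apply Finset.sum_le_sum
        intro i hi
        exact hΨ.dist_le_mul _ (hS _ (hI.left i hi).left) _ (hS _ (hI.left i hi).right)
    _ = K * ∑ i ∈ Finset.range I.1, dist (f (I.2 i).1) (f (I.2 i).2) := (Finset.mul_sum _ _ _).symm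
    _ ≤ K * (ε / (K + 1)) := by gcongr
    _ < (K + 1) * (ε / (K + 1)) := by gcongr; linarith
    _ = ε := by field

/-- change of variables / chain rule for absolutely continuous functions. -/
theorem ac_chain {k ℓ Ψ ψ : ℝ → ℝ} {a b m M c : ℝ} (hab : a ≤ b)
    (hk : IntervalIntegrable k volume a b) (hℓ : ∀ t ∈ Icc a b, ℓ t = c + ∫ s in a..t, k s)
    (hrange : ∀ t ∈ Icc a b, ℓ t ∈ Icc m M)
    (hΨ : ∀ x ∈ Icc m M, HasDerivAt Ψ (ψ x) x) (hψ : ContinuousOn ψ (Icc m M)) :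
    IntervalIntegrable (fun t => k t * ψ (ℓ t)) volume a b ∧
    ∫ t in a..b, k t * ψ (ℓ t) = Ψ (ℓ b) - Ψ (ℓ a) := by
  set L : ℝ → ℝ := fun t => c + ∫ s in a..t, k s with hL
  have hrange' : ∀ t ∈ Icc a b, L t ∈ Icc m M := fun t ht => by
    have h0 := hrange t ht
    rwa [hℓ t ht] at h0
  have hLac : AbsolutelyContinuousOnInterval L a b := by
    have h1 := hk.absolutelyContinuousOnInterval_intervalIntegral (c := a) left_mem_uIcc
    have h2 : AbsolutelyContinuousOnInterval (fun _ : ℝ => c) a b :=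
      (LipschitzWith.const c).lipschitzOnWith.absolutelyContinuousOnInterval
    exact h2.add h1
  obtain ⟨B, hB⟩ := isCompact_Icc.exists_bound_of_continuousOn hψ
  have hlip : LipschitzOnWith B.toNNReal Ψ (Icc m M) := by
    apply (convex_Icc m M).lipschitzOnWith_of_nnnorm_hasDerivWithin_le
      (fun x hx => (hΨ x hx).hasDerivWithinAt)
    intro x hx
    rw [← NNReal.coe_le_coe, coe_nnnorm]
    exact (hB x hx).trans (Real.le_coe_toNNReal B)
  have hac := ac_comp_lip hLac (fun t ht => hrange' t (by rwa [uIcc_of_le hab] at ht)) hlip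
  have h1 := hac.integral_deriv_eq_sub
  have hLc : ContinuousOn ℓ (Icc a b) := by
    have := hLac.continuousOn
    rw [uIcc_of_le hab] at this
    exact this.congr hℓ
  have hii : IntervalIntegrable (fun t => k t * ψ (ℓ t)) volume a b := by
    apply hk.mul_continuousOn
    rw [uIcc_of_le hab]
    exact hψ.comp hLc hrange
  refine ⟨hii, ?_⟩
  rw [hℓ b ⟨hab, le_rfl⟩, hℓ a ⟨le_rfl, hab⟩]
  refine Eq.trans ?_ h1
  apply intervalIntegral.integral_congr_ae
  filter_upwards [hk.ae_hasDerivAt_integral] with t ht htt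
  have htI : t ∈ uIcc a b := uIoc_subset_uIcc htt
  have h2 := (ht htI a left_mem_uIcc).const_add c
  rw [uIcc_of_le hab] at htI
  have h3 := (hΨ (L t) (hrange' t htI)).comp t h2
  rw [show (fun t => Ψ (L t)) = Ψ ∘ fun x => c + ∫ (t : ℝ) in a..x, k t from rfl, h3.deriv, hℓ t htI, mul_comm]

/-- Gronwall type inequality -/
theorem ac_gronwall {u v k : ℝ → ℝ} {a b : ℝ} (hab : a ≤ b)
    (hv : IntervalIntegrable v volume a b) (hu : ∀ t ∈ Icc a b, u t = u a + ∫ s in a..t, v s)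
    (hpos : ∀ t ∈ Icc a b, 0 < u t) (hk : IntervalIntegrable k volume a b)
    (hb : ∀ t ∈ Icc a b, v t ≤ k t * u t) : u b ≤ u a * Real.exp (∫ t in a..b, k t) := by
  have huc : ContinuousOn u (Icc a b) := by
    have := intervalIntegral.continuousOn_primitive_interval' hv left_mem_uIcc
    rw [uIcc_of_le hab] at this
    exact (continuousOn_const.add this).congr hu
  obtain ⟨tm, htm, hmin⟩ := isCompact_Icc.exists_isMinOn ⟨a, left_mem_Icc.mpr hab⟩ huc
  obtain ⟨tM, htM, hmax⟩ := isCompact_Icc.exists_isMaxOn ⟨a, left_mem_Icc.mpr hab⟩ huc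
  have hx : ∀ x ∈ Icc (u tm) (u tM), 0 < x := fun x hx => (hpos tm htm).trans_le hx.1
  obtain ⟨h1, h2⟩ := ac_chain (Ψ := Real.log) (ψ := fun x => x⁻¹) hab hv hu
    (fun t ht => ⟨hmin ht, hmax ht⟩) (fun x h => Real.hasDerivAt_log (hx x h).ne')
    (continuousOn_id.inv₀ fun x h => (hx x h).ne')
  have h3 : ∫ t in a..b, v t * (u t)⁻¹ ≤ ∫ t in a..b, k t := by
    apply intervalIntegral.integral_mono_on hab h1 hk
    intro t ht
    rw [← div_eq_mul_inv, div_le_iff₀ (hpos t ht)]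
    exact hb t ht
  have ha := hpos a ⟨le_rfl, hab⟩
  have hbb := hpos b ⟨hab, le_rfl⟩
  rw [h2, sub_le_iff_le_add] at h3
  have := (Real.log_le_iff_le_exp hbb).mp h3
  rwa [Real.exp_add, Real.exp_log ha, mul_comm] at this

end ChainRule

section SliceLog

theorem exp_one_const {X : Type*} [TopologicalSpace X] {S : Set X} (hS : IsPreconnected S)
    {H : X → ℂ} (hc : ContinuousOn H S) (h : ∀ x ∈ S, Complex.exp (H x) = 1)
    {x y : X} (hx : x ∈ S) (hy : y ∈ S) : H x = H y := by
  choose! n hn using fun x hx => Complex.exp_eq_one_iff.mp (h x hx)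
  have hpi : (0:ℝ) < 2 * Real.pi := by positivity
  have him : ∀ x ∈ S, (H x).im = n x * (2 * Real.pi) := fun x hx => by rw [hn x hx]; simp
  have hf : ContinuousOn (fun x => (H x).im / (2 * Real.pi)) S :=
    (Complex.continuous_im.comp_continuousOn hc).div_const _
  have hv : ∀ x ∈ S, (H x).im / (2 * Real.pi) = n x := fun x hx => by
    rw [him x hx]; field_simp
  have key : ∀ x ∈ S, ∀ y ∈ S, ¬ n x < n y := by
    intro x hx y hy hlt
    have h1 : ((n x : ℝ) + 1/2) ∈ Icc ((H x).im / (2 * Real.pi)) ((H y).im / (2 * Real.pi)) := by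
      rw [hv x hx, hv y hy]
      have : (n x : ℝ) + 1 ≤ n y := by exact_mod_cast hlt
      constructor <;> linarith
    obtain ⟨z, hz, hz'⟩ := hS.intermediate_value hx hy hf h1
    simp only [hv z hz] at hz'
    have h2 : (2 * n z : ℝ) = 2 * n x + 1 := by linarith
    have h3 : 2 * n z = 2 * n x + 1 := by exact_mod_cast h2
    omega
  rw [hn x hx, hn y hy, le_antisymm (not_lt.mp (key y hy x hx)) (not_lt.mp (key x hx y hy))]

variable {E : Type*} [NormedAddCommGroup E] [NormedSpace ℂ E]

theorem isEmbedding_line (z : E) {v : E} (hv : v ≠ 0) : IsEmbedding (fun c : ℂ => z + c • v) := by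
  have h1 : AntilipschitzWith ‖v‖₊⁻¹ (fun c : ℂ => z + c • v) := by
    apply AntilipschitzWith.of_le_mul_dist
    intro a b
    have : 0 < ‖v‖ := norm_pos_iff.mpr hv
    rw [dist_add_left, dist_eq_norm (a • v), ← sub_smul, norm_smul, dist_eq_norm, NNReal.coe_inv, coe_nnnorm]
    field_simp
    rfl
  have h2 : UniformContinuous (fun c : ℂ => z + c • v) := by
    have : LipschitzWith ‖v‖₊ (fun c : ℂ => z + c • v) := by
      apply LipschitzWith.of_dist_le_mul
      intro a b
      rw [dist_add_left, dist_eq_norm (a • v), ← sub_smul, norm_smul, dist_eq_norm, coe_nnnorm, mul_comm]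
    exact this.uniformContinuous
  exact (h1.isUniformEmbedding h2).isEmbedding

theorem slice_image (D : Set E) (z v : E) :
    (fun c : ℂ => z + c • v) '' {c | z + c • v ∈ D} = D ∩ {w | ∃ c : ℂ, w = z + c • v} := by
  ext w
  constructor
  · rintro ⟨c, hc, rfl⟩
    exact ⟨hc, c, rfl⟩
  · rintro ⟨hw, c, rfl⟩
    exact ⟨c, hw, rfl⟩

theorem CConvex.slice {D : Set E} (hD : CConvex D) {z v : E}
    (hne : ∃ c : ℂ, z + c • v ∈ D) : IsSimplyConnected {c : ℂ | z + c • v ∈ D} := by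
  obtain ⟨c, hc⟩ := hne
  by_cases hv : v = 0
  · subst hv
    have h0 : {c : ℂ | z + c • (0:E) ∈ D} = univ := by
      ext d
      simpa using hc
    rw [h0]
    have : ContractibleSpace (univ : Set ℂ) := convex_univ.contractibleSpace univ_nonempty
    exact SimplyConnectedSpace.ofContractible _
  · have h1 := (hD z v hv ⟨_, hc, c, rfl⟩).2
    rw [← slice_image] at h1
    exact ((isEmbedding_line z hv).isSimplyConnected_image).mp h1

theorem Convex.cconvex {D : Set E} (hD : Convex ℝ D) : CConvex D := by
  rintro z v - hne
  have hl : Convex ℝ {w : E | ∃ c : ℂ, w = z + c • v} := by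
    rintro _ ⟨c, rfl⟩ _ ⟨d, rfl⟩ s t hs ht hst
    refine ⟨(s:ℂ) * c + (t:ℂ) * d, ?_⟩
    have h1 : z = s • z + t • z := by rw [← add_smul, hst, one_smul]
    rw [smul_add, smul_add, add_smul, mul_smul, mul_smul, Complex.coe_smul, Complex.coe_smul]
    nth_rw 3 [h1]
    abel
  have hc := hD.inter hl
  have := hc.contractibleSpace hne
  exact ⟨(hc.isPathConnected hne).isConnected, SimplyConnectedSpace.ofContractible _⟩

theorem slice_log {T : Type*} [TopologicalSpace T] {D : Set E} (hDo : IsOpen D) (hD : CConvex D)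
    {x y : T → E} (hx : Continuous x) (hy : Continuous y) (hxD : ∀ t, x t ∈ D) (hyD : ∀ t, y t ∈ D)
    {u : T → ℂ → ℂ} (hu : Continuous fun p : T × ℂ => u p.1 p.2)
    (hne : ∀ t c, x t + c • (y t - x t) ∈ D → u t c ≠ 0) :
    ∃ l : T → ℂ, Continuous l ∧ ∀ t, Complex.exp (l t) * u t 0 = u t 1 := by
  have hut : ∀ t, Continuous (u t) := fun t => hu.comp (by fun_prop : Continuous fun c : ℂ => (t, c))
  set F : T → Set ℂ := fun t => {c | x t + c • (y t - x t) ∈ D} with hF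
  have h0F : ∀ t, (0:ℂ) ∈ F t := fun t => by simpa [hF] using hxD t
  have h1F : ∀ t, (1:ℂ) ∈ F t := fun t => by simpa [hF] using hyD t
  have hFo : ∀ t, IsOpen (F t) := fun t => hDo.preimage (by fun_prop)
  have hFs : ∀ t, IsSimplyConnected (F t) := fun t => hD.slice ⟨0, h0F t⟩
  choose G hGc hGe using fun t => Complex.exists_continuousOn_eqOn_exp_comp (hFs t) (hFo t)
    (hut t).continuousOn (by rintro ⟨c, hc, h0⟩; exact hne t c hc h0)
  refine ⟨fun t => G t 1 - G t 0, ?_, ?_⟩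
  swap
  · intro t
    have e0 := hGe t (h0F t)
    have e1 := hGe t (h1F t)
    simp only [Function.comp] at e0 e1
    rw [Complex.exp_sub, e0, e1, div_mul_cancel₀]
    exact hne t 0 (h0F t)
  rw [continuous_iff_continuousAt]
  intro t
  obtain ⟨γ, hγ⟩ := (hFs t).isPathConnected.joinedIn 0 (h0F t) 1 (h1F t)
  have hK : IsCompact (range γ) := isCompact_range γ.continuous
  have hev : ∀ᶠ t' in 𝓝 t, ∀ c ∈ range γ, c ∈ F t' ∧ u t' c / u t c ∈ ball (1:ℂ) 1 := by
    apply hK.eventually_forall_of_forall_eventually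
    rintro _ ⟨s, rfl⟩
    have hs := hγ s
    refine Filter.Eventually.and ?_ ?_
    · have hcc : Continuous fun p : T × ℂ => x p.1 + p.2 • (y p.1 - x p.1) := by fun_prop
      exact hcc.continuousAt.eventually (hDo.mem_nhds hs)
    · have hcc : ContinuousAt (fun p : T × ℂ => u p.1 p.2 / u t p.2) (t, γ s) :=
        hu.continuousAt.div ((hut t).comp continuous_snd).continuousAt (hne t _ hs)
      apply hcc.eventually
      simp only [div_self (hne t _ hs)]
      exact ball_mem_nhds _ one_pos
  have hform : (fun t' => G t' 1 - G t' 0) =ᶠ[𝓝 t] fun t' => (G t 1 - G t 0) +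
      (Complex.log (u t' 1 / u t 1) - Complex.log (u t' 0 / u t 0)) := by
    filter_upwards [hev] with t' ht'
    have hI : IsPreconnected (univ : Set unitInterval) := isPreconnected_univ
    have hslit : ∀ s, u t' (γ s) / u t (γ s) ∈ Complex.slitPlane := fun s =>
      Complex.ball_one_subset_slitPlane (ht' _ ⟨s, rfl⟩).2
    have := exp_one_const hI (H := fun s => G t' (γ s) - G t (γ s) -
      Complex.log (u t' (γ s) / u t (γ s))) ?_ ?_ (mem_univ 1) (mem_univ 0)
    · simp only [γ.source, γ.target] at this
      linear_combination this
    · apply ContinuousOn.sub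
      · apply ContinuousOn.sub
        · exact (hGc t').comp γ.continuous.continuousOn fun s _ => (ht' _ ⟨s, rfl⟩).1
        · exact (hGc t).comp γ.continuous.continuousOn fun s _ => hγ s
      · refine ContinuousOn.clog ?_ fun s _ => hslit s
        exact (((hut t').comp γ.continuous).div ((hut t).comp γ.continuous)
          fun s => hne t _ (hγ s)).continuousOn
    · intro s _
      have e0 := hGe t (hγ s)
      have e1 := hGe t' (ht' _ ⟨s, rfl⟩).1
      simp only [Function.comp] at e0 e1
      have n0 := hne t _ (hγ s)
      have n1 := hne t' _ (ht' _ ⟨s, rfl⟩).1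
      rw [Complex.exp_sub, Complex.exp_sub, e0, e1, Complex.exp_log (div_ne_zero n1 n0)]
      field_simp
  have hcont : ∀ c ∈ F t, ContinuousAt (fun t' => Complex.log (u t' c / u t c)) t := by
    intro c hc
    have hcc : Continuous fun t' => u t' c := hu.comp (by fun_prop : Continuous fun t' : T => (t', c))
    refine ContinuousAt.clog (hcc.continuousAt.div_const _) ?_
    rw [div_self (hne t c hc)]
    exact Complex.one_mem_slitPlane
  refine ContinuousAt.congr ?_ hform.symm
  exact continuousAt_const.add ((hcont 1 (h1F t)).sub (hcont 0 (h0F t)))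

end SliceLog

section Bloch

theorem weak_bloch {G : ℂ → ℂ} (hG : DifferentiableOn ℂ G (ball (0:ℂ) 1))
    (homit : ∀ z ∈ ball (0:ℂ) 1, ∀ w ∈ ball (0:ℂ) 1, G z - G w ≠ 2 * Real.pi * Complex.I) :
    ‖deriv G 0‖ ≤ 128 * Real.pi := by
  by_contra! hbig
  have hpi := Real.pi_pos
  have hG' : DifferentiableOn ℂ (deriv G) (ball (0:ℂ) 1) := hG.deriv isOpen_ball
  have hsub : closedBall (0:ℂ) (1/2) ⊆ ball 0 1 := closedBall_subset_ball (by norm_num)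
  have hc : ContinuousOn (fun z => ‖deriv G z‖ * (1/2 - ‖z‖)) (closedBall (0:ℂ) (1/2)) :=
    (hG'.continuousOn.mono hsub).norm.mul (by fun_prop)
  obtain ⟨a, ha, hmax⟩ := (isCompact_closedBall (0:ℂ) (1/2)).exists_isMaxOn
    ⟨0, by simp⟩ hc
  set M := ‖deriv G a‖ * (1/2 - ‖a‖) with hM
  have hM0 : ‖deriv G 0‖ / 2 ≤ M := by
    have := hmax (a := (0:ℂ)) (by simp)
    simp only [mem_ofPred_eq, norm_zero, sub_zero] at this
    linarith
  have hMpos : 64 * Real.pi < M := by linarith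
  rw [mem_closedBall_zero_iff] at ha
  set r := (1/2 - ‖a‖) / 2 with hr
  have hr0 : 0 < r := by
    rcases ha.lt_or_eq with h | h
    · rw [hr]; linarith
    · rw [hM, h] at hMpos; norm_num at hMpos; linarith
  have hra : 1/2 - ‖a‖ = 2 * r := by rw [hr]; ring
  have hballs : closedBall a r ⊆ closedBall (0:ℂ) (1/2) := by
    intro z hz
    rw [mem_closedBall_iff_norm] at hz
    rw [mem_closedBall_zero_iff]
    have : ‖z‖ ≤ ‖z - a‖ + ‖a‖ := norm_le_norm_sub_add z a
    linarith
  have hGa : ‖deriv G a‖ = M / (2 * r) := by rw [hM, hra]; field_simp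
  have hbd : ∀ z ∈ closedBall a r, ‖deriv G z‖ ≤ M / r := by
    intro z hz
    have h1 := hmax (hballs hz)
    simp only [mem_ofPred_eq] at h1
    rw [mem_closedBall_iff_norm] at hz
    have h2 : ‖z‖ ≤ ‖z - a‖ + ‖a‖ := norm_le_norm_sub_add z a
    have h3 : r ≤ 1/2 - ‖z‖ := by linarith
    rw [le_div_iff₀ hr0]
    exact (mul_le_mul_of_nonneg_left h3 (norm_nonneg _)).trans h1
  have hMr : 0 < M := by nlinarith
  have hschw : ∀ z ∈ ball a r, ‖deriv G z - deriv G a‖ ≤ (2 * M / r) / r * ‖z - a‖ := by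
    intro z hz
    have := Complex.dist_le_div_mul_dist_of_mapsTo_ball (f := deriv G) (c := a) (R₁ := r)
      (R₂ := 2 * M / r) (hG'.mono ((ball_subset_closedBall.trans hballs).trans hsub)) (by
        intro w hw
        rw [mem_closedBall_iff_norm]
        refine (norm_sub_le _ _).trans ?_
        have h1 := hbd w (ball_subset_closedBall hw)
        have h2 := hbd a (by simp [hr0.le])
        rw [mul_div_assoc]; linarith) hz
    rwa [dist_eq_norm, dist_eq_norm] at this
  have hs : 0 < r / 8 := by positivity
  have hsm : closedBall a (r/8) ⊆ ball a r := closedBall_subset_ball (by linarith)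
  have hdiff : ∀ z ∈ ball a r, HasDerivAt G (deriv G z) z := fun z hz =>
    (hG.differentiableAt (isOpen_ball.mem_nhds
      (hsub (hballs (ball_subset_closedBall hz))))).hasDerivAt
  have hrem : ∀ z ∈ closedBall a (r/8), ‖(G z - deriv G a * z) - (G a - deriv G a * a)‖ ≤
      (M / (4 * r)) * ‖z - a‖ := by
    intro z hz
    apply (convex_closedBall a (r/8)).norm_image_sub_le_of_norm_hasDerivWithin_le
      (f := fun z => G z - deriv G a * z) (f' := fun z => deriv G z - deriv G a) ?_ ?_
      (mem_closedBall_self hs.le) hz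
    · intro w hw
      have := (hdiff w (hsm hw)).fun_sub ((hasDerivAt_id w).const_mul (deriv G a))
      simpa using this.hasDerivWithinAt
    · intro w hw
      refine (hschw w (hsm hw)).trans ?_
      rw [mem_closedBall_iff_norm] at hw
      calc _ ≤ (2 * M / r) / r * (r / 8) := by gcongr
        _ = _ := by field_simp; norm_num
  have hlow : ∀ z ∈ sphere a (r/8), M / 32 ≤ ‖G z - G a‖ := by
    intro z hz
    have h1 := hrem z (sphere_subset_closedBall hz)
    rw [mem_sphere_iff_norm] at hz
    have h2 : ‖deriv G a * (z - a)‖ = M / 16 := by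
      rw [norm_mul, hGa, hz]; field_simp; norm_num
    have h3 : ‖deriv G a * (z - a)‖ ≤ ‖G z - G a‖ + ‖(G z - deriv G a * z) - (G a - deriv G a * a)‖ := by
      have e : deriv G a * (z - a) = (G z - G a) - ((G z - deriv G a * z) - (G a - deriv G a * a)) := by ring
      rw [e]; exact norm_sub_le _ _
    rw [hz] at h1
    have h4 : M / (4 * r) * (r / 8) = M / 32 := by field_simp; norm_num
    linarith
  have hfreq : ∃ᶠ z in 𝓝 a, G z ≠ G a := by
    intro hcon
    have hne : deriv G a ≠ 0 := by
      rw [← norm_pos_iff, hGa]; positivity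
    have h1 : G =ᶠ[𝓝 a] fun _ => G a := by
      filter_upwards [hcon] with z hz using not_not.mp hz
    exact hne (by rw [h1.deriv_eq]; simp)
  have himg := DiffContOnCl.ball_subset_image_closedBall (f := G) (z₀ := a) (r := r/8) (ε := M/32) ?_ hs hlow hfreq
  · have hin : closedBall a (r/8) ⊆ ball 0 1 := (hsm.trans ball_subset_closedBall).trans (hballs.trans hsub)
    have hnorm : ‖(Real.pi : ℂ) * Complex.I‖ < M / 32 / 2 := by
      simp [abs_of_pos hpi]; linarith
    obtain ⟨z, hz, hz'⟩ := himg (show G a + Real.pi * Complex.I ∈ _ by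
      rw [mem_ball_iff_norm, add_sub_cancel_left]; exact hnorm)
    obtain ⟨w, hw, hw'⟩ := himg (show G a - Real.pi * Complex.I ∈ _ by
      rw [mem_ball_iff_norm, sub_sub_cancel_left, norm_neg]; exact hnorm)
    exact homit z (hin hz) w (hin hw) (by rw [hz', hw']; ring)
  · apply DifferentiableOn.diffContOnCl
    apply hG.mono
    exact (closure_ball_subset_closedBall.trans (hsm.trans ball_subset_closedBall)).trans
      (hballs.trans hsub)

/-- a continuous logarithm of a holomorphic function is holomorphic -/
theorem hasDerivAt_of_cont_log {G F : ℂ → ℂ} {U : Set ℂ} (hU : IsOpen U) (hG : ContinuousOn G U)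
    (hF : DifferentiableOn ℂ F U) (h : ∀ z ∈ U, Complex.exp (G z) = F z) {z : ℂ} (hz : z ∈ U) :
    HasDerivAt G (deriv F z / F z) z := by
  have hFz : ∀ w ∈ U, F w ≠ 0 := fun w hw => by rw [← h w hw]; exact Complex.exp_ne_zero _
  have hd := (hF.differentiableAt (hU.mem_nhds hz)).hasDerivAt
  have h1 : HasDerivAt (fun w => F w / F z) (deriv F z / F z) z := hd.div_const _
  have hsl : F z / F z ∈ Complex.slitPlane := by
    rw [div_self (hFz z hz)]; exact Complex.one_mem_slitPlane
  have h2 : HasDerivAt (fun w => Complex.log (F w / F z)) (deriv F z / F z) z := by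
    have := h1.clog hsl
    rwa [div_self (hFz z hz), div_one] at this
  have hev : ∀ᶠ w in 𝓝 z, w ∈ U ∧ F w / F z ∈ Complex.slitPlane :=
    (hU.eventually_mem hz).and (h1.continuousAt.eventually (Complex.isOpen_slitPlane.mem_nhds hsl))
  obtain ⟨ε, hε, hb⟩ := Metric.eventually_nhds_iff_ball.mp hev
  have hEq : G =ᶠ[𝓝 z] fun w => G z + Complex.log (F w / F z) := by
    filter_upwards [ball_mem_nhds z hε] with w hw
    have := exp_one_const (convex_ball z ε).isPreconnected
      (H := fun w => G w - G z - Complex.log (F w / F z)) ?_ ?_ hw (mem_ball_self hε)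
    · simp only [sub_self, div_self (hFz z hz), Complex.log_one] at this
      linear_combination this
    · apply ContinuousOn.sub ((hG.mono fun w hw => (hb w hw).1).sub continuousOn_const)
      refine ContinuousOn.clog ?_ fun s hs => (hb s hs).2
      exact ((hF.continuousOn.mono fun w hw => (hb w hw).1)).div_const _
    · intro w hw
      rw [Complex.exp_sub, Complex.exp_sub, h _ (hb w hw).1, h z hz,
        Complex.exp_log (div_ne_zero (hFz w (hb w hw).1) (hFz z hz))]
      exact div_self (div_ne_zero (hFz w (hb w hw).1) (hFz z hz))
  exact (h2.const_add _).congr_of_eventuallyEq hEq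

end Bloch

section Hyperplane

variable {E : Type*} [NormedAddCommGroup E] [NormedSpace ℂ E]

/-- complexification of a real functional -/
theorem exists_complexify (A : E →L[ℝ] ℝ) : ∃ h : E →L[ℂ] ℂ, ∀ v, (h v).re = A v := by
  refine ⟨StrongDual.extendRCLike (𝕜 := ℂ) A, fun v => ?_⟩
  rw [StrongDual.extendRCLike_apply]
  simp

theorem exists_neg_one {h : E →L[ℂ] ℂ} (hh : h ≠ 0) : ∃ n : E, h n = -1 := by
  obtain ⟨v, hv⟩ : ∃ v, h v ≠ 0 := by
    by_contra! hcon
    exact hh (ContinuousLinearMap.ext hcon)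
  exact ⟨(-(h v)⁻¹) • v, by rw [map_smul, smul_eq_mul]; field_simp⟩

/-- no continuous logarithm on a circle -/
theorem no_circle_log {R : ℝ} (hR : 0 < R) (l : sphere (0:ℂ) R → ℂ) (hl : Continuous l)
    (h : ∀ t, Complex.exp (l t) = (t : ℂ)) : False := by
  have hmem : ∀ θ : ℝ, (R : ℂ) * Complex.exp (θ * Complex.I) ∈ sphere (0:ℂ) R := fun θ => by
    simp [Complex.norm_exp_ofReal_mul_I, abs_of_pos hR]
  have hRC : (R : ℂ) ≠ 0 := by exact_mod_cast hR.ne'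
  have hc : Continuous fun θ : ℝ => (⟨_, hmem θ⟩ : sphere (0:ℂ) R) := by
    apply Continuous.subtype_mk
    fun_prop
  have := exp_one_const (isPreconnected_univ (α := ℝ))
    (H := fun θ => l ⟨_, hmem θ⟩ - θ * Complex.I - Complex.log R) ?_ ?_
    (mem_univ (0:ℝ)) (mem_univ (2 * Real.pi))
  · have e : (⟨_, hmem 0⟩ : sphere (0:ℂ) R) = ⟨_, hmem (2 * Real.pi)⟩ := by
      apply Subtype.ext
      simp [Complex.exp_two_pi_mul_I]
    rw [e] at this
    have h2 : (2 * Real.pi : ℂ) * Complex.I = 0 := by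
      push_cast at this
      linear_combination this
    simp [Real.pi_ne_zero] at h2
  · apply Continuous.continuousOn
    exact ((hl.comp hc).sub (by fun_prop)).sub continuous_const
  · intro θ _
    rw [Complex.exp_sub, Complex.exp_sub, h, Complex.exp_log hRC]
    simp only
    field_simp [Complex.exp_ne_zero]

theorem hyperplane_aux {D : Set E} (hDo : IsOpen D) (hD : CConvex D) {p : E} (hp : p ∉ D)
    {h : E →L[ℂ] ℂ} (hh : h ≠ 0)
    (hcone : ∀ (n e : E) (R : ℝ), h n = -1 → h e = 0 →
      ∃ ε : ℝ, 0 < ε ∧ ∀ t : ℂ, ‖t‖ ≤ R → p + (ε : ℂ) • (n + t • e) ∈ D) :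
    ∀ x ∈ D, h (x - p) ≠ 0 := by
  intro q hq he
  obtain ⟨n, hn⟩ := exists_neg_one hh
  obtain ⟨r, hr, hball⟩ := Metric.isOpen_iff.mp hDo q hq
  set e := q - p with hedef
  set R : ℝ := (‖n‖ + 1) / r with hRdef
  have hR : 0 < R := by positivity
  obtain ⟨ε, hε, hx⟩ := hcone n e R hn he
  have hεC : (ε : ℂ) ≠ 0 := by exact_mod_cast hε.ne'
  have ht0 : ∀ t : sphere (0:ℂ) R, (t : ℂ) ≠ 0 := fun t h0 => by
    have := t.2
    rw [mem_sphere_zero_iff_norm, h0, norm_zero] at this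
    exact hR.ne this
  have htn : ∀ t : sphere (0:ℂ) R, ‖(t : ℂ)‖ = R := fun t => mem_sphere_zero_iff_norm.mp t.2
  obtain ⟨l, hl, hl'⟩ := slice_log (T := sphere (0:ℂ) R) hDo hD
    (x := fun t => p + (ε : ℂ) • (n + (t : ℂ) • e)) (y := fun t => q + (t : ℂ)⁻¹ • n)
    (by fun_prop)
    (by
      have : Continuous fun t : sphere (0:ℂ) R => (t : ℂ)⁻¹ := continuous_subtype_val.inv₀ ht0
      fun_prop)
    (fun t => hx t (htn t).le)
    (fun t => hball (by
      rw [mem_ball_iff_norm, add_sub_cancel_left, norm_smul, norm_inv, htn, hRdef]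
      have : 0 < ‖n‖ + 1 := by positivity
      rw [inv_div, div_mul_eq_mul_div, div_lt_iff₀ this]
      nlinarith))
    (u := fun t c => (1 - c) * t * ε + c) (by fun_prop)
    (by
      intro t c hmem h0
      apply hp
      convert hmem using 1
      have e1 : q = p + e := by rw [hedef]; abel
      have e2 : p + (ε : ℂ) • (n + (t : ℂ) • e) + c • (q + (t : ℂ)⁻¹ • n -
          (p + (ε : ℂ) • (n + (t : ℂ) • e))) = p + ((1 - c) * t * ε + c) • (e + (t : ℂ)⁻¹ • n) := by
        rw [e1]
        have := ht0 t
        match_scalars <;> field_simp <;> ring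
      rw [e2, h0, zero_smul, add_zero])
  refine no_circle_log hR (fun t => - l t - Complex.log ε) (hl.neg.sub continuous_const) fun t => ?_
  have h1 := hl' t
  simp only [sub_zero, one_mul, add_zero, sub_self, zero_mul, zero_add] at h1
  rw [Complex.exp_sub, Complex.exp_neg, Complex.exp_log hεC]
  have := Complex.exp_ne_zero (l t)
  field_simp
  linear_combination -h1

/-- at a `C¹` boundary point, the complex tangent hyperplane misses `D`. -/
theorem exists_support {D : Set E} (hDo : IsOpen D) (hD : CConvex D) {p : E} (hp : p ∈ frontier D)
    {W : Set E} {ρ : E → ℝ} (hρ : IsLocalDefiningFn D p W ρ) :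
    ∃ h : E →L[ℂ] ℂ, ∀ x ∈ D, h (x - p) ≠ 0 := by
  obtain ⟨hWo, hpW, hC1, hne, hDW, hfW⟩ := hρ
  have hpD : p ∉ D := by
    rw [hDo.frontier_eq] at hp
    exact hp.2
  have hρp : ρ p = 0 := by
    have : p ∈ frontier D ∩ W := ⟨hp, hpW⟩
    rw [hfW] at this
    exact this.2
  have hdiff : HasFDerivAt ρ (fderiv ℝ ρ p) p :=
    ((hC1.differentiableOn (by norm_num)).differentiableAt (hWo.mem_nhds hpW)).hasFDerivAt
  set A := fderiv ℝ ρ p with hA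
  obtain ⟨h, hh⟩ := exists_complexify A
  refine ⟨h, hyperplane_aux hDo hD hpD ?_ ?_⟩
  · rintro rfl
    apply hne p hpW
    ext v
    simpa using (hh v).symm
  · intro n e R hn he
    set B := ‖n‖ + |R| * ‖e‖ + 1 with hB
    have hB0 : 0 < B := by positivity
    have h1 := hasFDerivAt_iff_isLittleO_nhds_zero.mp hdiff
    have h2 := h1.def (c := 1 / (2 * B)) (by positivity)
    have h3 : ∀ᶠ w in 𝓝 (0:E), p + w ∈ W := by
      have : Tendsto (fun w => p + w) (𝓝 (0:E)) (𝓝 p) := by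
        have : Continuous fun w : E => p + w := by fun_prop
        simpa using this.tendsto 0
      exact this.eventually (hWo.mem_nhds hpW)
    obtain ⟨δ, hδ, hball⟩ := Metric.eventually_nhds_iff_ball.mp (h2.and h3)
    refine ⟨δ / (2 * B), by positivity, fun t ht => ?_⟩
    set ε := δ / (2 * B) with hε
    have hε0 : 0 < ε := by positivity
    have hnorm : ‖(ε : ℂ) • (n + t • e)‖ ≤ ε * B := by
      rw [norm_smul, Complex.norm_real, Real.norm_of_nonneg hε0.le]
      gcongr
      refine (norm_add_le _ _).trans ?_
      rw [norm_smul, hB]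
      have : ‖t‖ * ‖e‖ ≤ |R| * ‖e‖ := by gcongr; exact ht.trans (le_abs_self R)
      linarith
    have hεB : ε * B = δ / 2 := by rw [hε]; field_simp
    obtain ⟨k1, k2⟩ := hball ((ε : ℂ) • (n + t • e)) (by
      rw [mem_ball_zero_iff]; linarith)
    have k3 : A ((ε : ℂ) • (n + t • e)) = - ε := by
      rw [← hh]
      simp [hn, he]
    rw [hρp, k3, sub_zero, sub_neg_eq_add, Real.norm_eq_abs] at k1
    have k4 : 1 / (2 * B) * ‖(ε : ℂ) • (n + t • e)‖ ≤ ε / 2 := by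
      calc _ ≤ 1 / (2 * B) * (ε * B) := by gcongr
        _ = _ := by field_simp
    have k5 : ρ (p + (ε : ℂ) • (n + t • e)) < 0 := by
      have := (abs_le.mp k1).2
      linarith
    have : p + (ε : ℂ) • (n + t • e) ∈ D ∩ W := by
      rw [hDW]; exact ⟨k2, k5⟩
    exact this.1

theorem cconvex_log {D : Set E} (hDo : IsOpen D) (hD : CConvex D) {p : E} {h : E →L[ℂ] ℂ}
    (hh : ∀ x ∈ D, h (x - p) ≠ 0) {z0 : E} (hz0 : z0 ∈ D) :
    ∃ l : E → ℂ, ContinuousOn l D ∧ (∀ x ∈ D, Complex.exp (l x) = h (x - p)) ∧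
      ∀ x ∈ D, ∀ y ∈ D, h x = h y → l x = l y := by
  classical
  obtain ⟨l, hl, hl'⟩ := slice_log (T := D) hDo hD (x := fun _ => z0) (y := fun t => (t : E))
    continuous_const continuous_subtype_val (fun _ => hz0) (fun t => t.2)
    (u := fun t c => h (z0 + c • ((t : E) - z0) - p)) (by fun_prop) (fun t c hm => hh _ hm)
  simp only [zero_smul, add_zero, one_smul, add_sub_cancel] at hl'
  set L : E → ℂ := fun w => if hw : w ∈ D then l ⟨w, hw⟩ + Complex.log (h (z0 - p)) else 0 with hL
  have hLc : ContinuousOn L D := by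
    rw [continuousOn_iff_continuous_domRestrict]
    have : D.domRestrict L = fun t => l t + Complex.log (h (z0 - p)) := by
      ext t
      simp [hL]
    rw [this]
    exact hl.add continuous_const
  have hLe : ∀ x ∈ D, Complex.exp (L x) = h (x - p) := by
    intro x hx
    have : L x = l ⟨x, hx⟩ + Complex.log (h (z0 - p)) := by simp [hL, hx]
    rw [this, Complex.exp_add, Complex.exp_log (hh _ hz0), hl']
  refine ⟨L, hLc, hLe, ?_⟩
  intro x hx y hy hxy
  rcases eq_or_ne x y with rfl | hne
  · rfl
  have hv : y - x ≠ 0 := sub_ne_zero.mpr hne.symm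
  have hxm : x ∈ D ∩ {w | ∃ c : ℂ, w = x + c • (y - x)} := ⟨hx, 0, by simp⟩
  have hym : y ∈ D ∩ {w | ∃ c : ℂ, w = x + c • (y - x)} := ⟨hy, 1, by simp⟩
  have hcon := (hD x (y - x) hv ⟨x, hxm⟩).1.isPreconnected
  have := exp_one_const hcon (H := fun w => L w - L x)
    ((hLc.mono inter_subset_left).sub continuousOn_const) ?_ hxm hym
  · linear_combination this
  · rintro w ⟨hw, c, rfl⟩
    rw [Complex.exp_sub, hLe _ hw, hLe _ hx]
    have : h (x + c • (y - x) - p) = h (x - p) := by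
      simp [map_sub, hxy]
    rw [this, div_self (hh x hx)]

end Hyperplane

section KobLower

variable {E : Type*} [NormedAddCommGroup E] [NormedSpace ℂ E]

theorem kob_lower_point {D : Set E} (hDo : IsOpen D) (hD : CConvex D) {p : E}
    {h : E →L[ℂ] ℂ} (hh : ∀ x ∈ D, h (x - p) ≠ 0) {z v : E} (hz : z ∈ D) {c : ℂ}
    (hp : p = z + c • v) : ‖v‖ ≤ 128 * Real.pi * dist z p * kobMetric D z v := by
  have hpi := Real.pi_pos
  have hzp : h (z - p) = - (c * h v) := by rw [hp]; simp
  have hne := hh z hz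
  have hc : c ≠ 0 := by rintro rfl; apply hne; rw [hzp]; simp
  have hv : h v ≠ 0 := by intro h0; apply hne; rw [hzp, h0]; simp
  obtain ⟨l, hlc, hle, hll⟩ := cconvex_log hDo hD hh hz
  have hdist : dist z p = ‖c‖ * ‖v‖ := by rw [hp, dist_self_add_right, norm_smul]
  have hc0 : 0 < ‖c‖ := norm_pos_iff.mpr hc
  have key : 1 / (128 * Real.pi * ‖c‖) ≤ kobMetric D z v := by
    refine le_kob hDo hz fun f ξ f' h1 h2 h3 h4 h5 => ?_
    have hξ : ξ ≠ 0 := by rintro rfl; apply hv; rw [← h5]; simp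
    have hF : DifferentiableOn ℂ (fun w => h (f w - p)) (ball (0:ℂ) 1) := by fun_prop
    have hder : HasDerivAt (fun w => h (f w - p)) (h f') 0 :=
      h.hasFDerivAt.comp_hasDerivAt (0:ℂ) (h4.sub_const p)
    have hGd : ∀ w ∈ ball (0:ℂ) 1, HasDerivAt (fun w => l (f w)) _ w := fun w hw =>
      hasDerivAt_of_cont_log isOpen_ball (hlc.comp h1.continuousOn h2) hF
      (fun z hz => hle _ (h2 hz)) hw
    have hb := weak_bloch (G := fun w => l (f w))
      (fun w hw => (hGd w hw).differentiableAt.differentiableWithinAt) (by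
        intro a ha b hb hab
        have e1 : Complex.exp (l (f a)) = Complex.exp (l (f b)) := by
          rw [sub_eq_iff_eq_add.mp hab, Complex.exp_add, Complex.exp_two_pi_mul_I, one_mul]
        rw [hle _ (h2 ha), hle _ (h2 hb)] at e1
        have e2 := hll _ (h2 ha) _ (h2 hb) (by
          simpa [map_sub] using e1)
        rw [e2, sub_self] at hab
        simp [Real.pi_ne_zero] at hab)
    rw [(hGd 0 (by simp)).deriv, hder.deriv, h3, hzp] at hb
    have e3 : h v = ξ * h f' := by rw [← h5]; simp
    have hf' : h f' ≠ 0 := by rintro h0; apply hv; rw [e3, h0, mul_zero]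
    have e4 : h f' / -(c * h v) = -(1 / (c * ξ)) := by rw [e3]; field_simp
    have hξ0 : 0 < ‖ξ‖ := norm_pos_iff.mpr hξ
    rw [e4, norm_neg, norm_div, norm_one, norm_mul, div_le_iff₀ (by positivity)] at hb
    rw [div_le_iff₀ (by positivity)]
    linarith
  rw [div_le_iff₀ (by positivity)] at key
  rw [hdist]
  have := mul_le_mul_of_nonneg_left key (norm_nonneg v)
  linarith

theorem frontier_line_nonempty {D : Set E} (hb : Bornology.IsBounded D) {z v : E} (hz : z ∈ D)
    (hv : v ≠ 0) : (frontier D ∩ {w | ∃ c : ℂ, w = z + c • v}).Nonempty := by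
  have hpre : IsPreconnected (range fun c : ℂ => z + c • v) :=
    isPreconnected_range (by fun_prop)
  by_contra hemp
  rw [not_nonempty_iff_eq_empty] at hemp
  have hsub : (range fun c : ℂ => z + c • v) ⊆ interior D ∪ (closure D)ᶜ := by
    rintro _ ⟨c, rfl⟩
    by_contra hcon
    simp only [mem_union, mem_compl_iff, not_or, not_not] at hcon
    have : z + c • v ∈ frontier D ∩ {w | ∃ c : ℂ, w = z + c • v} := ⟨⟨hcon.2, hcon.1⟩, c, rfl⟩
    rw [hemp] at this
    exact this
  have h1 : ((range fun c : ℂ => z + c • v) ∩ interior D).Nonempty := by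
    have hzr : z ∈ range fun c : ℂ => z + c • v := ⟨0, by simp⟩
    refine ⟨z, hzr, ?_⟩
    rcases hsub hzr with h | h
    · exact h
    · exact absurd (subset_closure hz) h
  obtain ⟨M, hM⟩ := hb.closure.exists_norm_le
  have h2 : ((range fun c : ℂ => z + c • v) ∩ (closure D)ᶜ).Nonempty := by
    have hv0 : 0 < ‖v‖ := norm_pos_iff.mpr hv
    set T : ℝ := (|M| + ‖z‖ + 1) / ‖v‖
    have hT : 0 ≤ T := by positivity
    refine ⟨z + (T : ℂ) • v, ⟨(T:ℂ), rfl⟩, fun hmem => ?_⟩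
    have := hM _ hmem
    have h3 : ‖(T : ℂ) • v‖ = |M| + ‖z‖ + 1 := by
      rw [norm_smul, Complex.norm_real, Real.norm_of_nonneg hT]
      exact div_mul_cancel₀ _ hv0.ne'
    have h4 : ‖(T : ℂ) • v‖ ≤ ‖z + (T : ℂ) • v‖ + ‖z‖ := by
      have := norm_sub_le (z + (T : ℂ) • v) z
      simpa using this
    linarith [le_abs_self M]
  obtain ⟨w, -, hw1, hw2⟩ := hpre _ _ isOpen_interior isClosed_closure.isOpen_compl hsub h1 h2
  exact hw2 (subset_closure (interior_subset hw1))

theorem kob_lower {D : Set E} (hDo : IsOpen D) (hD : CConvex D) (hb : Bornology.IsBounded D)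
    (hC1 : ∀ p ∈ frontier D, ∃ W ρ, IsLocalDefiningFn D p W ρ) {z v : E} (hz : z ∈ D)
    (hv : v ≠ 0) : ‖v‖ ≤ 128 * Real.pi * bdistDir D z v * kobMetric D z v := by
  have hpi := Real.pi_pos
  have hne := frontier_line_nonempty hb hz hv
  have key : ∀ p ∈ frontier D ∩ {w | ∃ c : ℂ, w = z + c • v},
      ‖v‖ ≤ 128 * Real.pi * dist z p * kobMetric D z v := by
    rintro p ⟨hp, c, hc⟩
    obtain ⟨W, ρ, hρ⟩ := hC1 p hp
    obtain ⟨h, hh⟩ := exists_support hDo hD hp hρ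
    exact kob_lower_point hDo hD hh hz hc
  have hv0 : 0 < ‖v‖ := norm_pos_iff.mpr hv
  have hk : 0 < kobMetric D z v := by
    refine lt_of_le_of_ne (kob_nonneg _ _ _) fun h0 => ?_
    obtain ⟨p, hp⟩ := hne
    have := key p hp
    rw [← h0] at this
    linarith
  have h2 : ‖v‖ / (128 * Real.pi * kobMetric D z v) ≤ bdistDir D z v := by
    refine (le_infDist hne).mpr fun p hp => ?_
    rw [div_le_iff₀ (by positivity)]
    linarith [key p hp]
  rw [div_le_iff₀ (by positivity)] at h2
  linarith

/-- combined local hypothesis -/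
structure LogDom (D : Set E) (C ν : ℝ) : Prop where
  isOpen : IsOpen D
  nonempty : D.Nonempty
  bounded : Bornology.IsBounded D
  C1 : ∀ p ∈ frontier D, ∃ W ρ, IsLocalDefiningFn D p W ρ
  Cpos : 0 < C
  νpos : 0 < ν
  lower : ∀ z ∈ D, ∀ v : E, ‖v‖ ≤ C / |Real.log (bdist D z)| ^ (1 + ν) * kobMetric D z v

theorem logDom_of {D : Set E} {C ν : ℝ} (hDo : IsOpen D) (hne : D.Nonempty) (hD : CConvex D)
    (hb : Bornology.IsBounded D) (hC1 : ∀ p ∈ frontier D, ∃ W ρ, IsLocalDefiningFn D p W ρ)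
    (hC : 0 < C) (hν : 0 < ν) (h : ∀ z ∈ D, ∀ v : E, v ≠ 0 →
      bdistDir D z v ≤ C / |Real.log (bdist D z)| ^ (1 + ν)) :
    LogDom D (128 * Real.pi * C) ν := by
  have hpi := Real.pi_pos
  refine ⟨hDo, hne, hb, hC1, by positivity, hν, fun z hz v => ?_⟩
  have hk := kob_nonneg D z v
  rcases eq_or_ne v 0 with rfl | hv
  · rw [norm_zero]; positivity
  · calc ‖v‖ ≤ 128 * Real.pi * bdistDir D z v * kobMetric D z v := kob_lower hDo hD hb hC1 hz hv
      _ ≤ 128 * Real.pi * (C / |Real.log (bdist D z)| ^ (1 + ν)) * kobMetric D z v := by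
        gcongr
        exact h z hz v hv
      _ = _ := by ring

theorem logDom_of_convex {D : Set E} (h : LogTypeConvex D)
    (hdini : ∀ x ∈ frontier D, DiniSmoothBoundaryPoint D x) : ∃ C ν, LogDom D C ν := by
  obtain ⟨C, ν, h1, h2, h3, h4, h5, h6, h7⟩ := h
  exact ⟨_, _, logDom_of h1 h2 h4.cconvex h3 (fun p hp => by
    obtain ⟨W, ρ, -, h, -⟩ := hdini p hp
    exact ⟨W, ρ, h⟩) h5 h6 h7⟩

theorem logDom_of_cconvex {D : Set E} (h : LogTypeCConvex D)
    (hdini : ∀ x ∈ frontier D, DiniSmoothBoundaryPoint D x) : ∃ C ν, LogDom D C ν := by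
  obtain ⟨h1, h2, h3, h4, C, ν, h5, h6, h7⟩ := h
  exact ⟨_, _, logDom_of h1 h2 h4 h3 (fun p hp => by
    obtain ⟨W, ρ, -, h, -⟩ := hdini p hp
    exact ⟨W, ρ, h⟩) h5 h6 h7⟩

end KobLower

set_option linter.unusedSectionVars false
section Cone

variable {E : Type*} [NormedAddCommGroup E] [NormedSpace ℂ E]

theorem ball_bdist_subset {D : Set E} {x : E} (hx : x ∈ D) : ball x (bdist D x) ⊆ D := by
  intro y hy
  by_contra hyD
  have hc : IsPreconnected (ball x (bdist D x)) := (convex_ball x _).isPreconnected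
  have hxb : x ∈ ball x (bdist D x) := mem_ball_self (lt_of_le_of_lt dist_nonneg hy)
  obtain ⟨w, hw, hwf⟩ : ∃ w ∈ ball x (bdist D x), w ∈ frontier D := by
    by_contra hcon
    push Not at hcon
    obtain ⟨w, -, hw1, hw2⟩ := hc (interior D) (closure D)ᶜ isOpen_interior isClosed_closure.isOpen_compl
      (fun w hw => by
        by_cases h1 : w ∈ closure D
        · left
          by_contra h2
          exact hcon w hw ⟨h1, h2⟩
        · exact Or.inr h1)
      ⟨x, hxb, by
        by_contra h2
        exact hcon x hxb ⟨subset_closure hx, h2⟩⟩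
      ⟨y, hy, fun h1 => hcon y hy ⟨h1, fun h2 => hyD (interior_subset h2)⟩⟩
    exact hw2 (subset_closure (interior_subset hw1))
  have := Metric.infDist_le_dist_of_mem (x := x) hwf
  rw [mem_ball, dist_comm] at hw
  exact absurd hw (not_lt.mpr this)

theorem le_bdist {D : Set E} (hD : IsOpen D) {x : E} {r : ℝ} (hb : ball x r ⊆ D)
    (hne : (frontier D).Nonempty) : r ≤ bdist D x := by
  unfold bdist
  rw [Metric.le_infDist hne]
  intro y hy
  by_contra h
  push Not at h
  rw [dist_comm] at h
  have hyD : y ∈ D := hb h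
  rw [hD.frontier_eq] at hy
  exact hy.2 hyD

theorem bdist_pos {D : Set E} (hD : IsOpen D) (hne : (frontier D).Nonempty) {x : E} (hx : x ∈ D) :
    0 < bdist D x := by
  obtain ⟨r, hr, hb⟩ := Metric.isOpen_iff.mp hD x hx
  exact lt_of_lt_of_le hr (le_bdist hD hb hne)

theorem bdist_le {D : Set E} {x p : E} (hp : p ∈ frontier D) : bdist D x ≤ dist x p :=
  Metric.infDist_le_dist_of_mem hp

theorem mem_frontier_inter {Ω U : Set E} (hΩ : IsOpen Ω) (hU : IsOpen U) {ξ : E}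
    (hξ : ξ ∈ frontier Ω) (hξU : ξ ∈ U) : ξ ∈ frontier (Ω ∩ U) := by
  rw [hΩ.frontier_eq] at hξ
  rw [(hΩ.inter hU).frontier_eq]
  refine ⟨?_, fun h => hξ.2 h.1⟩
  rw [inter_comm]
  exact hU.inter_closure ⟨hξU, hξ.1⟩

theorem interior_cone {D : Set E} {ξ : E} {W : Set E} {ρ : E → ℝ} (h : IsLocalDefiningFn D ξ W ρ) :
    ∃ (n : E) (c r s₀ : ℝ), 0 < c ∧ 0 < r ∧ 0 < s₀ ∧ ∀ x ∈ D, dist x ξ < r → ∀ s, 0 ≤ s → s ≤ s₀ →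
      ball (x + (s:ℂ) • n) (c * s) ⊆ D := by
  obtain ⟨hWo, hξW, hρ, hne, hD, -⟩ := h
  set A := fderiv ℝ ρ ξ with hA
  have hA0 : A ≠ 0 := hne ξ hξW
  obtain ⟨n, hn⟩ : ∃ n, A n = -1 := by
    obtain ⟨m, hm⟩ := ContinuousLinearMap.exists_ne_zero hA0
    refine ⟨(-(A m)⁻¹) • m, ?_⟩
    rw [map_smul]; simp [hm]
  have hn0 : 0 < ‖n‖ := by
    rw [norm_pos_iff]; rintro rfl; simp at hn
  have hApos : 0 < ‖A‖ := norm_pos_iff.mpr hA0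
  have hst : HasStrictFDerivAt ρ A ξ :=
    ((hρ.contDiffAt (hWo.mem_nhds hξW)).hasStrictFDerivAt (by norm_num))
  set c := 1 / (4 * ‖A‖) with hc
  have hcpos : 0 < c := by positivity
  set ε := 1 / (4 * (‖n‖ + c)) with hε
  have hεpos : 0 < ε := by positivity
  obtain ⟨u, hu, hlin⟩ := hst.approximates_deriv_on_nhds (c := ⟨ε, hεpos.le⟩) (Or.inr (by
    exact_mod_cast hεpos))
  obtain ⟨r, hr, hrb⟩ := Metric.mem_nhds_iff.mp (Filter.inter_mem hu (hWo.mem_nhds hξW))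
  refine ⟨n, c, r / 2, r / (2 * (‖n‖ + c)), hcpos, by positivity, by positivity, ?_⟩
  intro x hx hxξ s hs hs0 y hy
  have hs1 : s * (‖n‖ + c) ≤ r / 2 := by
    rw [le_div_iff₀ (by positivity)] at hs0; linarith
  set w := y - (x + (s:ℂ) • n) with hw
  have hwn : ‖w‖ < c * s := by rwa [mem_ball, dist_eq_norm] at hy
  have hyx : y - x = (s:ℂ) • n + w := by rw [hw]; abel
  have hsn : ‖(s:ℂ) • n‖ = s * ‖n‖ := by
    rw [norm_smul, Complex.norm_real, Real.norm_of_nonneg hs]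
  have hyxn : ‖y - x‖ ≤ s * (‖n‖ + c) := by
    rw [hyx]; have := norm_add_le ((s:ℂ) • n) w; rw [hsn] at this; linarith
  have hxb : x ∈ ball ξ r := by rw [mem_ball]; linarith
  have hyb : y ∈ ball ξ r := by
    rw [mem_ball]
    have := dist_triangle y x ξ
    rw [dist_eq_norm y x] at this; linarith
  have hl : ‖ρ y - ρ x - A (y - x)‖ ≤ ε * ‖y - x‖ := hlin y (hrb hyb).1 x (hrb hxb).1
  rw [Real.norm_eq_abs, hyx] at hl
  have hl2 := (abs_le.mp hl).2
  have hAy : A ((s:ℂ) • n + w) ≤ -s + ‖A‖ * ‖w‖ := by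
    have h1 : A ((s:ℂ) • n) = -s := by
      have : (s:ℂ) • n = s • n := by rw [Complex.coe_smul]
      rw [this, map_smul, hn]; simp
    have h2 := (le_abs_self _).trans (A.le_opNorm w)
    rw [map_add, h1]; linarith
  have hx2 : ρ x < 0 := by
    have : x ∈ D ∩ W := ⟨hx, (hrb hxb).2⟩
    rw [hD] at this; exact this.2
  have h3 : ‖A‖ * ‖w‖ ≤ s / 4 := by
    calc ‖A‖ * ‖w‖ ≤ ‖A‖ * (c * s) := by gcongr
      _ = s / 4 := by rw [hc]; field_simp
  have h4 : ε * ‖(s:ℂ) • n + w‖ ≤ s / 4 := by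
    rw [← hyx]
    calc ε * ‖y - x‖ ≤ ε * (s * (‖n‖ + c)) := by gcongr
      _ = s / 4 := by rw [hε]; field_simp
  have : y ∈ D ∩ W := by
    rw [hD]; exact ⟨(hrb hyb).2, by linarith⟩
  exact this.1

theorem kobDist_ball [FiniteDimensional ℂ E] {D : Set E} (hD : IsOpen D) {x y : E} {r : ℝ} (hr : 0 < r)
    (hb : ball x (2*r) ⊆ D) (hy : dist x y < r) : kobDist D x y ≤ 1 := by
  have : CompleteSpace E := FiniteDimensional.complete ℂ E
  have hac := isAC_segment x (y - x) (a := 0) (b := 1)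
  have hin : ∀ t ∈ Icc (0:ℝ) 1, ball (x + t • (y - x)) r ⊆ D := by
    intro t ht w hw
    apply hb
    rw [mem_ball] at hw ⊢
    have h1 := dist_triangle w (x + t • (y - x)) x
    have h2 : dist (x + t • (y - x)) x ≤ dist x y := by
      rw [dist_eq_norm, add_sub_cancel_left, norm_smul, dist_comm, dist_eq_norm, Real.norm_of_nonneg ht.1]
      exact mul_le_of_le_one_left (norm_nonneg _) ht.2
    linarith
  have hm : MapsTo (fun t : ℝ => x + t • (y - x)) (Icc 0 1) D :=
    fun t ht => hin t ht (mem_ball_self hr)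
  have h := kobDist_le_curve zero_le_one hac hm
  simp only [zero_smul, add_zero, one_smul, add_sub_cancel] at h
  refine h.trans ?_
  calc _ ≤ ∫ t in (0:ℝ)..1, (1:ℝ) := by
        apply intervalIntegral.integral_mono_on zero_le_one (kob_intervalIntegrable hD zero_le_one hac hm)
          (by simp)
        intro t ht
        refine (kob_le_div hr (hin t ht)).trans ?_
        rw [div_le_one hr, ← dist_eq_norm, dist_comm]; exact hy.le
    _ = 1 := by simp

theorem kobDist_upper [FiniteDimensional ℂ E] {Ω U : Set E} (hΩ : IsOpen Ω) (hc : IsPreconnected Ω)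
    (hU : IsOpen U) {ξ o : E} (hξ : ξ ∈ frontier Ω) (hξU : ξ ∈ U) (ho : o ∈ Ω)
    (hC1 : ∃ W ρ, IsLocalDefiningFn (Ω ∩ U) ξ W ρ) :
    ∃ A B r : ℝ, 0 < A ∧ 0 < r ∧ ball ξ r ⊆ U ∧ ∀ x ∈ Ω, dist x ξ < r →
      kobDist Ω x o ≤ B - A * Real.log (bdist (Ω ∩ U) x) := by
  have : CompleteSpace E := FiniteDimensional.complete ℂ E
  obtain ⟨W, ρ, hW⟩ := hC1
  obtain ⟨n, c, r, s₀, hcp, hr, hs, hcone⟩ := interior_cone hW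
  set D := Ω ∩ U with hDdef
  have hDo : IsOpen D := hΩ.inter hU
  have hξD : ξ ∈ frontier D := mem_frontier_inter hΩ hU hξ hξU
  obtain ⟨r', hr', hb'⟩ := Metric.isOpen_iff.mp hU ξ hξU
  set R := min (min r r') (min (c * s₀ / 4) 1) with hR
  have hRp : 0 < R := by positivity
  -- reference point
  obtain ⟨x₀, hx₀D, hx₀⟩ : ∃ x ∈ D, dist x ξ < R := by
    obtain ⟨x, hx, h⟩ := Metric.mem_closure_iff.mp hξD.1 R hRp
    exact ⟨x, hx, by rwa [dist_comm]⟩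
  have hR1 : R ≤ r := by simp [hR]
  have hR2 : R ≤ r' := by simp [hR]
  have hR3 : R ≤ c * s₀ / 4 := by simp [hR]
  have hR4 : R ≤ 1 := by simp [hR]
  set o' := x₀ + (s₀:ℂ) • n with ho'
  have ho'Ω : o' ∈ Ω := (hcone x₀ hx₀D (by linarith) s₀ hs.le le_rfl (mem_ball_self (by positivity))).1
  set c₁ := min (1/4) (c / (4 * (‖n‖ + 1))) with hc₁
  have hn1 : 0 < ‖n‖ + 1 := by positivity
  have hc₁p : 0 < c₁ := by positivity
  refine ⟨(‖n‖ + 1) / c₁, (‖n‖ + 1) / c₁ * Real.log (1 + s₀) + 1 + kobDist Ω o' o, R, by positivity, hRp,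
    (ball_subset_ball hR2).trans hb', ?_⟩
  intro x hxΩ hx
  have hxD : x ∈ D := ⟨hxΩ, hb' (by rw [mem_ball]; linarith)⟩
  set δ := bdist D x with hδ
  have hδp : 0 < δ := bdist_pos hDo ⟨ξ, hξD⟩ hxD
  have hδ1 : δ ≤ 1 := by
    have := bdist_le (x := x) hξD; linarith
  have hac : IsACWithDeriv (fun t : ℝ => x + t • n) (fun _ => n) 0 s₀ := isAC_segment x n
  have hin : ∀ t ∈ Icc (0:ℝ) s₀, ball (x + t • n) (c₁ * (δ + t)) ⊆ Ω := by
    intro t ht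
    have e : (t:ℂ) • n = t • n := Complex.coe_smul t n
    have ht0 := ht.1
    by_cases hct : t * (‖n‖ + 1) ≤ δ / 2
    · intro y hy
      refine (ball_bdist_subset hxD ?_ : y ∈ D).1
      rw [mem_ball] at hy ⊢
      have h1 := dist_triangle y (x + t • n) x
      have h2 : dist (x + t • n) x ≤ t * ‖n‖ := by
        rw [dist_eq_norm, add_sub_cancel_left, norm_smul, Real.norm_of_nonneg ht.1]
      have h3 : c₁ * (δ + t) ≤ 1/4 * (δ + t) := by gcongr; exact min_le_left _ _
      change dist y x < δ
      nlinarith [mul_nonneg ht.1 (norm_nonneg n)]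
    · push Not at hct
      have := hcone x hxD (by linarith) t ht.1 ht.2
      rw [e] at this
      refine (ball_subset_ball ?_).trans (this.trans inter_subset_left)
      calc c₁ * (δ + t) ≤ c / (4 * (‖n‖ + 1)) * (δ + t) := by gcongr; exact min_le_right _ _
        _ ≤ c / (4 * (‖n‖ + 1)) * (4 * (‖n‖ + 1) * t) := by
          gcongr; nlinarith [mul_nonneg ht.1 (norm_nonneg n)]
        _ = c * t := by field_simp
  have hpos : ∀ t ∈ Icc (0:ℝ) s₀, 0 < c₁ * (δ + t) := fun t ht => by
    have := ht.1; positivity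
  have hm : MapsTo (fun t : ℝ => x + t • n) (Icc 0 s₀) Ω :=
    fun t ht => hin t ht (mem_ball_self (hpos t ht))
  have h := kobDist_le_curve hs.le hac hm
  simp only [zero_smul, add_zero] at h
  have h2 : ∫ t in (0:ℝ)..s₀, kobMetric Ω (x + t • n) n ≤
      ∫ t in (0:ℝ)..s₀, (‖n‖ + 1) / c₁ * (δ + t)⁻¹ := by
    apply intervalIntegral.integral_mono_on hs.le (kob_intervalIntegrable hΩ hs.le hac hm)
    · apply ContinuousOn.intervalIntegrable_of_Icc hs.le
      apply ContinuousOn.mul continuousOn_const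
      apply ContinuousOn.inv₀ (by fun_prop)
      intro t ht; have := ht.1; positivity
    · intro t ht
      refine (kob_le_div (hpos t ht) (hin t ht)).trans ?_
      have h3 : 0 < δ + t := by have := ht.1; positivity
      rw [div_mul_eq_mul_div, ← div_eq_mul_inv, div_div, mul_comm c₁]
      gcongr; linarith
  have h3 : ∫ t in (0:ℝ)..s₀, (‖n‖ + 1) / c₁ * (δ + t)⁻¹ =
      (‖n‖ + 1) / c₁ * (Real.log (δ + s₀) - Real.log δ) := by
    rw [intervalIntegral.integral_const_mul]
    congr 1
    rw [intervalIntegral.integral_comp_add_left (fun u => u⁻¹), integral_inv_of_pos (by linarith) (by linarith),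
      Real.log_div (by linarith) (by linarith), add_zero]
  have h4 : Real.log (δ + s₀) ≤ Real.log (1 + s₀) := Real.log_le_log (by linarith) (by linarith)
  have e0 : (s₀:ℂ) • n = s₀ • n := Complex.coe_smul s₀ n
  have h5 : kobDist Ω (x + s₀ • n) o' ≤ 1 := by
    apply kobDist_ball hΩ (r := c * s₀ / 2) (by positivity)
    · rw [← e0]
      refine (ball_subset_ball (by linarith)).trans ((hcone x hxD (by linarith) s₀ hs.le le_rfl).trans
        inter_subset_left)
    · rw [ho', e0, dist_add_right]
      have := dist_triangle_right x x₀ ξ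
      linarith
  have hxs := hm (right_mem_Icc.mpr hs.le)
  have h6 := kobDist_triangle hΩ hc hxΩ hxs ho
  have h7 := kobDist_triangle hΩ hc hxs ho'Ω ho
  have h8 : (‖n‖ + 1) / c₁ * Real.log (δ + s₀) ≤ (‖n‖ + 1) / c₁ * Real.log (1 + s₀) := by
    gcongr
  simp only at h6 h7
  rw [h3] at h2
  linarith

end Cone

set_option linter.unusedSectionVars false

section Visibility

variable {E : Type*} [NormedAddCommGroup E] [NormedSpace ℂ E]

structure Vis (Ω D : Set E) (ξ o : E) (A B C ν r₀ : ℝ) : Prop where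
  isOpen : IsOpen Ω
  conn : IsPreconnected Ω
  ho : o ∈ Ω
  Apos : 0 < A
  Cpos : 0 < C
  νpos : 0 < ν
  rpos : 0 < r₀
  mem : ∀ x ∈ Ω, dist x ξ < r₀ → x ∈ D
  δpos : ∀ x ∈ Ω, dist x ξ < r₀ → 0 < bdist D x
  δlt : ∀ x ∈ Ω, dist x ξ < r₀ → bdist D x < 1
  upper : ∀ x ∈ Ω, dist x ξ < r₀ → kobDist Ω x o ≤ B - A * Real.log (bdist D x)
  lower : ∀ x ∈ Ω, dist x ξ < r₀ → ∀ v, ‖v‖ ≤ kobMetric Ω x v * (C * (-Real.log (bdist D x)) ^ (-(1+ν)))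

theorem vis_of_logDom [FiniteDimensional ℂ E] {Ω U : Set E} (hΩ : IsOpen Ω) (hc : IsPreconnected Ω)
    (hbd : Bornology.IsBounded Ω)
    (hU : IsOpen U) {ξ o : E} (hξ : ξ ∈ frontier Ω) (hξU : ξ ∈ U) (ho : o ∈ Ω) {C ν : ℝ}
    (hL : LogDom (Ω ∩ U) C ν) : ∃ A B C' r₀, r₀ ≤ 1 ∧ closedBall ξ r₀ ⊆ U ∧ Vis Ω (Ω ∩ U) ξ o A B C' ν r₀ := by
  have hξD : ξ ∈ frontier (Ω ∩ U) := mem_frontier_inter hΩ hU hξ hξU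
  obtain ⟨A, B, r, hA, hr, hrU, hup⟩ := kobDist_upper hΩ hc hU hξ hξU ho (hL.C1 ξ hξD)
  obtain ⟨M, hM⟩ := hbd.subset_ball ξ
  set r₀ := min (r/2) 1 with hr₀
  have hr₀p : 0 < r₀ := by positivity
  have h1 : r₀ ≤ r/2 := min_le_left _ _
  have h2 : r₀ ≤ 1 := min_le_right _ _
  set M' := max (M + 1) 1 with hM'
  have hM'1 : 1 ≤ M' := le_max_right _ _
  have hM'2 : M + 1 ≤ M' := le_max_left _ _
  have hCp := hL.Cpos
  refine ⟨A, B, C * (M' / r₀), r₀, h2, ?_, hΩ, hc, ho, hA, by positivity, hL.νpos, hr₀p, ?_, ?_, ?_, ?_, ?_⟩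
  · exact (closedBall_subset_ball (by linarith)).trans hrU
  · exact fun x hx hd => ⟨hx, hrU (by rw [mem_ball]; linarith)⟩
  · intro x hx hd
    exact bdist_pos hL.isOpen ⟨ξ, hξD⟩ ⟨hx, hrU (by rw [mem_ball]; linarith)⟩
  · intro x hx hd
    exact (bdist_le hξD).trans_lt (by linarith)
  · intro x hx hd
    exact hup x hx (by linarith)
  · intro x hx hd v
    have hxD : x ∈ Ω ∩ U := ⟨hx, hrU (by rw [mem_ball]; linarith)⟩
    have hδ := bdist_pos hL.isOpen ⟨ξ, hξD⟩ hxD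
    have hδ1 : bdist (Ω ∩ U) x < 1 := (bdist_le hξD).trans_lt (by linarith)
    have hlog := Real.log_neg hδ hδ1
    have k1 := hL.lower x hxD v
    have k2 : kobMetric (Ω ∩ U) x v ≤ kobMetric Ω x v / (r₀ / M') := by
      refine kob_localize_weak hΩ (fun y hy => ?_) hr₀p (by linarith) hx (fun y hy => hrU ?_)
      · have := hM hy
        rw [mem_ball] at this
        have := dist_triangle_right y x ξ
        linarith
      · rw [mem_ball] at hy ⊢
        have := dist_triangle y x ξ
        linarith
    rw [abs_of_neg hlog] at k1
    have hp : 0 < (-Real.log (bdist (Ω ∩ U) x)) ^ (1 + ν) := Real.rpow_pos_of_pos (by linarith) _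
    calc ‖v‖ ≤ _ := k1
      _ ≤ C / (-Real.log (bdist (Ω ∩ U) x)) ^ (1 + ν) * (kobMetric Ω x v / (r₀ / M')) := by gcongr
      _ = _ := by
        rw [Real.rpow_neg (by linarith)]; field_simp

variable {Ω D : Set E} {ξ o : E} {A B C ν r₀ : ℝ}

theorem short_aux [FiniteDimensional ℂ E] (hΩ : IsOpen Ω) {σ g : ℝ → E} {a b : ℝ} (hab : a ≤ b)
    (hac : IsACWithDeriv σ g a b) (hm : MapsTo σ (Icc a b) Ω) {ℓ ψ Ψ : ℝ → ℝ} {c m M : ℝ}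
    (hℓ : ∀ t ∈ Icc a b, ℓ t = c + ∫ s in a..t, kobMetric Ω (σ s) (g s))
    (hrange : ∀ t ∈ Icc a b, ℓ t ∈ Icc m M)
    (hΨ : ∀ x ∈ Icc m M, HasDerivAt Ψ (ψ x) x) (hψ : ContinuousOn ψ (Icc m M))
    (hg : ∀ t ∈ Icc a b, ‖g t‖ ≤ kobMetric Ω (σ t) (g t) * ψ (ℓ t)) :
    dist (σ a) (σ b) ≤ Ψ (ℓ b) - Ψ (ℓ a) := by
  obtain ⟨h1, h2⟩ := ac_chain hab (kob_intervalIntegrable hΩ hab hac hm) hℓ hrange hΨ hψ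
  rw [← h2, dist_comm, dist_eq_norm, hac.2 b (right_mem_Icc.mpr hab), add_sub_cancel_left]
  refine (intervalIntegral.norm_integral_le_integral_norm hab).trans ?_
  exact intervalIntegral.integral_mono_on hab hac.1.norm h1 hg

theorem Vis.short [FiniteDimensional ℂ E] (hV : Vis Ω D ξ o A B C ν r₀) {ε : ℝ} (hε : 0 < ε) :
    ∃ η > 0, ∀ (a b : ℝ) (σ g : ℝ → E), a ≤ b → IsACWithDeriv σ g a b → MapsTo σ (Icc a b) Ω →
      ∫ t in a..b, kobMetric Ω (σ t) (g t) ≤ kobDist Ω (σ a) (σ b) + 1 →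
      (∀ t ∈ Icc a b, dist (σ t) ξ < r₀) → (∀ t ∈ Icc a b, bdist D (σ t) < η) →
      dist (σ a) (σ b) < ε := by
  have hA := hV.Apos
  have hC := hV.Cpos
  have hν := hV.νpos
  set β := 1 / (4 * A) with hβ
  have hβp : 0 < β := by positivity
  obtain ⟨α, hα, hαε⟩ : ∃ α > 0, 2 * (C * α ^ (-ν) / (β * ν)) < ε := by
    have h1 : Tendsto (fun α : ℝ => 2 * (C * α ^ (-ν) / (β * ν))) atTop (𝓝 (2 * (C * 0 / (β * ν)))) :=
      ((tendsto_rpow_neg_atTop hν).const_mul C).div_const _ |>.const_mul 2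
    rw [mul_zero, zero_div, mul_zero] at h1
    obtain ⟨α, h2, h3⟩ := ((h1.eventually (gt_mem_nhds hε)).and (eventually_gt_atTop 0)).exists
    exact ⟨α, h3, h2⟩
  set L₀ := 2 * α + (1 + B) / A with hL₀
  refine ⟨Real.exp (-L₀), Real.exp_pos _, ?_⟩
  intro a b σ g hab hac hm hlen hr hη
  have hI := kob_intervalIntegrable hV.isOpen hab hac hm
  obtain ⟨s₀, hs₀, hs₀min⟩ : ∃ s₀ ∈ Icc a b, ∀ t ∈ Icc a b, kobDist Ω (σ s₀) o ≤ kobDist Ω (σ t) o + 1 := by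
    have hne : ((fun t => kobDist Ω (σ t) o) '' Icc a b).Nonempty := ⟨_, a, left_mem_Icc.mpr hab, rfl⟩
    have hbb : BddBelow ((fun t => kobDist Ω (σ t) o) '' Icc a b) :=
      ⟨0, by rintro _ ⟨t, -, rfl⟩; exact kobDist_nonneg _ _ _⟩
    obtain ⟨_, ⟨s₀, hs, rfl⟩, h⟩ := exists_lt_of_csInf_lt hne
      (lt_add_of_pos_right (sInf ((fun t => kobDist Ω (σ t) o) '' Icc a b)) one_pos)
    refine ⟨s₀, hs, fun t ht => ?_⟩
    have := csInf_le hbb ⟨t, ht, rfl⟩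
    linarith
  set k : ℝ → ℝ := fun t => kobMetric Ω (σ t) (g t) with hk
  have hk0 : ∀ t, 0 ≤ k t := fun t => kob_nonneg _ _ _
  have hsub : ∀ {s t : ℝ}, a ≤ s → s ≤ t → t ≤ b → IntervalIntegrable k volume s t := by
    intro s t h1 h2 h3
    exact hI.mono_set (by rw [uIcc_of_le hab, uIcc_of_le h2]; exact Icc_subset_Icc h1 h3)
  -- key estimate
  have key : ∀ t ∈ Icc a b, ∀ Δ : ℝ, Δ ≤ kobDist Ω (σ t) (σ s₀) + 1 → 
      α + β * Δ ≤ - Real.log (bdist D (σ t)) := by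
    intro t ht Δ hΔ
    have h1 := kobDist_triangle hV.isOpen hV.conn (hm ht) hV.ho (hm hs₀)
    rw [kobDist_symm hV.isOpen o] at h1
    have h2 := hs₀min t ht
    have h3 := hV.upper (σ t) (hm ht) (hr t ht)
    have h4 : Real.log (bdist D (σ t)) ≤ - L₀ := by
      rw [← Real.log_exp (-L₀)]
      exact Real.log_le_log (hV.δpos _ (hm ht) (hr t ht)) (hη t ht).le
    have h5 : Δ / 2 - 1 - B ≤ A * (- Real.log (bdist D (σ t))) := by linarith
    have h6 : (Δ / 2 - 1 - B) / A ≤ - Real.log (bdist D (σ t)) := by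
      rw [div_le_iff₀ hA]; linarith
    have h7 : α + β * Δ = (1/2) * L₀ + (1/2) * ((Δ / 2 - 1 - B) / A) := by
      rw [hL₀, hβ]; field_simp; ring
    linarith
  have hgb : ∀ t ∈ Icc a b, ∀ x : ℝ, 0 < x → x ≤ - Real.log (bdist D (σ t)) →
      ‖g t‖ ≤ k t * (C * x ^ (-(1+ν))) := by
    intro t ht x hx hxl
    refine (hV.lower _ (hm ht) (hr t ht) (g t)).trans ?_
    refine mul_le_mul_of_nonneg_left (mul_le_mul_of_nonneg_left ?_ hC.le) (hk0 t)
    exact Real.rpow_le_rpow_of_nonpos hx hxl (by linarith)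
  have hright : dist (σ s₀) (σ b) ≤ C * α ^ (-ν) / (β * ν) := by
    have hac' := hac.mono hs₀.2 hs₀.1 le_rfl
    have hm' : MapsTo σ (Icc s₀ b) Ω := hm.mono_left (Icc_subset_Icc_left hs₀.1)
    have hp : ∀ x ∈ Icc 0 (∫ s in s₀..b, k s), 0 < α + β * x := fun x hx => by
      have := hx.1; positivity
    have := short_aux hV.isOpen hs₀.2 hac' hm' (ℓ := fun t => ∫ s in s₀..t, k s)
      (Ψ := fun x => - (C * (α + β * x) ^ (-ν) / (β * ν))) (ψ := fun x => C * (α + β * x) ^ (-(1+ν))) 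
      (c := 0) (m := 0) (M := ∫ s in s₀..b, k s) (fun t ht => (zero_add _).symm) ?_ ?_ ?_ ?_
    · simp only [intervalIntegral.integral_same, mul_zero, add_zero] at this
      have h2 : 0 ≤ C * (α + β * ∫ s in s₀..b, k s) ^ (-ν) / (β * ν) := by
        have := hp _ (right_mem_Icc.mpr (intervalIntegral.integral_nonneg hs₀.2 fun t _ => hk0 t))
        positivity
      linarith
    · intro t ht
      refine ⟨intervalIntegral.integral_nonneg ht.1 fun t _ => hk0 t, ?_⟩
      rw [← intervalIntegral.integral_add_adjacent_intervals (hsub hs₀.1 ht.1 ht.2)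
        (hsub (hs₀.1.trans ht.1) ht.2 le_rfl)]
      linarith [intervalIntegral.integral_nonneg ht.2 (f := k) (μ := volume) fun t _ => hk0 t]
    · intro x hx
      have h0 := hp x hx
      have h1 : HasDerivAt (fun x : ℝ => α + β * x) β x := by
        simpa using ((hasDerivAt_id x).const_mul β).const_add α
      have h2 := (((h1.rpow_const (p := -ν) (Or.inl h0.ne')).const_mul C).div_const (β * ν)).fun_neg
      refine h2.congr_deriv ?_
      rw [show -(1 + ν) = -ν - 1 by ring]
      field_simp
    · apply ContinuousOn.mul continuousOn_const
      apply ContinuousOn.rpow_const (by fun_prop)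
      intro x hx; exact Or.inl (hp x hx).ne'
    · intro t ht
      have ht' : t ∈ Icc a b := ⟨hs₀.1.trans ht.1, ht.2⟩
      have h1 := near_min_sub hV.isOpen hV.conn hac hm hlen hs₀.1 ht.1 ht.2
      rw [kobDist_symm hV.isOpen] at h1
      refine hgb t ht' _ ?_ (key t ht' _ h1)
      have := intervalIntegral.integral_nonneg ht.1 (f := k) (μ := volume) fun t _ => hk0 t
      positivity
  have hleft : dist (σ a) (σ s₀) ≤ C * α ^ (-ν) / (β * ν) := by
    have hac' := hac.mono hs₀.1 le_rfl hs₀.2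
    have hm' : MapsTo σ (Icc a s₀) Ω := hm.mono_left (Icc_subset_Icc_right hs₀.2)
    have hadd : ∀ t ∈ Icc a s₀, (∫ s in a..t, k s) + ∫ s in t..s₀, k s = ∫ s in a..s₀, k s := fun t ht =>
      intervalIntegral.integral_add_adjacent_intervals (hsub le_rfl ht.1 (ht.2.trans hs₀.2))
        (hsub ht.1 ht.2 hs₀.2)
    have hp : ∀ x ∈ Icc (-(∫ s in a..s₀, k s)) 0, 0 < α - β * x := fun x hx => by
      have := hx.2; nlinarith
    have := short_aux hV.isOpen hs₀.1 hac' hm' (ℓ := fun t => - ∫ s in t..s₀, k s)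
      (Ψ := fun x => (C * (α - β * x) ^ (-ν) / (β * ν))) (ψ := fun x => C * (α - β * x) ^ (-(1+ν))) 
      (c := -(∫ s in a..s₀, k s)) (m := -(∫ s in a..s₀, k s)) (M := 0) (fun t ht => by
        have := hadd t ht; linarith) ?_ ?_ ?_ ?_
    · simp only [intervalIntegral.integral_same, mul_zero, neg_zero, sub_zero] at this
      have h2 : 0 ≤ C * (α - β * -∫ s in a..s₀, k s) ^ (-ν) / (β * ν) := by
        have := hp _ (left_mem_Icc.mpr (neg_nonpos.mpr
          (intervalIntegral.integral_nonneg hs₀.1 fun t _ => hk0 t)))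
        positivity
      linarith
    · intro t ht
      have h1 := intervalIntegral.integral_nonneg ht.2 (f := k) (μ := volume) fun t _ => hk0 t
      have h2 := intervalIntegral.integral_nonneg ht.1 (f := k) (μ := volume) fun t _ => hk0 t
      have := hadd t ht
      exact ⟨by linarith, by linarith⟩
    · intro x hx
      have h0 := hp x hx
      have h1 : HasDerivAt (fun x : ℝ => α - β * x) (-β) x := by
        simpa using ((hasDerivAt_id x).const_mul β).const_sub α
      have h2 := (((h1.rpow_const (p := -ν) (Or.inl h0.ne')).const_mul C).div_const (β * ν))
      refine h2.congr_deriv ?_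
      rw [show -(1 + ν) = -ν - 1 by ring]
      field_simp
    · apply ContinuousOn.mul continuousOn_const
      apply ContinuousOn.rpow_const (by fun_prop)
      intro x hx; exact Or.inl (hp x hx).ne'
    · intro t ht
      have ht' : t ∈ Icc a b := ⟨ht.1, ht.2.trans hs₀.2⟩
      have h1 := near_min_sub hV.isOpen hV.conn hac hm hlen ht.1 ht.2 hs₀.2
      have h3 := key t ht' _ h1
      have := intervalIntegral.integral_nonneg ht.2 (f := k) (μ := volume) fun t _ => hk0 t
      refine hgb t ht' _ ?_ ?_
      · have := mul_nonneg hβp.le this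
        linarith
      · simp only [hk]; linarith
  have := dist_triangle (σ a) (σ s₀) (σ b)
  linarith

theorem Vis.visible [FiniteDimensional ℂ E] (hV : Vis Ω D ξ o A B C ν r₀) {r₁ r₂ : ℝ} (h12 : r₁ < r₂)
    (h20 : r₂ ≤ r₀) :
    ∃ η > 0, ∀ (a b : ℝ) (σ g : ℝ → E), a ≤ b → IsACWithDeriv σ g a b → MapsTo σ (Icc a b) Ω →
      ∫ t in a..b, kobMetric Ω (σ t) (g t) ≤ kobDist Ω (σ a) (σ b) + 1 →
      dist (σ a) ξ ≤ r₁ → r₂ ≤ dist (σ b) ξ →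
      ∃ t ∈ Icc a b, (∀ s ∈ Icc a t, dist (σ s) ξ < r₂) ∧ η ≤ bdist D (σ t) := by
  obtain ⟨η, hη, h⟩ := hV.short (ε := (r₂ - r₁) / 2) (by linarith)
  refine ⟨η, hη, ?_⟩
  intro a b σ g hab hac hm hlen ha hb
  set r' := (r₁ + r₂) / 2 with hr'
  have hcont : ContinuousOn (fun t => dist (σ t) ξ) (Icc a b) :=
    (continuous_id.dist continuous_const : Continuous fun x : E => dist x ξ).comp_continuousOn (hac.continuousOn hab)
  have hS : IsCompact (Icc a b ∩ (fun t => dist (σ t) ξ) ⁻¹' {r'}) :=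
    isCompact_Icc.of_isClosed_subset (hcont.preimage_isClosed_of_isClosed isClosed_Icc isClosed_singleton)
      inter_subset_left
  have hSne : (Icc a b ∩ (fun t => dist (σ t) ξ) ⁻¹' {r'}).Nonempty := by
    obtain ⟨t, ht, h⟩ := intermediate_value_Icc hab hcont (show r' ∈ Icc _ _ from ⟨by linarith, by linarith⟩)
    exact ⟨t, ht, h⟩
  obtain ⟨c, ⟨hc, hcr⟩, hleast⟩ := hS.exists_isLeast hSne
  have hcr : dist (σ c) ξ = r' := hcr
  have hle : ∀ t ∈ Icc a c, dist (σ t) ξ ≤ r' := by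
    intro t ht
    by_contra hcon
    push Not at hcon
    obtain ⟨u, hu, hur⟩ := intermediate_value_Icc ht.1
      (hcont.mono (Icc_subset_Icc_right (ht.2.trans hc.2))) (show r' ∈ Icc _ _ from ⟨by linarith, hcon.le⟩)
    have h1 := hleast ⟨⟨hu.1, hu.2.trans (ht.2.trans hc.2)⟩, hur⟩
    have : t = c := le_antisymm ht.2 (h1.trans hu.2)
    rw [this] at hcon; linarith
  by_contra hcon
  push Not at hcon
  have := h a c σ g hc.1 (hac.mono hc.1 le_rfl hc.2) (hm.mono_left (Icc_subset_Icc_right hc.2))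
    (near_min_sub hV.isOpen hV.conn hac hm hlen le_rfl hc.1 hc.2)
    (fun t ht => by have := hle t ht; linarith)
    (fun t ht => hcon t ⟨ht.1, ht.2.trans hc.2⟩ fun s hs => by
      have := hle s ⟨hs.1, hs.2.trans ht.2⟩; linarith)
  have h2 := dist_triangle (σ c) (σ a) ξ
  rw [dist_comm (σ c) (σ a)] at h2
  linarith

end Visibility

set_option linter.unusedSectionVars false

section ClaimLower

variable {E : Type*} [NormedAddCommGroup E] [NormedSpace ℂ E]
variable {Ω D : Set E} {ξ o : E} {A B C ν r₀ : ℝ}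

theorem Vis.gromov [FiniteDimensional ℂ E] (hV : Vis Ω D ξ o A B C ν r₀) {r₁ r₂ : ℝ} (h12 : r₁ < r₂)
    (h20 : r₂ ≤ r₀) : ∃ H, ∀ p ∈ Ω, ∀ q ∈ Ω, dist p ξ ≤ r₁ → r₂ ≤ dist q ξ →
      kobDist Ω p o + kobDist Ω q o - H ≤ kobDist Ω p q := by
  obtain ⟨η, hη, h⟩ := hV.visible h12 h20
  refine ⟨2 * (B - A * Real.log η) + 1, ?_⟩
  intro p hp q hq hpr hqr
  obtain ⟨a, b, σ, g, hab, hac, hm, rfl, rfl, hlen⟩ := exists_near_min hV.isOpen hV.conn hp hq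
  obtain ⟨t, ht, htr, htη⟩ := h a b σ g hab hac hm hlen hpr hqr
  have h1 := hV.upper _ (hm ht) ((htr t (right_mem_Icc.mpr ht.1)).trans_le h20)
  have h2 : A * Real.log η ≤ A * Real.log (bdist D (σ t)) :=
    mul_le_mul_of_nonneg_left (Real.log_le_log hη htη) hV.Apos.le
  have hI := kob_intervalIntegrable hV.isOpen hab hac hm
  have h3 := kobDist_le_curve ht.1 (hac.mono ht.1 le_rfl ht.2) (hm.mono_left (Icc_subset_Icc_right ht.2))
  have h4 := kobDist_le_curve ht.2 (hac.mono ht.2 ht.1 le_rfl) (hm.mono_left (Icc_subset_Icc_left ht.1))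
  have h5 := intervalIntegral.integral_add_adjacent_intervals
    (hI.mono_set (by rw [uIcc_of_le hab, uIcc_of_le ht.1]; exact Icc_subset_Icc_right ht.2) :
      IntervalIntegrable _ volume a t)
    (hI.mono_set (by rw [uIcc_of_le hab, uIcc_of_le ht.2]; exact Icc_subset_Icc_left ht.1) :
      IntervalIntegrable _ volume t b)
  have h6 := kobDist_triangle hV.isOpen hV.conn hp (hm ht) hV.ho
  have h7 := kobDist_triangle hV.isOpen hV.conn hq (hm ht) hV.ho
  rw [kobDist_symm hV.isOpen (σ b) (σ t)] at h7
  linarith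

theorem weak_loc {Ω U : Set E} (hΩ : IsOpen Ω) (hbd : Bornology.IsBounded Ω) {ξ : E} {r : ℝ} (hr : 0 < r)
    (hU : closedBall ξ r ⊆ U) : ∃ Q > 0, ∀ x ∈ Ω, dist x ξ ≤ r / 2 → ∀ v,
      kobMetric (Ω ∩ U) x v ≤ Q * kobMetric Ω x v := by
  obtain ⟨M, hM⟩ := hbd.subset_ball ξ
  set M' := max (M + r) r with hM'
  have hM'1 : r ≤ M' := le_max_right _ _
  have hM'2 : M + r ≤ M' := le_max_left _ _
  have hM'p : 0 < M' := by linarith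
  refine ⟨M' / (r/2), by positivity, fun x hx hd v => ?_⟩
  refine (kob_localize_weak hΩ (fun y hy => ?_) (half_pos hr) (by linarith) hx (fun y hy => hU ?_)).trans_eq
    (b := kobMetric Ω x v / (r / 2 / M')) ?_
  · have := hM hy
    rw [mem_ball] at this
    have := dist_triangle_right y x ξ
    linarith
  · rw [mem_ball] at hy
    rw [mem_closedBall]
    have := dist_triangle y x ξ
    linarith
  · field_simp

theorem schwarz_halfplane {F : ℂ → ℂ} (hF : DifferentiableOn ℂ F (ball 0 1))
    (hpos : ∀ w ∈ ball (0:ℂ) 1, 0 < (F w).re) : ‖deriv F 0‖ ≤ 2 * (F 0).re := by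
  set a := F 0 with ha
  have h0 : (0:ℂ) ∈ ball (0:ℂ) 1 := mem_ball_self one_pos
  have hapos : 0 < a.re := hpos 0 h0
  set b := (starRingEnd ℂ) a with hb
  have hne : ∀ w ∈ ball (0:ℂ) 1, F w + b ≠ 0 := by
    intro w hw h
    have := congrArg Complex.re h
    simp [hb] at this
    linarith [hpos w hw]
  set G : ℂ → ℂ := fun w => (F w - a) / (F w + b) with hG
  have hGd : DifferentiableOn ℂ G (ball 0 1) :=
    (hF.sub_const a).div (hF.add_const b) hne
  have hG0 : G 0 = 0 := by simp [hG, ha]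
  have hmaps : MapsTo G (ball 0 1) (ball (G 0) 1) := by
    intro w hw
    rw [hG0, mem_ball_zero_iff, hG]
    simp only
    rw [norm_div, div_lt_one (norm_pos_iff.mpr (hne w hw))]
    rw [← sq_lt_sq₀ (norm_nonneg _) (norm_nonneg _), ← Complex.normSq_eq_norm_sq,
      ← Complex.normSq_eq_norm_sq, Complex.normSq_apply, Complex.normSq_apply]
    simp [hb]
    nlinarith [hpos w hw]
  have h1 := Complex.norm_deriv_le_one_of_mapsTo_ball hGd (hmaps.mono_right ball_subset_closedBall) one_pos
  have hFd : HasDerivAt F (deriv F 0) 0 :=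
    (hF.differentiableAt (isOpen_ball.mem_nhds h0)).hasDerivAt
  have h2 := (hFd.sub_const a).div (hFd.add_const b) (hne 0 h0)
  have h2' : HasDerivAt G _ 0 := h2
  rw [h2'.deriv, ← ha, sub_self, zero_mul, sub_zero, mul_div_assoc, norm_mul] at h1
  have h3 : a + b = ((2 * a.re : ℝ) : ℂ) := by rw [hb, Complex.add_conj]
  rw [h3, norm_div, norm_pow, Complex.norm_real, Real.norm_of_nonneg (by positivity)] at h1
  have h4 : ‖deriv F 0‖ * (2 * a.re / (2 * a.re) ^ 2) = ‖deriv F 0‖ / (2 * a.re) := by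
    field_simp
  rw [h4, div_le_one (by positivity)] at h1
  exact h1

theorem kob_halfplane {D : Set E} (hD : IsOpen D) {f : E →L[ℝ] ℝ} {c : ℝ} (h : ∀ x ∈ D, f x < c)
    {x v : E} (hx : x ∈ D) : |f v| ≤ 2 * (c - f x) * kobMetric D x v := by
  obtain ⟨H, hH⟩ := exists_complexify f
  have hp : 0 < c - f x := by linarith [h x hx]
  rw [← div_le_iff₀' (by positivity)]
  refine le_kob hD hx fun φ τ φ' h1 h2 h3 h4 h5 => ?_
  have hF := schwarz_halfplane (F := fun w => c - H (φ w))
    ((differentiableOn_const _).sub (H.differentiable.comp_differentiableOn h1)) (fun w hw => by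
      have := h _ (h2 hw)
      simp [hH]; exact this)
  have hd : HasDerivAt (fun w => c - H (φ w)) (-(H φ')) 0 := by
    have := (H.hasFDerivAt.comp_hasDerivAt 0 h4).const_sub (c:ℂ)
    simpa using this
  rw [hd.deriv, norm_neg] at hF
  have e : ((c:ℂ) - H (φ 0)).re = c - f x := by simp [hH, h3]
  rw [e] at hF
  rw [div_le_iff₀' (by positivity), ← h5, ← hH, map_smul]
  calc _ ≤ ‖τ • H φ'‖ := Complex.abs_re_le_norm _
    _ = ‖τ‖ * ‖H φ'‖ := norm_smul _ _
    _ ≤ ‖τ‖ * (2 * (c - f x)) := by gcongr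
    _ = _ := by ring

end ClaimLower

set_option linter.unusedSectionVars false

section ClaimLower2

variable {E : Type*} [NormedAddCommGroup E] [NormedSpace ℂ E]
variable {ξ o : E} {A B C ν r₀ : ℝ}

/-- growth of a supporting functional along a curve -/
theorem support_growth [FiniteDimensional ℂ E] {D : Set E} (hD : IsOpen D) (hconv : Convex ℝ D)
    (hfr : (frontier D).Nonempty)
    {σ g : ℝ → E} {a b : ℝ} (hab : a ≤ b) (hac : IsACWithDeriv σ g a b) (hm : MapsTo σ (Icc a b) D) :
    bdist D (σ b) ≤ bdist D (σ a) * Real.exp (2 * ∫ t in a..b, kobMetric D (σ t) (g t)) := by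
  have : CompleteSpace E := FiniteDimensional.complete ℂ E
  have : ProperSpace E := FiniteDimensional.proper ℂ E
  have hma := hm (left_mem_Icc.mpr hab)
  have hmb := hm (right_mem_Icc.mpr hab)
  obtain ⟨q, hq, hqd⟩ := isClosed_frontier.exists_infDist_eq_dist hfr (σ a)
  have hqD : q ∉ D := by
    rw [hD.frontier_eq] at hq; exact hq.2
  obtain ⟨f, hf⟩ := geometric_hahn_banach_open_point hconv hD hqD
  have hf0 : 0 < ‖f‖ := by
    rw [norm_pos_iff]; rintro rfl
    simpa using hf _ hma
  have hI := kob_intervalIntegrable hD hab hac hm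
  have hg := ac_gronwall (u := fun t => f q - f (σ t)) (v := fun t => - f (g t))
    (k := fun t => 2 * kobMetric D (σ t) (g t)) hab ?_ ?_ ?_ (hI.const_mul 2) ?_
  · rw [intervalIntegral.integral_const_mul] at hg
    have h1 : f q - f (σ a) ≤ ‖f‖ * bdist D (σ a) := by
      rw [bdist, hqd, dist_comm, dist_eq_norm, ← map_sub]
      exact (le_abs_self _).trans (f.le_opNorm _)
    have h2 : ‖f‖ * bdist D (σ b) ≤ f q - f (σ b) := by
      have hpos : 0 < bdist D (σ b) := bdist_pos hD hfr hmb
      have hu : 0 < f q - f (σ b) := by linarith [hf _ hmb]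
      rw [← le_div_iff₀ hpos]
      have hcl : ∀ y ∈ closedBall (σ b) (bdist D (σ b)), f y ≤ f q := by
        intro y hy
        rw [← closure_ball _ hpos.ne'] at hy
        exact closure_minimal (fun y hy => (hf y (ball_bdist_subset hmb hy)).le)
          (isClosed_le f.continuous continuous_const) hy
      refine ContinuousLinearMap.opNorm_le_of_unit_norm (by positivity) ?_
      intro w hw
      rw [le_div_iff₀ hpos, Real.norm_eq_abs]
      have k1 := hcl (σ b + bdist D (σ b) • w) (by
        rw [mem_closedBall, dist_eq_norm, add_sub_cancel_left, norm_smul, hw, mul_one, Real.norm_of_nonneg hpos.le])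
      have k2 := hcl (σ b - bdist D (σ b) • w) (by
        rw [mem_closedBall, dist_eq_norm, sub_sub_cancel_left, norm_neg, norm_smul, hw, mul_one,
          Real.norm_of_nonneg hpos.le])
      rw [map_add, map_smul, smul_eq_mul] at k1
      rw [map_sub, map_smul, smul_eq_mul] at k2
      rcases abs_cases (f w) with h | h <;> rw [h.1] <;> nlinarith
    have h3 : ‖f‖ * bdist D (σ b) ≤ ‖f‖ * (bdist D (σ a) * Real.exp (2 * ∫ t in a..b, kobMetric D (σ t) (g t))) := by
      refine h2.trans (hg.trans ?_)
      rw [← mul_assoc]; gcongr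
    exact le_of_mul_le_mul_left h3 hf0
  · exact IntervalIntegrable.neg ⟨f.integrable_comp hac.1.1, f.integrable_comp hac.1.2⟩
  · intro t ht
    have hgi : IntervalIntegrable g volume a t :=
      hac.1.mono_set (by rw [uIcc_of_le hab, uIcc_of_le ht.1]; exact Icc_subset_Icc_right ht.2)
    rw [hac.2 t ht, map_add, intervalIntegral.integral_neg, ContinuousLinearMap.intervalIntegral_comp_comm f hgi]
    ring
  · intro t ht
    linarith [hf _ (hm ht)]
  · intro t ht
    have := kob_halfplane hD hf (hm ht) (v := g t)
    have h2 := neg_abs_le (f (g t))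
    linarith

theorem Vis.lower_bound [FiniteDimensional ℂ E] {Ω U : Set E} (hV : Vis Ω (Ω ∩ U) ξ o A B C ν r₀)
    (hb : Bornology.IsBounded Ω) (hU : IsOpen U) (hUc : closedBall ξ r₀ ⊆ U) (hξ : ξ ∈ frontier Ω)
    (hconv : Convex ℝ (Ω ∩ U)) : ∃ r > 0, ∃ H, ∀ z ∈ Ω, dist z ξ ≤ r →
      -(1/2) * Real.log (bdist (Ω ∩ U) z) - H ≤ kobDist Ω z o := by
  have hΩ := hV.isOpen
  have hr₀ := hV.rpos
  have hDo : IsOpen (Ω ∩ U) := hΩ.inter hU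
  have hξD := mem_frontier_inter hΩ hU hξ (hUc (mem_closedBall_self hr₀.le))
  have hoξ : 0 < dist o ξ := by
    rw [dist_pos]; rintro rfl
    rw [hΩ.frontier_eq] at hξ; exact hξ.2 hV.ho
  set r₂ := min (r₀ / 2) (dist o ξ) with hr₂
  have hr₂p : 0 < r₂ := by positivity
  have h20 : r₂ ≤ r₀ / 2 := min_le_left _ _
  have h2o : r₂ ≤ dist o ξ := min_le_right _ _
  obtain ⟨Q, hQ, hQk⟩ := weak_loc hΩ hb hr₀ hUc
  obtain ⟨η, hη, hvis⟩ := hV.visible (r₁ := r₂ / 2) (r₂ := r₂) (by linarith) (by linarith)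
  obtain ⟨H, hH⟩ := hV.gromov (r₁ := r₂) (r₂ := r₀) (by linarith) le_rfl
  set C₁ := |H| + 1 with hC₁
  set C₂ := 2 * Real.exp C₁ + Q * Real.exp (C₁ + 1) with hC₂
  have hC₂p : 0 < C₂ := by positivity
  refine ⟨r₂ / 2, by positivity, C₂ + 1 - (1/2) * Real.log η, ?_⟩
  intro z hz hzr
  obtain ⟨a, b, σ, g, hab, hac, hm, hσa, hσb, hlen⟩ := exists_near_min hΩ hV.conn hz hV.ho
  have hlen' : ∫ t in a..b, kobMetric Ω (σ t) (g t) ≤ kobDist Ω (σ a) (σ b) + 1 := by rwa [hσa, hσb]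
  obtain ⟨t', ht', htr, htη⟩ := hvis a b σ g hab hac hm hlen' (by rwa [hσa]) (by rwa [hσb])
  have hI := kob_intervalIntegrable hΩ hab hac hm
  set k : ℝ → ℝ := fun t => kobMetric Ω (σ t) (g t) with hk
  have hk0 : ∀ t, 0 ≤ k t := fun t => kob_nonneg _ _ _
  have hsub : ∀ {s t : ℝ}, a ≤ s → s ≤ t → t ≤ b → IntervalIntegrable k volume s t := by
    intro s t h1 h2 h3
    exact hI.mono_set (by rw [uIcc_of_le hab, uIcc_of_le h2]; exact Icc_subset_Icc h1 h3)
  have hint0 : ∀ {s t : ℝ}, s ≤ t → 0 ≤ ∫ u in s..t, k u := fun hst =>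
    intervalIntegral.integral_nonneg hst fun t _ => hk0 t
  have hadd : ∀ {s t u : ℝ}, a ≤ s → s ≤ t → t ≤ u → u ≤ b →
      (∫ x in s..t, k x) + ∫ x in t..u, k x = ∫ x in s..u, k x := fun h1 h2 h3 h4 =>
    intervalIntegral.integral_add_adjacent_intervals (hsub h1 h2 (h3.trans h4)) (hsub (h1.trans h2) h3 h4)
  have hac' := hac.mono ht'.1 le_rfl ht'.2
  have hm' : MapsTo σ (Icc a t') (Ω ∩ U) := fun t ht =>
    hV.mem _ (hm ⟨ht.1, ht.2.trans ht'.2⟩) (by linarith [htr t ht])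
  have hgrow := support_growth hDo hconv ⟨ξ, hξD⟩ ht'.1 hac' hm'
  -- comparison of metrics
  have hcmp : ∀ t ∈ Icc a t', kobMetric (Ω ∩ U) (σ t) (g t) ≤ 
      k t * (1 + C₂ * Real.exp (-∫ s in t..b, k s)) := by
    intro t ht
    have htb : t ≤ b := ht.2.trans ht'.2
    have htm := hm ⟨ht.1, htb⟩
    set m := ∫ s in t..b, k s with hmdef
    by_cases hcase : C₁ + 1 ≤ m
    · have hd : 0 < m - C₁ := by linarith
      have h1 := kob_localize hΩ (v := g t) hd (hm' ht) (fun y hy => by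
        have h2 := hH _ htm y hy.1 (htr t ht).le (by
          by_contra hcon
          exact hy.2 (hUc (mem_closedBall.mpr (not_le.mp hcon).le)))
        have h3 := near_min_sub hΩ hV.conn hac hm hlen' ht.1 htb le_rfl
        rw [hσb] at h3
        have h4 := kobDist_nonneg Ω y o
        have h5 := le_abs_self H
        change m ≤ _ at h3
        linarith)
      refine h1.trans ?_
      have he : Real.exp (-(m - C₁)) ≤ 1/2 := by
        have : Real.exp (-(m - C₁)) ≤ Real.exp (-1) := Real.exp_le_exp.mpr (by linarith)
        have h2 : Real.exp (-1) ≤ 1/2 := by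
          rw [Real.exp_neg, one_div]
          have := Real.add_one_le_exp (1:ℝ)
          gcongr; linarith
        linarith
      set e := Real.exp (-(m - C₁)) with hedef
      have he0 : 0 < e := Real.exp_pos _
      have he2 : 2 * e ≤ C₂ * Real.exp (-m) := by
        have : e = Real.exp C₁ * Real.exp (-m) := by rw [hedef, ← Real.exp_add]; congr 1; ring
        rw [this, hC₂]
        have := mul_pos (mul_pos hQ (Real.exp_pos (C₁ + 1))) (Real.exp_pos (-m))
        nlinarith
      rw [div_le_iff₀ (by linarith), mul_assoc]
      apply le_mul_of_one_le_right (hk0 t)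
      nlinarith
    · push Not at hcase
      refine (hQk _ htm (by linarith [htr t ht]) (g t)).trans ?_
      rw [mul_comm]
      refine mul_le_mul_of_nonneg_left ?_ (hk0 t)
      have h1 : 1 ≤ Real.exp (C₁ + 1) * Real.exp (-m) := by
        rw [← Real.exp_add]; exact Real.one_le_exp (by linarith)
      have h2 : 0 < 2 * Real.exp C₁ * Real.exp (-m) := by positivity
      rw [hC₂]
      nlinarith
  -- integral
  obtain ⟨hi1, hi2⟩ := ac_chain (k := k) (ℓ := fun t => -∫ s in t..b, k s) (Ψ := fun x => x + C₂ * Real.exp x)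
    (ψ := fun x => 1 + C₂ * Real.exp x) (a := a) (b := t') (m := -∫ s in a..b, k s) (M := 0)
    (c := -∫ s in a..b, k s) ht'.1 (hsub le_rfl ht'.1 ht'.2) (fun t ht => by
      have := hadd le_rfl ht.1 (ht.2.trans ht'.2) le_rfl; linarith) (fun t ht => by
      have := hadd le_rfl ht.1 (ht.2.trans ht'.2) le_rfl
      have := hint0 ht.1
      have := hint0 (ht.2.trans ht'.2)
      exact ⟨by linarith, by linarith⟩) (fun x _ => (hasDerivAt_id x).add ((Real.hasDerivAt_exp x).const_mul C₂))
      (by fun_prop)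
  have hint : ∫ t in a..t', kobMetric (Ω ∩ U) (σ t) (g t) ≤ kobDist Ω z o + 1 + C₂ := by
    refine (intervalIntegral.integral_mono_on ht'.1 (kob_intervalIntegrable hDo ht'.1 hac' hm') hi1 hcmp).trans ?_
    rw [hi2]
    have h1 := hadd le_rfl ht'.1 ht'.2 le_rfl
    have h2 := hint0 ht'.2
    have h3 : Real.exp (-∫ s in t'..b, k s) ≤ 1 := Real.exp_le_one_iff.mpr (by linarith)
    have h4 : 0 < C₂ * Real.exp (-∫ s in a..b, k s) := by positivity
    nlinarith
  have hzδ := hV.δpos z hz (by linarith)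
  rw [hσa] at hgrow
  have h5 : η ≤ bdist (Ω ∩ U) z * Real.exp (2 * (kobDist Ω z o + 1 + C₂)) := by
    refine htη.trans (hgrow.trans ?_)
    gcongr
  have h6 := Real.log_le_log hη h5
  rw [Real.log_mul hzδ.ne' (Real.exp_pos _).ne', Real.log_exp] at h6
  linarith

end ClaimLower2

set_option linter.unusedSectionVars false

section DiniWeight

theorem dini_weight {ω : ℝ → ℝ} (h0 : ∀ t ∈ Icc (0:ℝ) 1, 0 ≤ ω t) (hmono : MonotoneOn ω (Icc (0:ℝ) 1))
    (hi : IntegrableOn (fun t => ω t / t) (Ioc (0:ℝ) 1)) :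
    ∃ X : ℝ, 0 < X ∧ X ≤ 1 ∧ ∃ V : ℝ → ℝ, ContinuousOn V (Ioc 0 X) ∧ (∀ x ∈ Ioc 0 X, 0 ≤ V x) ∧
      AntitoneOn V (Ioc 0 X) ∧ (∀ y, 0 < y → y ≤ X / 4 → ω (2 * y) ≤ y * V y) ∧
      (∀ x ∈ Ioc 0 X, x * V x ≤ 1 / 16) ∧
      (∀ δ x, 0 < δ → δ ≤ x → x ≤ X → ∫ t in δ..x, V t ≤ 1) := by
  have hI01 : IntervalIntegrable (fun t => ω t / t) volume 0 1 := by
    rwa [intervalIntegrable_iff_integrableOn_Ioc_of_le zero_le_one]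
  have hIsub : ∀ {a b : ℝ}, 0 ≤ a → a ≤ b → b ≤ 1 → IntervalIntegrable (fun t => ω t / t) volume a b := by
    intro a b ha hab hb
    exact hI01.mono_set (by rw [uIcc_of_le zero_le_one, uIcc_of_le hab]; exact Icc_subset_Icc ha hb)
  have hnn : ∀ t, 0 ≤ t → t ≤ 1 → 0 ≤ ω t / t := fun t h1 h2 => div_nonneg (h0 t ⟨h1, h2⟩) h1
  obtain ⟨X, hX0, hX1, hXI⟩ : ∃ X : ℝ, 0 < X ∧ X ≤ 1 ∧ ∫ t in (0:ℝ)..X, ω t / t ≤ 1 / 64 := by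
    have hc := intervalIntegral.continuousOn_primitive_interval' hI01 (left_mem_uIcc)
    have hc0 := hc 0 left_mem_uIcc
    rw [uIcc_of_le zero_le_one, ContinuousWithinAt, intervalIntegral.integral_same] at hc0
    have := hc0.eventually (eventually_le_nhds (show (0:ℝ) < 1/64 by norm_num))
    rw [eventually_nhdsWithin_iff, Metric.eventually_nhds_iff] at this
    obtain ⟨ε, hε, h⟩ := this
    refine ⟨min (ε/2) 1, by positivity, min_le_right _ _, h ?_ ⟨by positivity, min_le_right _ _⟩⟩
    rw [Real.dist_eq, sub_zero, abs_of_pos (by positivity)]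
    exact lt_of_le_of_lt (min_le_left _ _) (by linarith)
  have hint_le : ∀ {a b : ℝ}, 0 ≤ a → a ≤ b → b ≤ X → ∫ t in a..b, ω t / t ≤ 1/64 := by
    intro a b ha hab hb
    have e1 := intervalIntegral.integral_add_adjacent_intervals (hIsub le_rfl ha (hab.trans (hb.trans hX1)))
      (hIsub ha hab (hb.trans hX1))
    have e2 := intervalIntegral.integral_add_adjacent_intervals (hIsub le_rfl (ha.trans hab) (hb.trans hX1))
      (hIsub (ha.trans hab) hb hX1)
    have p1 : 0 ≤ ∫ t in (0:ℝ)..a, ω t / t := intervalIntegral.integral_nonneg ha fun t ht =>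
      hnn t ht.1 (by linarith [ht.2])
    have p2 : 0 ≤ ∫ t in b..X, ω t / t := intervalIntegral.integral_nonneg hb fun t ht =>
      hnn t (by linarith [ht.1]) (by linarith [ht.2])
    linarith
  set h : ℝ → ℝ := fun s => ω s / s * (4 / s) with hh
  have hhI : ∀ {a b : ℝ}, 0 < a → a ≤ b → b ≤ X → IntervalIntegrable h volume a b := by
    intro a b ha hab hb
    refine (hIsub ha.le hab (hb.trans hX1)).mul_continuousOn ?_
    rw [uIcc_of_le hab]
    exact continuousOn_const.div continuousOn_id fun x hx => (ha.trans_le hx.1).ne'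
  have hhnn : ∀ t, 0 ≤ t → t ≤ X → 0 ≤ h t := fun t h1 h2 =>
    mul_nonneg (hnn t h1 (h2.trans hX1)) (by positivity)
  have hhint : ∀ {a b : ℝ}, 0 < a → a ≤ b → b ≤ X → 0 ≤ ∫ t in a..b, h t := fun ha hab hb =>
    intervalIntegral.integral_nonneg hab fun t ht => hhnn t (ha.le.trans ht.1) (ht.2.trans hb)
  have hadd : ∀ {a b c : ℝ}, 0 < a → a ≤ b → b ≤ c → c ≤ X →
      (∫ t in a..b, h t) + ∫ t in b..c, h t = ∫ t in a..c, h t := fun ha hab hbc hc =>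
    intervalIntegral.integral_add_adjacent_intervals (hhI ha hab (hbc.trans hc)) (hhI (ha.trans_le hab) hbc hc)
  have hVc : ∀ δ, 0 < δ → δ ≤ X → ContinuousOn (fun x => ∫ s in x..X, h s) (Icc δ X) := by
    intro δ hδ hδX
    have := (intervalIntegral.continuousOn_primitive_interval' (hhI hδ hδX le_rfl) right_mem_uIcc).neg
    rw [uIcc_of_le hδX] at this
    refine this.congr fun x hx => ?_
    rw [Pi.neg_apply, intervalIntegral.integral_symm]
  have hxV : ∀ x ∈ Ioc 0 X, x * (∫ s in x..X, h s) ≤ 1 / 16 := by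
    intro x hx
    have h1 : x * (∫ s in x..X, h s) ≤ ∫ s in x..X, 4 * (ω s / s) := by
      rw [← intervalIntegral.integral_const_mul]
      refine intervalIntegral.integral_mono_on hx.2 ((hhI hx.1 hx.2 le_rfl).const_mul _)
        ((hIsub hx.1.le hx.2 hX1).const_mul 4) fun s hs => ?_
      have hs0 : 0 < s := hx.1.trans_le hs.1
      have := hnn s hs0.le (hs.2.trans hX1)
      have e : x * h s = (x / s) * (4 * (ω s / s)) := by rw [hh]; field_simp
      rw [e]
      exact mul_le_of_le_one_left (by positivity) ((div_le_one hs0).mpr hs.1)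
    rw [intervalIntegral.integral_const_mul] at h1
    have := hint_le hx.1.le hx.2 le_rfl
    linarith
  refine ⟨X, hX0, hX1, fun x => ∫ s in x..X, h s, ?_, ?_, ?_, ?_, hxV, ?_⟩
  · intro x hx
    have := hVc (x/2) (half_pos hx.1) (by linarith [hx.1, hx.2]) x ⟨by linarith [hx.1], hx.2⟩
    refine this.mono_of_mem_nhdsWithin ?_
    rw [mem_nhdsWithin]
    exact ⟨Ioi (x/2), isOpen_Ioi, by simp [hx.1], fun y hy => ⟨hy.1.le, hy.2.2⟩⟩
  · intro x hx
    exact hhint hx.1 hx.2 le_rfl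
  · intro x hx y hy hxy
    have := hadd hx.1 hxy hy.2 le_rfl
    have := hhint hx.1 hxy hy.2
    simp only
    linarith
  · intro y hy hyX
    have a1 := hadd hy (show y ≤ 2 * y by linarith) (show 2*y ≤ X by linarith) le_rfl
    have a2 := hadd (show 0 < 2 * y by linarith) (show 2 * y ≤ 4 * y by linarith) (show 4*y ≤ X by linarith) le_rfl
    have a3 := hhint hy (show y ≤ 2 * y by linarith) (show 2*y ≤ X by linarith)
    have a4 := hhint (show 0 < 4 * y by linarith) (show 4*y ≤ X by linarith) le_rfl
    have a5 : ω (2*y) / y ≤ ∫ s in (2*y)..(4*y), h s := by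
      have hcI : IntervalIntegrable (fun s : ℝ => ω (2*y) * 4 / s^2) volume (2*y) (4*y) := by
        apply ContinuousOn.intervalIntegrable
        rw [uIcc_of_le (by linarith)]
        exact continuousOn_const.div (by fun_prop) fun x hx => by
          have : 0 < x := by linarith [hx.1]
          positivity
      have e : ∫ s in (2*y)..(4*y), ω (2*y) * 4 / s^2 = ω (2*y) / y := by
        rw [intervalIntegral.integral_eq_sub_of_hasDerivAt (f := fun s => -(ω (2*y) * 4) / s) ?_ hcI]
        · field_simp; ring
        · intro s hs
          rw [uIcc_of_le (by linarith)] at hs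
          have hs0 : s ≠ 0 := by have := hs.1; intro h; subst h; linarith
          have := (hasDerivAt_inv hs0).const_mul (-(ω (2*y) * 4))
          have e3 : -(ω (2*y) * 4) * -(s ^ 2)⁻¹ = ω (2*y) * 4 / s^2 := by rw [div_eq_mul_inv]; ring
          rw [e3] at this
          simpa only [div_eq_mul_inv] using this
      rw [← e]
      refine intervalIntegral.integral_mono_on (by linarith) hcI
        (hhI (by linarith) (by linarith) (by linarith)) fun s hs => ?_
      have hs0 : 0 < s := by linarith [hs.1]
      have : ω (2*y) ≤ ω s := hmono ⟨by linarith, by linarith⟩ ⟨hs0.le, by linarith [hs.2]⟩ hs.1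
      have e2 : h s = ω s * 4 / s^2 := by rw [hh]; field_simp
      rw [e2]
      gcongr
    rw [div_le_iff₀ hy] at a5
    simp only
    nlinarith
  · intro δ x hδ hδx hxX
    have hG := (hhI hδ hδx hxX).absolutelyContinuousOnInterval_intervalIntegral (c := δ) left_mem_uIcc
    have hid : AbsolutelyContinuousOnInterval (fun y : ℝ => y) δ x := 
      (contDiff_id.contDiffOn).absolutelyContinuousOnInterval
    have hp := hid.integral_mul_deriv_eq_deriv_mul hG
    have e1 : ∫ y in δ..x, y * deriv (fun x => ∫ v in δ..x, h v) y = ∫ y in δ..x, 4 * (ω y / y) := by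
      refine intervalIntegral.integral_congr_ae ?_
      filter_upwards [(hhI hδ hδx hxX).ae_hasDerivAt_integral] with y hy hy2
      rw [(hy (uIoc_subset_uIcc hy2) δ left_mem_uIcc).deriv]
      rw [uIoc_of_le hδx] at hy2
      have : y ≠ 0 := (hδ.trans hy2.1).ne'
      rw [hh]; field_simp
    have e2 : ∫ y in δ..x, deriv (fun y : ℝ => y) y * (∫ v in δ..y, h v) 
        = ∫ y in δ..x, ((∫ s in δ..X, h s) - ∫ s in y..X, h s) := by
      refine intervalIntegral.integral_congr fun y hy => ?_
      rw [uIcc_of_le hδx] at hy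
      have := hadd hδ hy.1 (hy.2.trans hxX) le_rfl
      simp only [deriv_id'', one_mul]
      linarith
    have hVI : IntervalIntegrable (fun y => ∫ s in y..X, h s) volume δ x := by
      apply ContinuousOn.intervalIntegrable
      rw [uIcc_of_le hδx]
      exact (hVc δ hδ (hδx.trans hxX)).mono (Icc_subset_Icc_right hxX)
    rw [e1, e2, intervalIntegral.integral_sub (by simp) hVI, intervalIntegral.integral_const,
      intervalIntegral.integral_const_mul, intervalIntegral.integral_same, smul_eq_mul] at hp
    have b1 := hint_le hδ.le hδx hxX
    have b2 := hxV x ⟨hδ.trans_le hδx, hxX⟩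
    have b3 := hadd hδ hδx hxX le_rfl
    have b4 := hhint hδ (hδx.trans hxX) le_rfl
    simp only
    nlinarith

end DiniWeight

set_option linter.unusedSectionVars false

section DiniNormals

variable {E : Type*} [NormedAddCommGroup E] [NormedSpace ℂ E]

theorem eventually_pos_of_deriv {φ : ℝ → ℝ} {c : ℝ} (h : HasDerivAt φ c 0) (h0 : φ 0 = 0) (hc : 0 < c) :
    ∀ᶠ t in 𝓝[>] (0:ℝ), 0 < φ t := by
  have h1 := h.tendsto_slope_zero_right
  have h2 := h1.eventually (lt_mem_nhds hc)
  filter_upwards [h2, self_mem_nhdsWithin] with t ht ht0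
  have ht0' : (0:ℝ) < t := ht0
  rw [zero_add, h0, sub_zero, smul_eq_mul] at ht
  exact (pos_iff_pos_of_mul_pos ht).mp (inv_pos.mpr ht0')

theorem dini_normals {D : Set E} {ξ : E} (hD : IsOpen D) (hconv : Convex ℝ D)
    (hdini : DiniSmoothBoundaryPoint D ξ) :
    ∃ r > 0, ∃ ω : ℝ → ℝ, (∀ t ∈ Icc (0:ℝ) 1, 0 ≤ ω t) ∧ MonotoneOn ω (Icc (0:ℝ) 1) ∧
      IntegrableOn (fun t => ω t / t) (Ioc (0:ℝ) 1) ∧ ∃ F : E → E →L[ℝ] ℝ,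
      (∀ q ∈ frontier D, dist q ξ < r → ‖F q‖ = 1 ∧ (∀ y ∈ D, 0 ≤ F q (y - q)) ∧
        ∀ v, 0 < F q v → ∀ᶠ t in 𝓝[>] (0:ℝ), q + t • v ∈ D) ∧
      (∀ q ∈ frontier D, ∀ q' ∈ frontier D, dist q ξ < r → dist q' ξ < r → dist q q' ≤ 1 →
        ‖F q - F q'‖ ≤ ω (dist q q')) := by
  obtain ⟨W, ρ, ω, ⟨hWo, hξW, hρ, hρ0, hDW, hfW⟩, h0, hmono, hint, hmod⟩ := hdini
  obtain ⟨r, hr, hrW⟩ := Metric.isOpen_iff.mp hWo ξ hξW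
  have hin : ∀ x ∈ W, (x ∈ D ↔ ρ x < 0) := fun x hx => by
    have : x ∈ D ∩ W ↔ x ∈ {x ∈ W | ρ x < 0} := by rw [hDW]
    simpa [hx] using this
  have hfr : ∀ x ∈ W, (x ∈ frontier D ↔ ρ x = 0) := fun x hx => by
    have : x ∈ frontier D ∩ W ↔ x ∈ {x ∈ W | ρ x = 0} := by rw [hfW]
    simpa [hx] using this
  refine ⟨r, hr, ω, h0, hmono, hint, fun q => -((‖fderiv ℝ ρ q‖)⁻¹ • fderiv ℝ ρ q), ?_, ?_⟩
  · intro q hq hqr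
    have hqW : q ∈ W := hrW hqr
    have hn : 0 < ‖fderiv ℝ ρ q‖ := norm_pos_iff.mpr (hρ0 q hqW)
    have hdiff : HasFDerivAt ρ (fderiv ℝ ρ q) q :=
      ((hρ.contDiffAt (hWo.mem_nhds hqW)).differentiableAt (by norm_num)).hasFDerivAt
    have hder : ∀ v : E, HasDerivAt (fun t : ℝ => ρ (q + t • v)) (fderiv ℝ ρ q v) 0 := by
      intro v
      have h1 : HasDerivAt (fun t : ℝ => q + t • v) v 0 := by
        simpa using ((hasDerivAt_id (0:ℝ)).smul_const v).const_add q
      have h2 : HasFDerivAt ρ (fderiv ℝ ρ q) (q + (0:ℝ) • v) := by simpa using hdiff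
      exact h2.comp_hasDerivAt 0 h1
    have hq0 : ρ q = 0 := (hfr q hqW).mp hq
    have hWev : ∀ v : E, ∀ᶠ t in 𝓝[>] (0:ℝ), q + t • v ∈ W := by
      intro v
      have hc : Continuous fun t : ℝ => q + t • v := by fun_prop
      have : ∀ᶠ t in 𝓝 (0:ℝ), q + t • v ∈ W :=
        hc.continuousAt.eventually_mem (by simpa using hWo.mem_nhds hqW)
      exact this.filter_mono nhdsWithin_le_nhds
    refine ⟨?_, ?_, ?_⟩
    · rw [norm_neg, norm_smul, norm_inv, norm_norm, inv_mul_cancel₀ hn.ne']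
    · intro y hy
      by_contra hneg
      push Not at hneg
      have hpos : 0 < fderiv ℝ ρ q (y - q) := by
        simp only [ContinuousLinearMap.neg_apply, ContinuousLinearMap.smul_apply, smul_eq_mul] at hneg
        exact (pos_iff_pos_of_mul_pos (by linarith)).mp (inv_pos.mpr hn)
      have e1 := eventually_pos_of_deriv (hder (y - q)) (by simpa using hq0) hpos
      have e2 : ∀ᶠ t in 𝓝[>] (0:ℝ), t < 1 := 
        (eventually_lt_nhds (show (0:ℝ) < 1 by norm_num)).filter_mono nhdsWithin_le_nhds
      obtain ⟨t, ht1, ht2, ht3, ht4⟩ := (e1.and (e2.and ((hWev (y - q)).and self_mem_nhdsWithin))).exists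
      have ht0 : (0:ℝ) < t := ht4
      have hmem : q + t • (y - q) ∈ D := by
        have := hconv.openSegment_closure_interior_subset_interior (frontier_subset_closure hq)
          (by rwa [hD.interior_eq] : y ∈ interior D)
        rw [hD.interior_eq] at this
        refine this ⟨1 - t, t, by linarith, ht0, by ring, ?_⟩
        rw [smul_sub, sub_smul, one_smul]; abel
      linarith [(hin _ ht3).mp hmem]
    · intro v hv
      have hneg : fderiv ℝ ρ q v < 0 := by
        simp only [ContinuousLinearMap.neg_apply, ContinuousLinearMap.smul_apply, smul_eq_mul] at hv
        have : 0 < (‖fderiv ℝ ρ q‖)⁻¹ * (- fderiv ℝ ρ q v) := by linarith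
        linarith [(pos_iff_pos_of_mul_pos this).mp (inv_pos.mpr hn)]
      have e1 := eventually_pos_of_deriv (hder v).fun_neg (by simpa using hq0) (by linarith)
      filter_upwards [e1, hWev v] with t ht1 ht2
      exact (hin _ ht2).mpr (by linarith)
  · intro q hq q' hq' h1 h2 h3
    have := hmod q ⟨hq, hrW h1⟩ q' ⟨hq', hrW h2⟩ (by rwa [← dist_eq_norm])
    rw [← dist_eq_norm q q'] at this
    rwa [neg_sub_neg, norm_sub_rev]

/-- points outside `D` lie almost below the tangent plane -/
theorem dini_outside [FiniteDimensional ℂ E] {D : Set E} {ξ : E} {r : ℝ} {ω : ℝ → ℝ} {F : E → E →L[ℝ] ℝ}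
    (hD : IsOpen D) (h0 : ∀ t ∈ Icc (0:ℝ) 1, 0 ≤ ω t) (hmono : MonotoneOn ω (Icc (0:ℝ) 1))
    (h1 : ∀ q ∈ frontier D, dist q ξ < r → ‖F q‖ = 1 ∧ (∀ y ∈ D, 0 ≤ F q (y - q)) ∧
        ∀ v, 0 < F q v → ∀ᶠ t in 𝓝[>] (0:ℝ), q + t • v ∈ D)
    (h2 : ∀ q ∈ frontier D, ∀ q' ∈ frontier D, dist q ξ < r → dist q' ξ < r → dist q q' ≤ 1 →
        ‖F q - F q'‖ ≤ ω (dist q q')) {q p : E} (hq : q ∈ frontier D) (hqr : dist q ξ < r / 4)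
    (hp : p ∉ D) (hpr : dist p q < r / 4) (hp1 : 2 * dist p q ≤ 1) :
    F q (p - q) ≤ ω (2 * dist p q) * dist p q := by
  have : ProperSpace E := FiniteDimensional.proper ℂ E
  have hr : 0 < r := by linarith [dist_nonneg (x := q) (y := ξ)]
  obtain ⟨q', hq'c, hq'd⟩ := (isClosed_closure (s := D)).exists_infDist_eq_dist
    ⟨q, frontier_subset_closure hq⟩ p
  have hle : ∀ y ∈ closure D, dist p q' ≤ dist p y := fun y hy => by
    rw [← hq'd]; exact infDist_le_dist_of_mem hy
  have hpq : dist p q' ≤ dist p q := hle q (frontier_subset_closure hq)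
  have hqq : dist q q' ≤ 2 * dist p q := by
    have := dist_triangle_left q q' p
    linarith
  have hclose : ∀ᶠ t in 𝓝[>] (0:ℝ), q' + t • (p - q') ∈ D → p = q' := by
    have e2 : ∀ᶠ t in 𝓝[>] (0:ℝ), t < 1 := 
        (eventually_lt_nhds (show (0:ℝ) < 1 by norm_num)).filter_mono nhdsWithin_le_nhds
    filter_upwards [e2, self_mem_nhdsWithin] with t ht1 ht0 hmem
    have ht0' : (0:ℝ) < t := ht0
    have h3 := hle _ (subset_closure hmem)
    rw [dist_eq_norm p (q' + _), show p - (q' + t • (p - q')) = (1 - t) • (p - q') by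
      rw [sub_smul, one_smul]; abel, norm_smul, Real.norm_of_nonneg (by linarith), ← dist_eq_norm] at h3
    rw [← dist_le_zero]
    nlinarith
  have hq'f : q' ∈ frontier D := by
    rw [hD.frontier_eq]
    refine ⟨hq'c, fun hmem => ?_⟩
    have hc : Continuous fun t : ℝ => q' + t • (p - q') := by fun_prop
    have hev : ∀ᶠ t in 𝓝 (0:ℝ), q' + t • (p - q') ∈ D :=
      hc.continuousAt.eventually_mem (by simpa using hD.mem_nhds hmem)
    obtain ⟨t, ht1, ht2⟩ := ((hev.filter_mono nhdsWithin_le_nhds).and hclose).exists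
    exact hp (ht2 ht1 ▸ hmem)
  have hq'r : dist q' ξ < r := by
    have := dist_triangle_left q' ξ q
    linarith
  obtain ⟨hn', hs', ho'⟩ := h1 q' hq'f hq'r
  have k1 : F q' (p - q') ≤ 0 := by
    by_contra hcon
    push Not at hcon
    obtain ⟨t, ht1, ht2⟩ := ((ho' _ hcon).and hclose).exists
    rw [ht2 ht1, sub_self, map_zero] at hcon
    exact lt_irrefl _ hcon
  have k2 : 0 ≤ F q' (q - q') := by
    refine closure_minimal (t := {y | 0 ≤ F q' (y - q')}) hs' ?_ (frontier_subset_closure hq)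
    exact isClosed_le continuous_const (by fun_prop)
  have k3 : ‖F q - F q'‖ ≤ ω (2 * dist p q) := by
    refine (h2 q hq q' hq'f (by linarith) hq'r (by linarith)).trans ?_
    exact hmono ⟨dist_nonneg, by linarith⟩ ⟨by positivity, hp1⟩ hqq
  have k4 : (F q - F q') (p - q) ≤ ω (2 * dist p q) * dist p q := by
    refine (le_abs_self _).trans (((F q - F q').le_opNorm _).trans ?_)
    rw [dist_eq_norm p q] at k3 ⊢
    gcongr
  have k5 : F q (p - q) = (F q - F q') (p - q) + F q' (p - q') - F q' (q - q') := by
    simp only [ContinuousLinearMap.sub_apply, map_sub]; ring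
  linarith

/-- unit normal direction from a nearest point -/
theorem dini_direction {D : Set E} {q z : E} {F : E →L[ℝ] ℝ} {δ : ℝ} (hz : z ∈ D) (hδ : 0 < δ)
    (hb : ball z δ ⊆ D) (hzq : dist z q = δ) (hn : ‖F‖ = 1) (hs : ∀ y ∈ D, 0 ≤ F (y - q)) :
    ∃ n : E, ‖n‖ = 1 ∧ z = q + δ • n ∧ ∀ c : ℂ, F (c • n) = c.re := by
  refine ⟨δ⁻¹ • (z - q), ?_, ?_, ?_⟩
  · rw [norm_smul, ← dist_eq_norm, hzq, Real.norm_of_nonneg (by positivity), inv_mul_cancel₀ hδ.ne']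
  · rw [smul_smul, mul_inv_cancel₀ hδ.ne', one_smul]; abel
  set n := δ⁻¹ • (z - q) with hndef
  have hnn : ‖n‖ = 1 := by
    rw [hndef, norm_smul, ← dist_eq_norm, hzq, Real.norm_of_nonneg (by positivity), inv_mul_cancel₀ hδ.ne']
  have hle : ∀ v, F v ≤ ‖v‖ := fun v => by
    have := F.le_opNorm v
    rw [hn, one_mul] at this
    exact (le_abs_self _).trans this
  have hcl : ∀ y ∈ closedBall z δ, 0 ≤ F (y - q) := by
    intro y hy
    rw [← closure_ball _ hδ.ne'] at hy
    exact closure_minimal (t := {y | 0 ≤ F (y - q)}) (fun y hy => hs y (hb hy))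
      (isClosed_le continuous_const (by fun_prop)) hy
  have h1 : 1 ≤ F n := by
    have hFn : F n = δ⁻¹ * F (z - q) := by rw [hndef, map_smul, smul_eq_mul]
    have hz0 : 0 ≤ F (z - q) := hs z hz
    rw [← hn]
    refine ContinuousLinearMap.opNorm_le_of_unit_norm (by rw [hFn]; positivity) ?_
    intro w hw
    have k1 := hcl (z + δ • w) (by
      rw [mem_closedBall, dist_eq_norm, add_sub_cancel_left, norm_smul, hw, mul_one, Real.norm_of_nonneg hδ.le])
    have k2 := hcl (z - δ • w) (by
      rw [mem_closedBall, dist_eq_norm, sub_sub_cancel_left, norm_neg, norm_smul, hw, mul_one,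
        Real.norm_of_nonneg hδ.le])
    rw [show z + δ • w - q = (z - q) + δ • w by abel, map_add, map_smul, smul_eq_mul] at k1
    rw [show z - δ • w - q = (z - q) - δ • w by abel, map_sub, map_smul, smul_eq_mul] at k2
    rw [hFn, Real.norm_eq_abs, inv_mul_eq_div, le_div_iff₀ hδ]
    rcases abs_cases (F w) with h | h <;> rw [h.1] <;> nlinarith
  have h1' : F n = 1 := le_antisymm (hnn ▸ hle n) h1
  clear_value n
  set b := F (Complex.I • n) with hbdef
  have hlin : ∀ c : ℂ, F (c • n) = c.re + c.im * b := by
    intro c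
    have : c • n = c.re • n + c.im • (Complex.I • n) := by
      conv_lhs => rw [← Complex.re_add_im c]
      rw [add_smul, mul_smul, Complex.coe_smul, Complex.coe_smul]
    rw [this, map_add, map_smul, map_smul, h1', smul_eq_mul, smul_eq_mul, mul_one]
  have hb0 : b = 0 := by
    have h2 := hle ((⟨1, b⟩ : ℂ) • n)
    rw [hlin, norm_smul, hnn, mul_one] at h2
    simp only at h2
    have h3 : ‖(⟨1, b⟩ : ℂ)‖ ^ 2 = 1 + b * b := by
      rw [Complex.sq_norm, Complex.normSq_mk]; ring
    have h4 : (1 + b * b)^2 ≤ 1 + b * b := by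
      rw [← h3]; gcongr; rw [h3]; exact h2
    have h5 : b * b ≤ 0 := by nlinarith [mul_self_nonneg b, mul_self_nonneg (b*b)]
    exact mul_self_eq_zero.mp (le_antisymm h5 (mul_self_nonneg b))
  intro c
  rw [hlin, hb0, mul_zero, add_zero]

end DiniNormals

set_option linter.unusedSectionVars false

section DiniDisc

variable {E : Type*} [NormedAddCommGroup E] [NormedSpace ℂ E]

theorem kob_ball_line {D : Set E} {q n : E} {m R x : ℝ} (hR : 0 < R) (hx : |x - m| < R)
    (hmaps : ∀ c ∈ ball (m : ℂ) R, q + c • n ∈ D) :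
    kobMetric D (q + x • n) n ≤ R / (R ^ 2 - (x - m) ^ 2) := by
  set β : ℝ := (x - m) / R with hβ
  have hβ1 : |β| < 1 := by
    rw [hβ, abs_div, abs_of_pos hR, div_lt_one hR]; exact hx
  have hβ2 : β ^ 2 < 1 := by rw [sq_lt_one_iff_abs_lt_one]; exact hβ1
  have hden : ∀ z ∈ ball (0:ℂ) 1, 1 + (β:ℂ) * z ≠ 0 := by
    intro z hz h
    rw [mem_ball_zero_iff] at hz
    have h1 : (β:ℂ) * z = -1 := by linear_combination h
    have h2 : |β| * ‖z‖ = 1 := by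
      have := congrArg norm h1
      rwa [norm_mul, Complex.norm_real, norm_neg, norm_one, Real.norm_eq_abs] at this
    nlinarith [norm_nonneg z, abs_nonneg β]
  set φ : ℂ → ℂ := fun z => (m:ℂ) + (R:ℂ) * ((z + β) / (1 + β * z)) with hφ
  have hdφ : ∀ z ∈ ball (0:ℂ) 1, DifferentiableAt ℂ φ z := by
    intro z hz
    have := hden z hz
    rw [hφ]
    fun_prop (disch := assumption)
  have hmφ : MapsTo φ (ball 0 1) (ball (m:ℂ) R) := by
    intro z hz
    have hne := hden z hz
    rw [mem_ball_zero_iff] at hz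
    rw [mem_ball, dist_eq_norm, hφ]
    simp only [add_sub_cancel_left]
    rw [norm_mul, Complex.norm_real, Real.norm_of_nonneg hR.le, norm_div]
    have : ‖z + β‖ / ‖1 + (β:ℂ) * z‖ < 1 := by
      rw [div_lt_one (norm_pos_iff.mpr hne)]
      refine lt_of_pow_lt_pow_left₀ 2 (norm_nonneg _) ?_
      have hz2 : ‖z‖ ^ 2 < 1 := by nlinarith [norm_nonneg z]
      rw [Complex.sq_norm, Complex.normSq_apply] at hz2
      rw [Complex.sq_norm, Complex.sq_norm, Complex.normSq_apply, Complex.normSq_apply]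
      simp only [Complex.add_re, Complex.add_im, Complex.mul_re, Complex.mul_im, Complex.ofReal_re,
        Complex.ofReal_im, Complex.one_re, Complex.one_im]
      nlinarith [mul_pos (sub_pos.mpr hβ2) (sub_pos.mpr hz2)]
    nlinarith
  have hφ0 : φ 0 = x := by
    rw [hφ]; simp only [zero_add, mul_zero, add_zero, div_one, hβ]
    push_cast
    have : (R:ℂ) ≠ 0 := by exact_mod_cast hR.ne'
    field_simp; ring
  have hφ' : HasDerivAt φ ((R * (1 - β ^ 2) : ℝ) : ℂ) 0 := by
    have h1 : HasDerivAt (fun z : ℂ => z + β) 1 0 := (hasDerivAt_id _).add_const _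
    have h2 : HasDerivAt (fun z : ℂ => 1 + (β:ℂ) * z) β 0 := by
      simpa using ((hasDerivAt_id (0:ℂ)).const_mul (β:ℂ)).const_add 1
    have h3 := ((h1.fun_div h2 (by simp)).const_mul (R:ℂ)).const_add (m:ℂ)
    have e : ((R * (1 - β ^ 2) : ℝ) : ℂ) = (R:ℂ) * ((1 * (1 + (β:ℂ) * 0) - (0 + (β:ℂ)) * β) / (1 + (β:ℂ) * 0) ^ 2) := by
      push_cast
      rw [mul_zero, add_zero, one_pow, div_one]; ring
    rw [e]
    exact h3
  have hpos : 0 < R * (1 - β ^ 2) := mul_pos hR (by linarith)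
  have hk := kob_le_of_disc (D := D) (x := q + x • n) (v := n) (f := fun z => q + φ z • n)
    (ξ := (((R * (1 - β ^ 2))⁻¹ : ℝ) : ℂ)) (f' := ((R * (1 - β ^ 2) : ℝ) : ℂ) • n)
    (fun z hz => (((hdφ z hz).smul_const n).const_add q).differentiableWithinAt)
    (fun z hz => hmaps _ (hmφ hz)) (by simp only [hφ0]; rw [Complex.coe_smul])
    ((hφ'.smul_const n).const_add q) (by
      rw [smul_smul, ← Complex.ofReal_mul, inv_mul_cancel₀ hpos.ne', Complex.ofReal_one, one_smul])
  refine hk.trans (le_of_eq ?_)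
  rw [Complex.norm_real, Real.norm_of_nonneg (by positivity), hβ]
  have h1 : R ^ 2 - (x - m) ^ 2 ≠ 0 := by
    have := sq_lt_sq' (abs_lt.mp hx).1 (abs_lt.mp hx).2
    linarith
  have : R * (1 - ((x - m) / R) ^ 2) = (R ^ 2 - (x - m) ^ 2) / R := by field_simp
  rw [this, inv_div]

/-- local data at a Dini point of a convex domain -/
structure DiniData (D : Set E) (ξ : E) (r x₁ : ℝ) (F : E → E →L[ℝ] ℝ) (θ W : ℝ → ℝ) : Prop where
  rpos : 0 < r
  xpos : 0 < x₁
  xle : x₁ ≤ r / 4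
  nrm : ∀ q ∈ frontier D, dist q ξ < r → ‖F q‖ = 1
  supp : ∀ q ∈ frontier D, dist q ξ < r → ∀ y ∈ D, 0 ≤ F q (y - q)
  out : ∀ q ∈ frontier D, dist q ξ < r → ∀ p, p ∉ D → dist p q < r → F q (p - q) ≤ θ (dist p q) * dist p q
  Wpos : ∀ x ∈ Ioc 0 x₁, 0 < W x
  xW : ∀ x ∈ Ioc 0 x₁, x * W x ≤ 1 / 8
  Wr : ∀ x ∈ Ioc 0 x₁, 2 * x ^ 2 * W x + 1 / (2 * W x) ≤ r
  θW : ∀ x ∈ Ioc 0 x₁, ∀ y, 0 < y → y < r → θ y ≤ max y x * W x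
  Wc : ContinuousOn W (Ioc 0 x₁)
  Wi : ∀ δ x, 0 < δ → δ ≤ x → x ≤ x₁ → ∫ t in δ..x, W t ≤ 2

theorem exists_diniData [FiniteDimensional ℂ E] {D : Set E} {ξ : E} (hD : IsOpen D) (hconv : Convex ℝ D)
    (hdini : DiniSmoothBoundaryPoint D ξ) : ∃ r x₁ F θ W, DiniData D ξ r x₁ F θ W := by
  obtain ⟨r, hr, ω, h0, hmono, hint, F, hF1, hF2⟩ := dini_normals hD hconv hdini
  obtain ⟨X, hX, hX1, V, hVc, hV0, hVa, hωV, hxV, hVi⟩ := dini_weight h0 hmono hint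
  set ρ := min (r / 4) (X / 4) with hρ
  have hρp : 0 < ρ := by positivity
  have hρr : ρ ≤ r / 4 := min_le_left _ _
  have hρX : ρ ≤ X / 4 := min_le_right _ _
  have hsub : Ioc 0 (ρ/16) ⊆ Ioc 0 X := Ioc_subset_Ioc_right (by linarith)
  have hW0 : ∀ x ∈ Ioc 0 (ρ/16), ρ⁻¹ ≤ V x + ρ⁻¹ := fun x hx => by linarith [hV0 x (hsub hx)]
  have hxW : ∀ x ∈ Ioc 0 (ρ/16), x * (V x + ρ⁻¹) ≤ 1 / 8 := by
    intro x hx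
    have h1 := hxV x (hsub hx)
    have h2 : x * ρ⁻¹ ≤ 1 / 16 := by
      rw [← div_eq_mul_inv, div_le_iff₀ hρp]; linarith [hx.2]
    linarith
  have hρi : 0 < ρ⁻¹ := by positivity
  refine ⟨ρ, ρ / 16, F, fun t => ω (2 * t), fun x => V x + ρ⁻¹, hρp, by positivity, by linarith, ?_, ?_, ?_,
    ?_, hxW, ?_, ?_, ?_, ?_⟩
  · intro q hq hqr
    exact (hF1 q hq (by linarith)).1
  · intro q hq hqr
    exact (hF1 q hq (by linarith)).2.1
  · intro q hq hqr p hp hpr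
    exact dini_outside hD h0 hmono hF1 hF2 hq (by linarith) hp (by linarith) (by linarith)
  · intro x hx
    exact hρi.trans_le (hW0 x hx)
  · intro x hx
    have h1 := hxW x hx
    have h2 := hW0 x hx
    have h3 : 1 / (2 * (V x + ρ⁻¹)) ≤ ρ / 2 := by
      rw [show ρ / 2 = 1 / (2 * ρ⁻¹) by field_simp]
      exact one_div_le_one_div_of_le (by positivity) (by linarith)
    have h4 : 2 * x ^ 2 * (V x + ρ⁻¹) ≤ x / 4 := by nlinarith [hx.1]
    linarith [hx.2]
  · intro x hx y hy hyρ
    by_cases hxy : x ≤ y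
    · rw [max_eq_left hxy]
      have h1 := hωV y hy (by linarith)
      have h2 := hVa (hsub hx) (show y ∈ Ioc 0 X from ⟨hy, by linarith⟩) hxy
      nlinarith
    · push Not at hxy
      rw [max_eq_right hxy.le]
      have h1 := hωV x hx.1 (by linarith [hx.2])
      have h2 : ω (2 * y) ≤ ω (2 * x) := hmono ⟨by linarith, by linarith⟩
        ⟨by linarith [hx.1], by linarith [hx.2]⟩ (by linarith)
      nlinarith [mul_pos hx.1 hρi]
  · exact (hVc.mono hsub).add continuousOn_const
  · intro δ x hδ hδx hx
    rw [intervalIntegral.integral_add]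
    · have := hVi δ x hδ hδx (by linarith)
      rw [intervalIntegral.integral_const, smul_eq_mul]
      have h2 : (x - δ) * ρ⁻¹ ≤ 1 := by
        rw [← div_eq_mul_inv, div_le_iff₀ hρp]; linarith
      linarith
    · apply ContinuousOn.intervalIntegrable
      rw [uIcc_of_le hδx]
      exact hVc.mono fun t ht => ⟨hδ.trans_le ht.1, by linarith [ht.2]⟩
    · simp

variable {D : Set E} {ξ : E} {r x₁ : ℝ} {F : E → E →L[ℝ] ℝ} {θ W : ℝ → ℝ}

theorem dini_poly {u : ℝ} (hu0 : 0 < u) (hu : u ≤ 1 / 8) :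
    1 ≤ (1 + 8 * u) * ((1 - 2 * u) * (1 - 2 * u * (1 - 2 * u))) := by
  have h1 : (1 + 8 * u) * ((1 - 2 * u) * (1 - 2 * u * (1 - 2 * u))) - 1
      = u * (4 - 24 * u + 56 * u^2 - 64 * u^3) := by ring
  have h3 : 64 * u^3 ≤ 8 * u^2 := by
    have := mul_le_mul_of_nonneg_left hu (show 0 ≤ 64 * u^2 by positivity)
    linarith [show 64 * u^2 * u = 64 * u^3 by ring]
  have h2 : 0 ≤ 4 - 24 * u + 56 * u^2 - 64 * u^3 := by
    have := sq_nonneg u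
    linarith
  have := mul_nonneg hu0.le h2
  linarith

theorem DiniData.kob (hd : DiniData D ξ r x₁ F θ W) {q n : E} (hq : q ∈ frontier D) (hqr : dist q ξ < r)
    (hn : ‖n‖ = 1) (hF : ∀ c : ℂ, F q (c • n) = c.re) {x : ℝ} (hx : x ∈ Ioc 0 x₁) :
    kobMetric D (q + x • n) n ≤ 1 / (2 * x) + 4 * W x := by
  have hx0 := hx.1
  set w := W x with hw
  have hw0 : 0 < w := hd.Wpos x hx
  have hxw : x * w ≤ 1 / 8 := hd.xW x hx
  set R := 1 / (4 * w) with hR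
  set a := 2 * x ^ 2 * w with ha
  have hR0 : 0 < R := by positivity
  have ha0 : 0 < a := by positivity
  have hRw : R * w = 1 / 4 := by rw [hR]; field_simp
  have hax : a ≤ x / 4 := by rw [ha]; nlinarith
  have hxR : x ≤ R / 2 := by
    have : x * w ≤ R / 2 * w := by linarith
    exact le_of_mul_le_mul_right this hw0
  have hk := kob_ball_line (D := D) (q := q) (n := n) (m := a + R) (x := x) hR0
    (by rw [abs_lt]; constructor <;> linarith) (by
      intro c hc
      by_contra hcon
      rw [mem_ball, dist_eq_norm] at hc
      have hc2 : ‖c - ((a + R : ℝ) : ℂ)‖ ^ 2 < R ^ 2 := by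
        have := norm_nonneg (c - ((a + R : ℝ) : ℂ))
        nlinarith
      rw [Complex.sq_norm, Complex.normSq_apply] at hc2
      simp only [Complex.sub_re, Complex.sub_im, Complex.ofReal_re, Complex.ofReal_im, sub_zero] at hc2
      have hdist : dist (q + c • n) q = ‖c‖ := by
        rw [dist_eq_norm, add_sub_cancel_left, norm_smul, hn, mul_one]
      have hcr : ‖c‖ < r := by
        have h1 : ‖c‖ ≤ ‖c - ((a + R : ℝ) : ℂ)‖ + ‖((a + R : ℝ) : ℂ)‖ := by
          simpa using norm_add_le (c - ((a + R : ℝ) : ℂ)) ((a + R : ℝ) : ℂ)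
        rw [Complex.norm_real, Real.norm_of_nonneg (by positivity)] at h1
        have h2 := hd.Wr x hx
        have h3 : 1 / (2 * w) = 2 * R := by rw [hR]; field_simp; norm_num
        rw [← hw, h3, ← ha] at h2
        linarith
      have hc0 : 0 < ‖c‖ := by
        rw [norm_pos_iff]; rintro rfl
        simp only [Complex.zero_re, Complex.zero_im] at hc2
        nlinarith
      have h1 := hd.out q hq hqr _ hcon (by rw [hdist]; exact hcr)
      rw [hdist, add_sub_cancel_left, hF] at h1
      have h2 := hd.θW x hx ‖c‖ hc0 hcr
      rw [← hw] at h2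
      have hcn : ‖c‖ ^ 2 = c.re * c.re + c.im * c.im := by rw [Complex.sq_norm, Complex.normSq_apply]
      -- re c > a + 2 w |c-a|^2
      have h3 : a + 2 * w * ((c.re - a) ^ 2 + c.im ^ 2) < c.re := by
        have h31 : (c.re - a) ^ 2 + c.im ^ 2 < 2 * R * (c.re - a) := by nlinarith
        have h32 := mul_lt_mul_of_pos_left h31 (show 0 < 2 * w by positivity)
        have h33 : 2 * w * (2 * R * (c.re - a)) = 4 * (R * w) * (c.re - a) := by ring
        rw [h33, hRw] at h32
        linarith
      have h4 : c.re ≤ max ‖c‖ x * w * ‖c‖ := h1.trans (mul_le_mul_of_nonneg_right h2 hc0.le)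
      by_cases hcx : x ≤ ‖c‖
      · rw [max_eq_left hcx] at h4
        have h5 : ‖c‖ * w * ‖c‖ = w * ‖c‖ ^ 2 := by ring
        rw [h5, hcn] at h4
        have h6 : 2 * w * a ^ 2 ≤ a := by
          have : 2 * w * a ≤ 1 := by
            have : 2 * w * a = 4 * (x * w) ^ 2 := by rw [ha]; ring
            rw [this]; nlinarith [mul_pos hx0 hw0]
          nlinarith
        have h7 : w * (c.re * c.re + c.im * c.im) ≤ w * (2 * ((c.re - a) ^ 2 + c.im ^ 2) + 2 * a ^ 2) := by
          refine mul_le_mul_of_nonneg_left ?_ hw0.le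
          nlinarith [sq_nonneg (c.re - 2 * a), sq_nonneg c.im]
        nlinarith
      · push Not at hcx
        rw [max_eq_right hcx.le] at h4
        have h5 : x * w * ‖c‖ ≤ x * w * x := by gcongr
        have h6 : 0 ≤ 2 * w * ((c.re - a) ^ 2 + c.im ^ 2) := by positivity
        have h7 : x * w * x = a / 2 := by rw [ha]; ring
        linarith)
  refine hk.trans ?_
  set u := x * w with hu
  have hu0 : 0 < u := mul_pos hx0 hw0
  have e1 : R ^ 2 - (x - (a + R)) ^ 2 = R * (2 * x * (1 - 2 * u) * (1 - 2 * u * (1 - 2 * u))) := by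
    have : R ^ 2 - (x - (a + R)) ^ 2 = (x - a) * (2 * R - (x - a)) := by ring
    rw [this]
    have h2 : x - a = x * (1 - 2 * u) := by rw [ha, hu]; ring
    have h3 : x = 4 * u * R := by rw [hu]; linear_combination (-4 * x) * hRw
    rw [h2]
    linear_combination (-x * (1 - 2 * u) * (1 - 2 * u)) * h3
  rw [e1, div_mul_eq_div_div, div_self hR0.ne']
  have e2 : 1 / (2 * x) + 4 * w = (1 + 8 * u) / (2 * x) := by rw [hu]; field_simp; ring
  have p1 : 0 < 1 - 2 * u := by linarith
  have p2 : 0 < 1 - 2 * u * (1 - 2 * u) := by nlinarith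
  rw [e2, div_le_div_iff₀ (by positivity) (by positivity), one_mul]
  have key := dini_poly hu0 hxw
  calc 2 * x = 2 * x * 1 := (mul_one _).symm
    _ ≤ 2 * x * ((1 + 8 * u) * ((1 - 2 * u) * (1 - 2 * u * (1 - 2 * u)))) := by gcongr
    _ = _ := by ring

theorem DiniData.ball (hd : DiniData D ξ r x₁ F θ W) {q n : E} (hq : q ∈ frontier D) (hqr : dist q ξ < r)
    (hn : ‖n‖ = 1) (hF : ∀ c : ℂ, F q (c • n) = c.re) {x : ℝ} (hx : x ∈ Ioc 0 x₁) :
    ball (q + x • n) (x / 4) ⊆ D := by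
  intro p hp
  by_contra hcon
  have hx0 := hx.1
  rw [mem_ball, dist_eq_norm] at hp
  have hdist : dist p q < 5 * x / 4 := by
    have h1 : p - q = (p - (q + x • n)) + x • n := by abel
    rw [dist_eq_norm, h1]
    refine (norm_add_le _ _).trans_lt ?_
    rw [norm_smul, hn, mul_one, Real.norm_of_nonneg hx0.le]
    linarith
  have hpr : dist p q < r := by linarith [hd.xle, hx.2, hd.rpos]
  have hpq : 0 < dist p q := by
    rw [dist_pos]; rintro rfl
    rw [sub_add_cancel_left, norm_neg, norm_smul, hn, mul_one, Real.norm_of_nonneg hx0.le] at hp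
    linarith
  have h1 := hd.out q hq hqr p hcon hpr
  have h2 := hd.θW x hx _ hpq hpr
  have hw0 := hd.Wpos x hx
  have hxw := hd.xW x hx
  have h3 : F q (p - q) = F q (p - (q + x • n)) + x := by
    have h4 := hF (x : ℂ)
    rw [Complex.coe_smul, Complex.ofReal_re] at h4
    have h5 : p - q = (p - (q + x • n)) + x • n := by abel
    conv_lhs => rw [h5]
    rw [map_add, h4]
  have h4 : -(x/4) ≤ F q (p - (q + x • n)) := by
    have h6 := (F q).le_opNorm (p - (q + x • n))
    rw [hd.nrm q hq hqr, one_mul, Real.norm_eq_abs] at h6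
    linarith [neg_abs_le (F q (p - (q + x • n)))]
  have h5 : max (dist p q) x ≤ 5 * x / 4 := max_le hdist.le (by linarith)
  have h7 : θ (dist p q) ≤ 5 / 32 := by
    refine h2.trans ((mul_le_mul_of_nonneg_right h5 hw0.le).trans ?_)
    nlinarith
  have h8 : θ (dist p q) * dist p q ≤ 5 / 32 * dist p q := mul_le_mul_of_nonneg_right h7 hpq.le
  linarith

theorem DiniData.dist [FiniteDimensional ℂ E] (hd : DiniData D ξ r x₁ F θ W) (hD : IsOpen D) {Ω : Set E} 
    (hΩ : IsOpen Ω) (hs : D ⊆ Ω) {q n : E} (hq : q ∈ frontier D) (hqr : dist q ξ < r)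
    (hn : ‖n‖ = 1) (hF : ∀ c : ℂ, F q (c • n) = c.re) {δ x : ℝ} (hδ : 0 < δ) (hδx : δ ≤ x) (hx : x ≤ x₁) :
    kobDist Ω (q + δ • n) (q + x • n) ≤ (1/2) * Real.log (x / δ) + 8 := by
  have : CompleteSpace E := FiniteDimensional.complete ℂ E
  have hmem : ∀ t ∈ Icc δ x, t ∈ Ioc 0 x₁ := fun t ht => ⟨hδ.trans_le ht.1, ht.2.trans hx⟩
  have hmD : MapsTo (fun t : ℝ => q + t • n) (Icc δ x) D := fun t ht =>
    hd.ball hq hqr hn hF (hmem t ht) (mem_ball_self (by linarith [(hmem t ht).1]))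
  have hmΩ : MapsTo (fun t : ℝ => q + t • n) (Icc δ x) Ω := hmD.mono_right hs
  refine (kobDist_le_curve hδx (isAC_segment q n) hmΩ).trans ?_
  have i1 : IntervalIntegrable (fun t : ℝ => 1 / (2 * t)) volume δ x := by
    apply ContinuousOn.intervalIntegrable
    rw [uIcc_of_le hδx]
    exact continuousOn_const.div (by fun_prop) fun t ht => by
      have := (hmem t ht).1; positivity
  have i2 : IntervalIntegrable (fun t : ℝ => 4 * W t) volume δ x := by
    apply ContinuousOn.intervalIntegrable
    rw [uIcc_of_le hδx]
    exact continuousOn_const.mul (hd.Wc.mono hmem)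
  refine (intervalIntegral.integral_mono_on hδx (kob_intervalIntegrable hΩ hδx (isAC_segment q n) hmΩ)
    (i1.add i2) fun t ht => (kob_mono hD hs (hmD ht)).trans (hd.kob hq hqr hn hF (hmem t ht))).trans ?_
  rw [intervalIntegral.integral_add i1 i2, intervalIntegral.integral_const_mul]
  have h1 := hd.Wi δ x hδ hδx hx
  have h2 : ∫ t in δ..x, 1 / (2 * t) = (1/2) * Real.log (x / δ) := by
    rw [← integral_inv_of_pos hδ (hδ.trans_le hδx), ← intervalIntegral.integral_const_mul]
    congr 1; ext t; rw [one_div, mul_inv]; norm_num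
  linarith

end DiniDisc

set_option linter.unusedSectionVars false

section ClaimUpper

variable {E : Type*} [NormedAddCommGroup E] [NormedSpace ℂ E]

theorem upper_bound [FiniteDimensional ℂ E] {Ω D : Set E} {ξ : E} {r₀ : ℝ} (hΩ : IsOpen Ω) 
    (hc : IsPreconnected Ω) (hD : IsOpen D) (hs : D ⊆ Ω) (hconv : Convex ℝ D) (hξ : ξ ∈ frontier D)
    (hdini : DiniSmoothBoundaryPoint D ξ) (hr₀ : 0 < r₀) (hmem : ∀ z ∈ Ω, dist z ξ < r₀ → z ∈ D) :
    ∃ s₀ > 0, ∀ s, 0 < s → s ≤ s₀ → ∀ z ∈ Ω, ∀ w ∈ Ω, dist z ξ < s → dist w ξ < s →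
      kobDist Ω z w ≤ Real.log s - (1/2) * Real.log (bdist D z) - (1/2) * Real.log (bdist D w) 
        + (Real.log 2 + 32) := by
  have : CompleteSpace E := FiniteDimensional.complete ℂ E
  have : ProperSpace E := FiniteDimensional.proper ℂ E
  obtain ⟨r, x₁, F, θ, W, hd⟩ := exists_diniData hD hconv hdini
  have hrp := hd.rpos
  have hxp := hd.xpos
  have hxr := hd.xle
  refine ⟨min r₀ (x₁ / 4), by positivity, ?_⟩
  intro s hs0 hss
  have hsr₀ : s ≤ r₀ := hss.trans (min_le_left _ _)
  have hsx : s ≤ x₁ / 4 := hss.trans (min_le_right _ _)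
  have key : ∀ z ∈ Ω, dist z ξ < s → ∃ z', ball z' (s / 4) ⊆ D ∧ dist z z' ≤ s ∧
      kobDist Ω z z' ≤ (1/2) * (Real.log 2 + Real.log s - Real.log (bdist D z)) + 8 := by
    intro z hz hzs
    have hzD : z ∈ D := hmem z hz (by linarith)
    have hδ : 0 < bdist D z := bdist_pos hD ⟨ξ, hξ⟩ hzD
    have hδs : bdist D z < s := (bdist_le hξ).trans_lt hzs
    obtain ⟨q, hq, hqd⟩ := isClosed_frontier.exists_infDist_eq_dist ⟨ξ, hξ⟩ z
    change bdist D z = dist z q at hqd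
    have hqr : dist q ξ < r := by
      have := dist_triangle_left q ξ z
      linarith
    obtain ⟨n, hn, hzn, hF⟩ := dini_direction hzD hδ (ball_bdist_subset hzD) hqd.symm (hd.nrm q hq hqr)
      (hd.supp q hq hqr)
    set δ := bdist D z with hδdef
    refine ⟨q + (δ + s) • n, ?_, ?_, ?_⟩
    · refine Subset.trans (ball_subset_ball (by linarith)) 
        (hd.ball hq hqr hn hF (x := δ + s) ⟨by linarith, by linarith⟩)
    · conv_lhs => rw [hzn]
      rw [dist_eq_norm, add_sub_add_left_eq_sub, ← sub_smul, norm_smul, hn, mul_one, sub_add_cancel_left,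
        norm_neg, Real.norm_of_nonneg hs0.le]
    · have h1 := hd.dist hD hΩ hs hq hqr hn hF (δ := δ) (x := δ + s) hδ (by linarith) (by linarith)
      rw [← hzn] at h1
      refine h1.trans ?_
      have h2 : Real.log ((δ + s) / δ) ≤ Real.log 2 + Real.log s - Real.log δ := by
        rw [← Real.log_mul (by norm_num) hs0.ne', ← Real.log_div (by positivity) hδ.ne']
        apply Real.log_le_log (by positivity)
        gcongr; linarith
      linarith
  intro z hz w hw hzs hws
  obtain ⟨z', hz1, hz2, hz3⟩ := key z hz hzs
  obtain ⟨w', hw1, hw2, hw3⟩ := key w hw hws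
  have hz'D : z' ∈ D := hz1 (mem_ball_self (by positivity))
  have hw'D : w' ∈ D := hw1 (mem_ball_self (by positivity))
  have hzw : dist z' w' ≤ 4 * s := by
    have t1 := dist_triangle z' z w'
    have t2 := dist_triangle z w w'
    have t3 := dist_triangle_right z w ξ
    rw [dist_comm z' z] at t1
    linarith
  have hseg : ∀ t ∈ Icc (0:ℝ) 1, ball (z' + t • (w' - z')) (s / 4) ⊆ D := by
    intro t ht p hp
    set e := p - (z' + t • (w' - z')) with he
    have hen : ‖e‖ < s / 4 := by rwa [mem_ball, dist_eq_norm] at hp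
    have h1 : z' + e ∈ D := hz1 (by rwa [mem_ball, dist_eq_norm, add_sub_cancel_left])
    have h2 : w' + e ∈ D := hw1 (by rwa [mem_ball, dist_eq_norm, add_sub_cancel_left])
    have h3 := hconv h1 h2 (show 0 ≤ 1 - t by linarith [ht.2]) ht.1 (by ring)
    have h4 : (1 - t) • (z' + e) + t • (w' + e) = p := by
      rw [he]; module
    rwa [h4] at h3
  have hsegΩ : MapsTo (fun t : ℝ => z' + t • (w' - z')) (Icc 0 1) Ω := fun t ht =>
    hs (hseg t ht (mem_ball_self (by positivity)))
  have hmid : kobDist Ω z' w' ≤ 16 := by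
    have h1 := kobDist_le_curve zero_le_one (isAC_segment z' (w' - z')) hsegΩ
    have h2 : z' + (0:ℝ) • (w' - z') = z' := by simp
    have h3 : z' + (1:ℝ) • (w' - z') = w' := by simp
    simp only [h2, h3] at h1
    refine h1.trans ?_
    have h4 : ∫ t in (0:ℝ)..1, kobMetric Ω (z' + t • (w' - z')) (w' - z') ≤ ∫ t in (0:ℝ)..1, (16:ℝ) := by
      refine intervalIntegral.integral_mono_on zero_le_one 
        (kob_intervalIntegrable hΩ zero_le_one (isAC_segment z' (w' - z')) hsegΩ) (by simp) fun t ht => ?_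
      refine (kob_le_div (by positivity : 0 < s / 4) ((hseg t ht).trans hs)).trans ?_
      rw [div_le_iff₀ (by positivity), ← dist_eq_norm, dist_comm]
      linarith
    simpa using h4
  have t1 := kobDist_triangle hΩ hc hz (hs hz'D) (hs hw'D)
  have t2 := kobDist_triangle hΩ hc hz (hs hw'D) hw
  rw [kobDist_symm hΩ w w'] at hw3
  linarith

end ClaimUpper

theorem statement_1 {n : ℕ} (hn : 2 ≤ n)
    (Ω₁ Ω₂ U₁ U₂ : Set (EuclideanSpace ℂ (Fin n)))
    (hΩ₁o : IsOpen Ω₁) (hΩ₁c : IsConnected Ω₁) (hΩ₁b : Bornology.IsBounded Ω₁)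
    (hΩ₂o : IsOpen Ω₂) (hΩ₂c : IsConnected Ω₂) (hΩ₂b : Bornology.IsBounded Ω₂)
    (hU₁ : IsOpen U₁) (hU₂ : IsOpen U₂)
    (hfr₁ : (U₁ ∩ frontier Ω₁).Nonempty) (hfr₂ : (U₂ ∩ frontier Ω₂).Nonempty)
    (hlog₁ : LogTypeConvex (Ω₁ ∩ U₁))
    (hdini₁ : ∀ x ∈ frontier (Ω₁ ∩ U₁), DiniSmoothBoundaryPoint (Ω₁ ∩ U₁) x)
    (hlog₂ : LogTypeCConvex (Ω₂ ∩ U₂))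
    (hdini₂ : ∀ x ∈ frontier (Ω₂ ∩ U₂), DiniSmoothBoundaryPoint (Ω₂ ∩ U₂) x)
    (f : EuclideanSpace ℂ (Fin n) → EuclideanSpace ℂ (Fin n)) (hmap : MapsTo f Ω₁ Ω₂)
    (hiso : ∃ C : ℝ, 0 < C ∧ ∀ x ∈ Ω₁, ∀ y ∈ Ω₁,
      kobDist Ω₁ x y - C ≤ kobDist Ω₂ (f x) (f y) ∧
      kobDist Ω₂ (f x) (f y) ≤ kobDist Ω₁ x y + C)
    (ξ ζ : EuclideanSpace ℂ (Fin n)) (hξ : ξ ∈ frontier Ω₁ ∩ U₁) (hζ : ζ ∈ frontier Ω₂ ∩ U₂)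
    (hcluster : ∃ z : ℕ → EuclideanSpace ℂ (Fin n), (∀ k, z k ∈ Ω₁) ∧
      Tendsto z atTop (𝓝 ξ) ∧ Tendsto (fun k => f (z k)) atTop (𝓝 ζ)) :
    Tendsto f (𝓝[Ω₁] ξ) (𝓝 ζ) := by
  classical
  obtain ⟨Ci, hCi, hiso⟩ := hiso
  obtain ⟨z, hzΩ, hzξ, hfz⟩ := hcluster
  obtain ⟨C₁, ν₁, hL₁⟩ := logDom_of_convex hlog₁ hdini₁
  obtain ⟨C₂, ν₂, hL₂⟩ := logDom_of_cconvex hlog₂ hdini₂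
  have ho₁ : z 0 ∈ Ω₁ := hzΩ 0
  obtain ⟨A₁, B₁, C₁', r₁, -, hrU₁, hV₁⟩ := vis_of_logDom hΩ₁o hΩ₁c.isPreconnected hΩ₁b hU₁ hξ.1 hξ.2 ho₁ hL₁
  obtain ⟨A₂, B₂, C₂', r₂, -, hrU₂, hV₂⟩ := vis_of_logDom hΩ₂o hΩ₂c.isPreconnected hΩ₂b hU₂ hζ.1 hζ.2
    (hmap ho₁) hL₂
  have hconv : Convex ℝ (Ω₁ ∩ U₁) := by
    obtain ⟨_, _, -, -, -, h, -⟩ := hlog₁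
    exact h
  have hξD : ξ ∈ frontier (Ω₁ ∩ U₁) := mem_frontier_inter hΩ₁o hU₁ hξ.1 hξ.2
  obtain ⟨ρ, hρ, H₁, hlow⟩ := hV₁.lower_bound hΩ₁b hU₁ hrU₁ hξ.1 hconv
  obtain ⟨s₀, hs₀, hup⟩ := upper_bound hΩ₁o hΩ₁c.isPreconnected (hΩ₁o.inter hU₁) inter_subset_left hconv hξD
    (hdini₁ ξ hξD) hV₁.rpos hV₁.mem
  rw [Metric.tendsto_nhdsWithin_nhds]
  intro ε hε
  have hr₂ := hV₂.rpos
  set ε' := min ε r₂ with hε'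
  have hε'p : 0 < ε' := by positivity
  obtain ⟨H₂, hgro⟩ := hV₂.gromov (r₁ := ε' / 2) (r₂ := ε') (by linarith) (min_le_right _ _)
  set L := Real.log 2 + 32 + H₂ + 3 * Ci + 2 * H₁ with hL
  set s := min (min s₀ ρ) (Real.exp (-(|L| + 1))) with hs
  have hsp : 0 < s := by positivity
  have hss₀ : s ≤ s₀ := (min_le_left _ _).trans (min_le_left _ _)
  have hsρ : s ≤ ρ := (min_le_left _ _).trans (min_le_right _ _)
  have hsL : Real.log s ≤ -(|L| + 1) := by
    have := Real.log_le_log hsp (min_le_right _ _ : s ≤ Real.exp (-(|L| + 1)))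
    rwa [Real.log_exp] at this
  refine ⟨s, hsp, ?_⟩
  intro w hw hws
  by_contra hcon
  push Not at hcon
  obtain ⟨k, hk1, hk2⟩ := ((hzξ.eventually (Metric.ball_mem_nhds ξ hsp)).and
    (hfz.eventually (Metric.ball_mem_nhds ζ (half_pos hε'p)))).exists
  have g1 := hgro (f (z k)) (hmap (hzΩ k)) (f w) (hmap hw) hk2.le ((min_le_left _ _).trans hcon)
  have g2 := (hiso (z k) (hzΩ k) w hw).2
  have g3 := (hiso (z k) (hzΩ k) (z 0) ho₁).1
  have g4 := (hiso w hw (z 0) ho₁).1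
  have g5 := hlow (z k) (hzΩ k) (by linarith)
  have g6 := hlow w hw (by linarith)
  have g7 := hup s hsp hss₀ (z k) (hzΩ k) w hw hk1 hws
  have g8 := le_abs_self L
  linarith
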